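/- arXiv:2005.02945 — 6 statements merged into one kernel-verified Lean document; each statement's English description precedes it below -/
import Mathlib

section
/- A_5(9,6) ≤ 325, A_5(10,6) ≤ 1625 and A_5(11,6) ≤ 8125: every code C ⊆ (Fin 5)^n with minimum Hamming distance at least 6 has cardinality at most 325 if n = 9, at most 1625 if n = 10, and at most 8125 if n = 11. -/
namespace ZS
/-- force evaluation of a natural number before continuing -/
def force {α : Type} (x : ℕ) (f : ℕ → α) : α := Nat.rec (f 0) (fun k _ => f (Nat.succ k)) x

/-- number of common digits among the `i` lowest base five digits -/
def agc : ℕ → ℕ → ℕ → ℕ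
  | 0, _, _ => 0
  | i+1, n, m =>
    match Nat.beq (n/5^i%5) (m/5^i%5) with
    | true => Nat.succ (agc i n m)
    | false => agc i n m

/-- the seven words of the Fano plane, as base five codes -/
def F : List ℕ := [19500, 37530, 1560, 48826, 9852, 15018, 63024]
def F0 : List ℕ := [37530, 1560, 48826, 9852, 15018, 63024]

/-- packed hit vector -/
def hit (i s : ℕ) : List ℕ → ℕ
  | [] => 0
  | f :: l => (match Nat.beq (f/5^i%5) s with | true => 1 | false => 0) + 16 * hit i s l

def loop (l : List ℕ) (ok bad : ℕ → Bool) : ℕ → ℕ → ℕ → List ℕ → List ℕ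
  | 0, n, P, acc => match ok P with | true => n :: acc | false => acc
  | k+1, n, P, acc =>
    match bad P with
    | true => acc
    | false =>
    force (P + hit k 0 l) fun P0 => force (P + hit k 1 l) fun P1 => force (P + hit k 2 l) fun P2 =>
    force (P + hit k 3 l) fun P3 => force (P + hit k 4 l) fun P4 =>
    force (n + 5^k) fun n1 => force (n + 2*5^k) fun n2 => force (n + 3*5^k) fun n3 =>
    force (n + 4*5^k) fun n4 =>
    loop l ok bad k n4 P4 (loop l ok bad k n3 P3 (loop l ok bad k n2 P2
      (loop l ok bad k n1 P1 (loop l ok bad k n P0 acc))))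

def okC (P : ℕ) : Bool := Nat.beq P 17895697
def badC (P : ℕ) : Bool := Nat.ble 1 (Nat.land P 250539758)
def okZ (P : ℕ) : Bool := Nat.beq (Nat.land P 14540253) 0
def badZ (P : ℕ) : Bool := Nat.ble 1 (Nat.land (P + 5592405) 8947848)

/-- words meeting each Fano word exactly once -/
def cand : List ℕ := [
  77057, 77037, 76481, 76457, 76056, 76036, 75981, 75957, 74556, 74536, 73933, 73913, 73333,
  73291, 72833, 72791, 71486, 71462, 70863, 70817, 70241, 70217, 69838, 69816, 69741, 69717,
  68556, 68536, 68481, 68457, 67933, 67913, 67858, 67792, 67333, 67291, 60859, 60797, 60557,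
  60537, 60434, 60414, 60359, 60297, 58934, 58914, 57673, 57669, 57433, 57413, 57173, 57169,
  55864, 55822, 54623, 54619, 54363, 54317, 54198, 54194, 54123, 54119, 53057, 53037, 52934,
  52914, 52859, 52797, 51858, 51792, 51673, 51669, 45864, 45822, 45246, 45222, 44986, 44962,
  44839, 44821, 44746, 44722, 43339, 43321, 42698, 42694, 42098, 42094, 41838, 41816, 41598,
  41594, 37486, 37462, 37339, 37321, 37246, 37222, 36863, 36817, 36698, 36694, 36623, 36619,
  36241, 36217, 36098, 36094, 30557, 30537, 30434, 30414, 30359, 30297, 29981, 29957, 29834,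
  29796, 28056, 28036, 27834, 27796, 27433, 27413, 27173, 27169, 26833, 26791, 24986, 24962,
  24839, 24821, 24746, 24722, 24363, 24317, 24198, 24194, 24123, 24119, 23741, 23717, 23598, 23594]

/-- words meeting each Fano word but the first zero or two times -/
def zl : List ℕ := [
  78101, 78077, 78055, 78035, 77954, 77795, 77747, 77721, 77689, 77659, 77478, 77136, 77098,
  77094, 77002, 76945, 76790, 76637, 76448, 76444, 76380, 76345, 76242, 76216, 76188, 76158,
  76123, 76119, 76001, 75948, 75944, 75880, 75709, 75671, 75440, 75365, 75233, 75167, 74953,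
  74637, 74623, 74619, 74501, 74404, 74141, 74054, 73996, 73972, 73878, 73757, 73730, 73676,
  73545, 73513, 73454, 73392, 73364, 73322, 73125, 73118, 73062, 73032, 72971, 72939, 72909,
  72864, 72822, 72704, 72642, 72081, 72043, 71815, 71632, 71423, 71419, 71385, 71354, 71210,
  71152, 71029, 70970, 70834, 70796, 70495, 70258, 70184, 70164, 70140, 70011, 69982, 69956,
  69918, 69859, 69797, 69684, 69664, 69640, 69570, 69508, 69473, 69469, 69377, 69051, 68993,
  68937, 68742, 68716, 68688, 68658, 68623, 68619, 68501, 68448, 68444, 68380, 68209, 68171,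
  68093, 68061, 68031, 67996, 67972, 67878, 67839, 67821, 67729, 67641, 67548, 67544, 67510,
  67487, 67461, 67443, 67364, 67322, 67247, 67221, 67159, 67045, 67013, 66851, 66827, 66805,
  66785, 66704, 66642, 66545, 66513, 66497, 66471, 66439, 66409, 66256, 66081, 66043, 65950,
  65932, 65912, 65860, 65776, 65741, 65717, 65428, 65353, 65213, 65191, 64855, 64612, 64568,
  63968, 63906, 63611, 63587, 63525, 63468, 63406, 63330, 63302, 63183, 63163, 62479, 62205,
  62177, 62099, 62061, 62031, 61647, 61540, 61514, 61492, 61438, 61408, 61136, 61053, 60978,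
  60896, 60838, 60816, 60598, 60594, 60502, 60491, 60467, 60379, 60338, 60316, 60228, 60146,
  60107, 60049, 59903, 59756, 59625, 59146, 59053, 58991, 58967, 58879, 58860, 58642, 58555,
  58535, 58523, 58519, 58480, 58374, 58368, 58312, 58282, 58054, 57955, 57736, 57712, 57650,
  57615, 57496, 57472, 57378, 57349, 57343, 57311, 57281, 57236, 57212, 57150, 56983, 56917,
  56835, 56595, 56459, 56421, 56131, 56028, 55965, 55833, 55791, 55570, 55508, 55485, 55232,
  55174, 55168, 54970, 54652, 54600, 54556, 54536, 54389, 54334, 54296, 54231, 54207, 54175,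
  54100, 54056, 54036, 53960, 53902, 53867, 53813, 53516, 53429, 53371, 53347, 53253, 53098,
  53094, 53002, 52991, 52967, 52879, 52838, 52816, 52728, 52646, 52607, 52549, 52497, 52439,
  52409, 52374, 52368, 52312, 52282, 52237, 52199, 52193, 52055, 52035, 52023, 52019, 51839,
  51821, 51736, 51712, 51650, 51599, 51593, 51531, 51455, 51427, 51308, 51288, 51270, 51229,
  51141, 50955, 50927, 50849, 50843, 50811, 50781, 50690, 50634, 50606, 50582, 50550, 50459,
  50421, 50154, 50123, 50119, 49915, 49762, 49573, 49569, 49505, 48517, 48372, 48284, 48112,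
  48068, 47989, 47947, 47872, 47784, 47670, 47638, 47057, 47037, 46820, 46735, 46651, 46482,
  46456, 46424, 46131, 46028, 45965, 45833, 45791, 45490, 45259, 45183, 45163, 45145, 45052,
  44923, 44919, 44885, 44858, 44792, 44683, 44663, 44645, 44565, 44509, 44474, 44436, 44328,
  44012, 43998, 43994, 43876, 43632, 43565, 43509, 43490, 43358, 43292, 43029, 42960, 42731,
  42707, 42675, 42522, 42495, 42151, 42075, 42057, 42037, 41928, 41859, 41797, 41706, 41674,
  41668, 41575, 41557, 41537, 41485, 41401, 41366, 41342, 41254, 40888, 40846, 40814, 40453,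
  40397, 40264, 40242, 40216, 40188, 39979, 39891, 39677, 39599, 39593, 39561, 39263, 39176,
  39101, 39077, 39023, 39019, 38987, 38961, 38949, 38943, 38747, 38721, 38689, 38624, 38618,
  38562, 38487, 38461, 38449, 38443, 38351, 38327, 38273, 38269, 37423, 37419, 37385, 37358,
  37292, 37183, 37163, 37145, 37065, 37009, 36974, 36936, 36834, 36796, 36731, 36707, 36675,
  36600, 36556, 36536, 36460, 36402, 36367, 36313, 36184, 36164, 36140, 36075, 36057, 36037,
  35982, 35956, 35924, 35918, 35713, 35691, 35570, 35508, 35485, 35401, 35232, 35206, 35174,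
  35168, 35103, 35021, 34993, 34937, 34846, 34814, 34739, 34697, 34579, 34517, 34340, 34125,
  34006, 33620, 33383, 33309, 33289, 33265, 33027, 32904, 32709, 32671, 32475, 32431, 32411,
  32209, 32171, 32095, 31948, 31944, 31486, 31462, 31247, 31221, 31189, 31159, 31124, 31062,
  31032, 30987, 30961, 30949, 30851, 30827, 30805, 30785, 30598, 30594, 30502, 30491, 30467,
  30379, 30338, 30316, 30228, 30146, 30107, 30049, 29948, 29944, 29880, 29863, 29817, 29742,
  29716, 29658, 29540, 29514, 29475, 29431, 29411, 29203, 29147, 29040, 29014, 28992, 28966,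
  28938, 28908, 28835, 28777, 28733, 28667, 28548, 28544, 28510, 28257, 28246, 28222, 28123,
  28119, 28001, 27966, 27938, 27908, 27863, 27817, 27703, 27647, 27606, 27582, 27550, 27496,
  27472, 27378, 27349, 27343, 27311, 27281, 27236, 27212, 27150, 26983, 26917, 26864, 26822,
  26711, 26699, 26693, 26624, 26618, 26532, 26480, 26426, 26204, 26142, 26055, 26035, 26023,
  26019, 25980, 25926, 25874, 25868, 25812, 25782, 25653, 25581, 25543, 25309, 25289, 25265,
  25195, 25133, 25098, 25094, 24923, 24919, 24885, 24858, 24792, 24683, 24663, 24645, 24565,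
  24509, 24474, 24436, 24334, 24296, 24231, 24207, 24175, 24100, 24056, 24036, 23960, 23902,
  23867, 23813, 23684, 23664, 23640, 23575, 23557, 23537, 23482, 23456, 23424, 23418, 23213,
  23191, 23070, 23008, 22985, 22901, 22732, 22706, 22674, 22668, 22603, 22521, 22493, 22437,
  22346, 22314, 22239, 22197, 22079, 22017, 21703, 21647, 21540, 21514, 21492, 21466, 21438,
  21408, 21335, 21277, 21229, 21141, 20955, 20927, 20849, 20843, 20811, 20781, 20690, 20634,
  20545, 20513, 20480, 20426, 20351, 20327, 20273, 20269, 20237, 20211, 20199, 20193, 20090,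
  19997, 19971, 19939, 19909, 19874, 19868, 19812, 19782, 19737, 19711, 19699, 19693, 19601,
  19577, 19555, 19535, 19523, 19519, 19458, 19416, 19360, 19276, 19195, 19133, 19120, 18984,
  18922, 18713, 18691, 18473, 18469, 18377, 18261, 18184, 18164, 18112, 18068, 17989, 17947,
  17872, 17784, 17670, 17638, 17468, 17406, 17371, 17347, 17253, 17104, 17016, 16923, 16919,
  16830, 16802, 16679, 16604, 16516, 16464, 16446, 16056, 16036, 15981, 15957, 15738, 15692,
  14929, 14830, 14611, 14587, 14525, 14329, 13999, 13907, 13739, 13697, 13586, 13574, 13499,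
  13407, 13355, 13301, 12684, 12664, 12420, 12086, 12074, 11761, 11521, 11463, 11441, 10841,
  10783, 10573, 10569, 10505, 10341, 10283, 10165, 10139, 10056, 10036, 9370, 9026, 8950, 8932,
  8912, 8625, 8590, 8403, 8007, 7884, 7733, 7667, 7308, 7288, 7270, 7233, 7167, 7115, 6986, 6962,
  6448, 6444, 6239, 6197, 6086, 6074, 5999, 5907, 5855, 5801, 5463, 5441, 5366, 5342, 5254, 5178,
  5057, 5037, 4998, 4994, 4876, 4841, 4783, 4578, 4522, 4481, 4457, 4262, 4165, 4139, 4078, 4022,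
  3988, 3942, 3683, 3663, 3423, 3419, 3214, 3196, 2746, 2722, 2123, 2119, 1241, 1217, 1098, 1094,
  734, 672, 208, 166]

/-- mask of list positions with digit `s` at place `i` -/
def bits (i s : ℕ) (l : List ℕ) : ℕ :=
  List.rec 0 (fun x _ t => match Nat.beq (x/5^i%5) s with | true => 2*t+1 | false => 2*t) l
/-- full mask -/
def full : ℕ := 2^914-1
def M (i s : ℕ) : ℕ := bits i s zl
/-- bit-sliced counter -/
def go (n : ℕ) : ℕ → ℕ → ℕ → ℕ → ℕ
  | 0, a, _, c => Nat.lor a c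
  | i+1, a, b, c =>
    force (n / 5^i % 5) fun s => force (M i s) fun m => force (Nat.xor full m) fun m' =>
     force (Nat.land a m') fun a' =>
     force (Nat.lor (Nat.land b m') (Nat.land a m)) fun b' =>
     force (Nat.lor (Nat.land c m') (Nat.land b m)) fun c' =>
      go n i a' b' c'
def zm (n : ℕ) : ℕ := go n 7 full 0 0
def strip : ℕ → ℕ → ℕ
  | 0, z => z
  | k+1, z => force (Nat.land z (z-1)) (strip k)
def filt (n : ℕ) (l : List ℕ) : (List ℕ → Bool) → Bool :=
  List.rec (fun k => k []) (fun m _ ih k =>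
    match Nat.beq (agc 7 n m) 1 with | true => ih (fun t => k (m :: t)) | false => ih k) l
def inter : List ℕ → ℕ → ℕ
  | [], z => z
  | n :: l, z => force (Nat.land z (zm n)) (inter l)
def step (ih : ℕ → List ℕ → List ℕ → Bool) (r : ℕ) (l ch : List ℕ) : Bool :=
  match r with
  | 0 => Nat.beq (strip 16 (inter ch full)) 0
  | r+1 =>
    match l with
    | [] => true
    | n :: t =>
      match Nat.ble (r+1) (2*(n/15625)) with
      | false => true
      | true => and (filt n t fun t' => ih r t' (n :: ch)) (ih (r+1) t ch)
def dfs (f : ℕ) : ℕ → List ℕ → List ℕ → Bool :=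
  Nat.rec (fun _ _ _ => false) (fun _ ih => step ih) f


theorem cand_eq : loop F okC badC 7 0 0 [] = cand := by decide +kernel
theorem zl_eq : loop F0 okZ badZ 7 0 0 [] = zl := by decide +kernel
theorem dfs_ok : dfs 200 8 cand [] = true := by decide +kernel


theorem force_eq {α : Type} (x : ℕ) (f : ℕ → α) : force x f = f x := by
  cases x <;> rfl

theorem agc_succ (i n m : ℕ) :
    agc (i+1) n m = agc i n m + if n/5^i%5 = m/5^i%5 then 1 else 0 := by
  rw [agc]
  by_cases h : n/5^i%5 = m/5^i%5
  · have : Nat.beq (n/5^i%5) (m/5^i%5) = true := by rw [h]; exact Nat.beq_refl _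
    rw [this, if_pos h]
  · have : Nat.beq (n/5^i%5) (m/5^i%5) = false := by
      rw [Bool.eq_false_iff]; intro h'; exact h (Nat.eq_of_beq_eq_true h')
    rw [this, if_neg h]; rfl

theorem agc_mono (n m : ℕ) {i j : ℕ} (h : i ≤ j) : agc i n m ≤ agc j n m := by
  induction h with
  | refl => exact le_rfl
  | step _ ih => rw [agc_succ]; omega

theorem agc_comm (i n m : ℕ) : agc i n m = agc i m n := by
  induction i with
  | zero => rfl
  | succ i ih => rw [agc_succ, agc_succ, ih]; simp only [eq_comm]

def pk (m k : ℕ) : List ℕ → ℕ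
  | [] => 0
  | f :: l => (agc 7 m f - agc k m f) + 16 * pk m k l

theorem hit_cons (i s f : ℕ) (l : List ℕ) :
    hit i s (f :: l) = (if s = f/5^i%5 then 1 else 0) + 16 * hit i s l := by
  rw [hit]
  by_cases h : s = f/5^i%5
  · have : Nat.beq (f/5^i%5) s = true := by rw [h]; exact Nat.beq_refl _
    rw [this, if_pos h]
  · have : Nat.beq (f/5^i%5) s = false := by
      rw [Bool.eq_false_iff]; intro h'; exact h (Nat.eq_of_beq_eq_true h').symm
    rw [this, if_neg h]

theorem pk_hit (m k : ℕ) (hk : k < 7) (l : List ℕ) :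
    pk m (k+1) l + hit k (m/5^k%5) l = pk m k l := by
  induction l with
  | nil => rfl
  | cons f l ih =>
    rw [hit_cons, pk, pk, ← ih]
    have h1 := agc_succ k m f
    have h2 := agc_mono m f (show k+1 ≤ 7 from hk)
    split_ifs at * <;> omega

theorem loop_acc (l : List ℕ) (ok bad : ℕ → Bool) (x k : ℕ) : ∀ (n P : ℕ) (acc : List ℕ),
    x ∈ acc → x ∈ loop l ok bad k n P acc := by
  induction k with
  | zero =>
    intro n P acc h
    rw [loop]; split
    · exact List.mem_cons_of_mem _ h
    · exact h
  | succ k ih =>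
    intro n P acc h
    rw [loop]; split
    · exact h
    · simp only [force_eq]
      exact ih _ _ _ (ih _ _ _ (ih _ _ _ (ih _ _ _ (ih _ _ _ h))))

theorem loop_mem (l : List ℕ) (ok bad : ℕ → Bool) (m : ℕ) (hok : ok (pk m 0 l) = true)
    (hbad : ∀ k ≤ 7, bad (pk m k l) = false) (k : ℕ) : k ≤ 7 → ∀ acc : List ℕ,
    m ∈ loop l ok bad k (m/5^k*5^k) (pk m k l) acc := by
  induction k with
  | zero =>
    intro _ acc
    rw [loop, hok]; simp
  | succ k ih =>
    intro hk acc
    rw [loop, hbad _ hk]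
    simp only [force_eq]
    have hP := pk_hit m k hk l
    have hn : m/5^(k+1)*5^(k+1) + (m/5^k%5)*5^k = m/5^k*5^k := by
      have h1 : m/5^(k+1) = m/5^k/5 := by rw [pow_succ, Nat.div_div_eq_div_mul]
      have h2 := Nat.div_add_mod (m/5^k) 5
      rw [h1, pow_succ]
      calc _ = (5 * (m/5^k/5) + m/5^k%5) * 5^k := by ring
        _ = _ := by rw [h2]
    have hk' : k ≤ 7 := by omega
    have hs : m/5^k%5 < 5 := Nat.mod_lt _ (by norm_num)
    generalize m/5^k%5 = s at *
    rw [← hP, ← hn] at ih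
    interval_cases s
    · have := fun acc => ih hk' acc
      simp only [zero_mul, add_zero] at this
      exact loop_acc _ _ _ _ _ _ _ _ (loop_acc _ _ _ _ _ _ _ _ (loop_acc _ _ _ _ _ _ _ _
        (loop_acc _ _ _ _ _ _ _ _ (this _))))
    · have := fun acc => ih hk' acc
      simp only [one_mul] at this
      exact loop_acc _ _ _ _ _ _ _ _ (loop_acc _ _ _ _ _ _ _ _ (loop_acc _ _ _ _ _ _ _ _
        (this _)))
    · exact loop_acc _ _ _ _ _ _ _ _ (loop_acc _ _ _ _ _ _ _ _ (ih hk' _))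
    · exact loop_acc _ _ _ _ _ _ _ _ (ih hk' _)
    · exact ih hk' _

theorem pk_seven (m : ℕ) (l : List ℕ) : pk m 7 l = 0 := by
  induction l with
  | nil => rfl
  | cons f l ih => rw [pk, ih]; simp

theorem mem_of_loop (l L : List ℕ) (ok bad : ℕ → Bool) (hL : loop l ok bad 7 0 0 [] = L)
    (m : ℕ) (hm : m < 78125) (hok : ok (pk m 0 l) = true)
    (hbad : ∀ k ≤ 7, bad (pk m k l) = false) : m ∈ L := by
  have := loop_mem l ok bad m hok hbad 7 le_rfl []
  rw [pk_seven, Nat.div_eq_of_lt (by norm_num; exact hm), zero_mul, hL] at this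
  exact this

theorem badC_false : ∀ a b c d e f g : Fin 2,
    badC (a.1+16*(b.1+16*(c.1+16*(d.1+16*(e.1+16*(f.1+16*(g.1+16*0))))))) = false := by
  decide +kernel

theorem badZ_false : ∀ a b c d e f : Fin 3,
    badZ (a.1+16*(b.1+16*(c.1+16*(d.1+16*(e.1+16*(f.1+16*0)))))) = false := by
  decide +kernel

theorem okZ_true : ∀ a b c d e f : Fin 2,
    okZ (2*a.1+16*(2*b.1+16*(2*c.1+16*(2*d.1+16*(2*e.1+16*(2*f.1+16*0)))))) = true := by
  decide +kernel

theorem mem_cand (m : ℕ) (hm : m < 78125) (h : ∀ f ∈ F, agc 7 m f = 1) : m ∈ cand := by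
  refine mem_of_loop F cand okC badC cand_eq m hm ?_ ?_
  · simp only [F, List.forall_mem_cons] at h
    obtain ⟨h1, h2, h3, h4, h5, h6, h7, -⟩ := h
    have h0 : ∀ f, agc 0 m f = 0 := fun _ => rfl
    simp only [F, pk, h0, h1, h2, h3, h4, h5, h6, h7]
    decide +kernel
  · intro k _
    have hh : ∀ f ∈ F, agc 7 m f - agc k m f < 2 := fun f hf => by have := h f hf; omega
    simp only [F, List.forall_mem_cons] at hh
    obtain ⟨h1, h2, h3, h4, h5, h6, h7, -⟩ := hh
    simpa only [F, pk] using badC_false ⟨_, h1⟩ ⟨_, h2⟩ ⟨_, h3⟩ ⟨_, h4⟩ ⟨_, h5⟩ ⟨_, h6⟩ ⟨_, h7⟩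

theorem mem_zl (m : ℕ) (hm : m < 78125) (h : ∀ f ∈ F0, agc 7 m f = 0 ∨ agc 7 m f = 2) :
    m ∈ zl := by
  refine mem_of_loop F0 zl okZ badZ zl_eq m hm ?_ ?_
  · simp only [F0, List.forall_mem_cons] at h
    obtain ⟨h1, h2, h3, h4, h5, h6, -⟩ := h
    have h0 : ∀ f, agc 0 m f = 0 := fun _ => rfl
    have key : ∀ x, x = 0 ∨ x = 2 → ∃ a : Fin 2, x = 2 * a.1 := by
      rintro x (rfl | rfl)
      · exact ⟨0, rfl⟩
      · exact ⟨1, rfl⟩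
    obtain ⟨a1, h1⟩ := key _ h1
    obtain ⟨a2, h2⟩ := key _ h2
    obtain ⟨a3, h3⟩ := key _ h3
    obtain ⟨a4, h4⟩ := key _ h4
    obtain ⟨a5, h5⟩ := key _ h5
    obtain ⟨a6, h6⟩ := key _ h6
    simp only [F0, pk, h0, h1, h2, h3, h4, h5, h6, Nat.sub_zero]
    exact okZ_true a1 a2 a3 a4 a5 a6
  · intro k _
    have hh : ∀ f ∈ F0, agc 7 m f - agc k m f < 3 := fun f hf => by
      rcases h f hf with h | h <;> omega
    simp only [F0, List.forall_mem_cons] at hh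
    obtain ⟨h1, h2, h3, h4, h5, h6, -⟩ := hh
    simpa only [F0, pk] using badZ_false ⟨_, h1⟩ ⟨_, h2⟩ ⟨_, h3⟩ ⟨_, h4⟩ ⟨_, h5⟩ ⟨_, h6⟩

theorem bits_cons (i s x : ℕ) (l : List ℕ) :
    bits i s (x :: l) = 2 * bits i s l + if x/5^i%5 = s then 1 else 0 := by
  show (match Nat.beq (x/5^i%5) s with
    | true => 2*(bits i s l)+1 | false => 2*(bits i s l)) = _
  by_cases h : x/5^i%5 = s
  · have : Nat.beq (x/5^i%5) s = true := by rw [h]; exact Nat.beq_refl _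
    rw [this, if_pos h]
  · have : Nat.beq (x/5^i%5) s = false := by
      rw [Bool.eq_false_iff]; intro h'; exact h (Nat.eq_of_beq_eq_true h')
    rw [this, if_neg h]; rfl

theorem bits_spec (i s : ℕ) (l : List ℕ) : ∀ k (hk : k < l.length),
    (bits i s l).testBit k = decide (l[k]/5^i%5 = s) := by
  induction l with
  | nil => intro k hk; simp at hk
  | cons x l ih =>
    intro k hk
    rw [bits_cons]
    cases k with
    | zero =>
      rw [Nat.testBit_zero]
      by_cases h : x/5^i%5 = s <;> simp [h] <;> omega
    | succ k =>
      rw [Nat.testBit_succ]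
      have : (2 * bits i s l + if x/5^i%5 = s then 1 else 0) / 2 = bits i s l := by
        split_ifs <;> omega
      rw [this, ih k (by simpa using hk)]
      simp

theorem go_spec (n k : ℕ) (hk : k < zl.length) (hf : full.testBit k = true) (i : ℕ) :
    ∀ (cnt a b c : ℕ), a.testBit k = decide (cnt = 0) → b.testBit k = decide (cnt = 1) →
    c.testBit k = decide (cnt = 2) →
    (go n i a b c).testBit k = decide (cnt + agc i n zl[k] = 0 ∨ cnt + agc i n zl[k] = 2) := by
  induction i with
  | zero =>
    intro cnt a b c ha hb hc
    rw [go]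
    show (a ||| c).testBit k = _
    rw [Nat.testBit_or, ha, hc]
    simp [agc]
  | succ i ih =>
    intro cnt a b c ha hb hc
    rw [go]
    simp only [force_eq]
    have hM : (M i (n/5^i%5)).testBit k = decide (zl[k]/5^i%5 = n/5^i%5) := bits_spec _ _ _ _ hk
    have key := ih (cnt + if n/5^i%5 = zl[k]/5^i%5 then 1 else 0)
      (Nat.land a (Nat.xor full (M i (n/5^i%5))))
      (Nat.lor (Nat.land b (Nat.xor full (M i (n/5^i%5)))) (Nat.land a (M i (n/5^i%5))))
      (Nat.lor (Nat.land c (Nat.xor full (M i (n/5^i%5)))) (Nat.land b (M i (n/5^i%5)))) ?_ ?_ ?_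
    · rw [key, agc_succ]
      congr 1
      apply propext
      constructor <;> intro h <;> omega
    · show (a &&& (full ^^^ (M i (n/5^i%5)))).testBit k = _
      rw [Nat.testBit_and, Nat.testBit_xor, hM, ha, hf]
      by_cases h : n/5^i%5 = zl[k]/5^i%5
      · simp [h]
      · have h' := Ne.symm h
        simp [h, h']
    · show ((b &&& (full ^^^ (M i (n/5^i%5)))) ||| (a &&& (M i (n/5^i%5)))).testBit k = _
      rw [Nat.testBit_or, Nat.testBit_and, Nat.testBit_and, Nat.testBit_xor, hM, ha, hb, hf]
      by_cases h : n/5^i%5 = zl[k]/5^i%5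
      · simp [h]
      · have h' := Ne.symm h
        simp [h, h']
    · show ((c &&& (full ^^^ (M i (n/5^i%5)))) ||| (b &&& (M i (n/5^i%5)))).testBit k = _
      rw [Nat.testBit_or, Nat.testBit_and, Nat.testBit_and, Nat.testBit_xor, hM, hb, hc, hf]
      by_cases h : n/5^i%5 = zl[k]/5^i%5
      · simp [h]
      · have h' := Ne.symm h
        simp [h, h']

theorem zl_length : zl.length = 914 := by decide +kernel

theorem zm_spec (n k : ℕ) (hk : k < zl.length) (h : agc 7 zl[k] n = 0 ∨ agc 7 zl[k] n = 2) :
    (zm n).testBit k = true := by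
  have hf : full.testBit k = true := by
    rw [full, Nat.testBit_two_pow_sub_one]; rw [zl_length] at hk; simpa using hk
  rw [zm, go_spec n k hk hf 7 0 full 0 0 (by simpa using hf) (by simp) (by simp)]
  rw [agc_comm] at h
  simpa using h

theorem inter_spec (k : ℕ) (l : List ℕ) : ∀ z : ℕ, z.testBit k = true →
    (∀ n ∈ l, (zm n).testBit k = true) → (inter l z).testBit k = true := by
  induction l with
  | nil => intro z hz _; exact hz
  | cons n l ih =>
    intro z hz h
    rw [inter, force_eq]
    apply ih
    · show (z &&& zm n).testBit k = true
      rw [Nat.testBit_and, hz, h n (by simp)]; rfl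
    · exact fun m hm => h m (by simp [hm])

theorem low_bit (z : ℕ) : ∃ b, ∀ k, k ≠ b → z.testBit k = true →
    (z &&& (z-1)).testBit k = true := by
  induction z using Nat.strong_induction_on with
  | _ z ih =>
    rcases Nat.eq_zero_or_pos z with rfl | hz
    · exact ⟨0, by simp⟩
    rcases Nat.even_or_odd' z with ⟨q, rfl | rfl⟩
    · obtain ⟨b, hb⟩ := ih q (by omega)
      refine ⟨b+1, ?_⟩
      intro k hk h
      cases k with
      | zero => rw [Nat.testBit_zero] at h; simp at h
      | succ k =>
        rw [Nat.testBit_and, h, Bool.true_and]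
        rw [Nat.testBit_succ] at h ⊢
        have h1 : 2*q/2 = q := by omega
        have h2 : (2*q-1)/2 = q-1 := by omega
        rw [h1] at h
        rw [h2]
        have := hb k (by omega) h
        rw [Nat.testBit_and, h] at this
        simpa using this
    · refine ⟨0, ?_⟩
      intro k hk h
      cases k with
      | zero => exact absurd rfl hk
      | succ k =>
        rw [Nat.testBit_and, h, Bool.true_and]
        rw [Nat.testBit_succ] at h ⊢
        have h1 : (2*q+1)/2 = q := by omega
        have h2 : (2*q+1-1)/2 = q := by omega
        rw [h1] at h
        rw [h2, h]

theorem strip_card (j : ℕ) : ∀ (z : ℕ) (K : Finset ℕ), (∀ k ∈ K, z.testBit k = true) →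
    strip j z = 0 → K.card ≤ j := by
  induction j with
  | zero =>
    intro z K hK h
    rw [strip] at h
    subst h
    have : K = ∅ := Finset.eq_empty_of_forall_notMem fun k hk => by simpa using hK k hk
    simp [this]
  | succ j ih =>
    intro z K hK h
    rw [strip, force_eq] at h
    obtain ⟨b, hb⟩ := low_bit z
    have := ih _ (K.erase b) (fun k hk => by
      rw [Finset.mem_erase] at hk
      exact hb k hk.1 (hK k hk.2)) h
    have h2 := Finset.pred_card_le_card_erase (s := K) (a := b)
    omega

theorem filt_eq (n : ℕ) (l : List ℕ) : ∀ k : List ℕ → Bool,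
    filt n l k = k (l.filter fun m => Nat.beq (agc 7 n m) 1) := by
  induction l with
  | nil => intro k; rfl
  | cons m l ih =>
    intro k
    show (match Nat.beq (agc 7 n m) 1 with
      | true => filt n l (fun t => k (m :: t)) | false => filt n l k) = _
    cases h : Nat.beq (agc 7 n m) 1
    · simp only [h, ih, List.filter_cons]; simp
    · simp only [h, ih, List.filter_cons]; simp

theorem dfs_spec (f : ℕ) : ∀ (r : ℕ) (l ch : List ℕ) (S : Finset ℕ), dfs f r l ch = true →
    l.Pairwise (· ≥ ·) → (∀ x ∈ l, 1 ≤ x/15625) → (∀ x ∈ S, x ∈ l) → S.card = r →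
    (∀ x ∈ S, ∀ y ∈ S, x ≠ y → agc 7 x y = 1) →
    (∀ d, (S.filter fun x => x/15625 = d).card ≤ 2) →
    ∀ K : Finset ℕ, (∀ k ∈ K, k < 914) → (∀ k ∈ K, ∀ n ∈ ch, (zm n).testBit k = true) →
    (∀ k ∈ K, ∀ n ∈ S, (zm n).testBit k = true) → K.card ≤ 16 := by
  induction f with
  | zero => intro r l ch S h; exact absurd h (by simp [dfs])
  | succ f ih =>
    intro r l ch S h hsort hpos hSl hcard hpair hcl K hK hch hKS
    change step (dfs f) r l ch = true at h
    cases r with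
    | zero =>
      rw [step] at h
      have h := Nat.eq_of_beq_eq_true h
      refine strip_card 16 _ K (fun k hk => inter_spec k ch full ?_ (hch k hk)) h
      rw [full, Nat.testBit_two_pow_sub_one]; simpa using hK k hk
    | succ r =>
      cases l with
      | nil =>
        exfalso
        have : S = ∅ := Finset.eq_empty_of_forall_notMem fun k hk => by simpa using hSl k hk
        simp [this] at hcard
      | cons n t =>
        rw [List.pairwise_cons] at hsort
        have hble : Nat.ble (r+1) (2*(n/15625)) = true := by
          rw [Nat.ble_eq]
          rw [← hcard]
          have h1 : ∀ x ∈ S, x/15625 ∈ Finset.Icc 1 (n/15625) := by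
            intro x hx
            rw [Finset.mem_Icc]
            refine ⟨hpos x (hSl x hx), Nat.div_le_div_right ?_⟩
            rcases List.mem_cons.1 (hSl x hx) with h | h
            · exact h.le
            · exact hsort.1 x h
          have := Finset.card_le_mul_card_image_of_maps_to h1 2 (fun d _ => hcl d)
          simpa using this
        rw [step, hble] at h
        simp only [filt_eq, Bool.and_eq_true] at h
        by_cases hn : n ∈ S
        · refine ih r _ (n :: ch) (S.erase n) h.1 (hsort.2.filter _)
            (fun x hx => hpos x (List.mem_cons_of_mem _ (List.mem_filter.1 hx).1)) ?_ ?_ ?_ ?_ K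
            hK ?_ ?_
          · intro x hx
            rw [Finset.mem_erase] at hx
            rw [List.mem_filter]
            refine ⟨?_, ?_⟩
            · rcases List.mem_cons.1 (hSl x hx.2) with h | h
              · exact absurd h hx.1
              · exact h
            · rw [hpair n hn x hx.2 (Ne.symm hx.1)]; rfl
          · rw [Finset.card_erase_of_mem hn, hcard]; rfl
          · exact fun x hx y hy => hpair x (Finset.mem_of_mem_erase hx) y (Finset.mem_of_mem_erase hy)
          · exact fun d => (Finset.card_le_card (Finset.filter_subset_filter _
              (Finset.erase_subset _ _))).trans (hcl d)
          · intro k hk m hm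
            rcases List.mem_cons.1 hm with rfl | hm
            · exact hKS k hk _ hn
            · exact hch k hk m hm
          · exact fun k hk m hm => hKS k hk m (Finset.mem_of_mem_erase hm)
        · refine ih (r+1) t ch S h.2 hsort.2 (fun x hx => hpos x (List.mem_cons_of_mem _ hx))
            (fun x hx => ?_) hcard hpair hcl K hK hch hKS
          rcases List.mem_cons.1 (hSl x hx) with h | h
          · exact absurd (h ▸ hx) hn
          · exact h

theorem cand_sorted : cand.Pairwise (· ≥ ·) := by decide +kernel
theorem cand_pos : ∀ x ∈ cand, 1 ≤ x/15625 := by decide +kernel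

theorem search (Y : Finset ℕ) (hY : ∀ n ∈ Y, n < 78125) (h8 : Y.card = 8)
    (hF : ∀ n ∈ Y, ∀ f ∈ F, agc 7 n f = 1)
    (hpair : ∀ n ∈ Y, ∀ m ∈ Y, n ≠ m → agc 7 n m = 1)
    (hcl : ∀ d, (Y.filter fun x => x/15625 = d).card ≤ 2)
    (U : Finset ℕ) (hU : ∀ u ∈ U, u < 78125)
    (hUF : ∀ u ∈ U, ∀ f ∈ F0, agc 7 u f = 0 ∨ agc 7 u f = 2)
    (hUY : ∀ u ∈ U, ∀ n ∈ Y, agc 7 u n = 0 ∨ agc 7 u n = 2) : U.card ≤ 16 := by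
  have hz : ∀ u ∈ U, u ∈ zl := fun u hu => mem_zl u (hU u hu) (hUF u hu)
  have hinj : Set.InjOn (fun u => zl.idxOf u) (U : Set ℕ) := by
    intro u hu v hv h
    exact (List.idxOf_inj (hz u hu)).1 h
  rw [← Finset.card_image_of_injOn hinj]
  refine dfs_spec 200 8 cand [] Y dfs_ok cand_sorted cand_pos
    (fun n hn => mem_cand n (hY n hn) (hF n hn)) h8 hpair hcl _ ?_ ?_ ?_
  · intro k hk
    obtain ⟨u, hu, rfl⟩ := Finset.mem_image.1 hk
    rw [← zl_length]
    exact List.idxOf_lt_length_iff.2 (hz u hu)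
  · simp
  · intro k hk n hn
    obtain ⟨u, hu, rfl⟩ := Finset.mem_image.1 hk
    have hlt := List.idxOf_lt_length_iff.2 (hz u hu)
    refine zm_spec n _ hlt ?_
    simp only [List.getElem_idxOf]
    exact hUY u hu n hn

end ZS

namespace CodeB
open Finset

/-- number of agreeing coordinates -/
def ag {n : ℕ} (u v : Fin n → Fin 5) : ℕ := (univ.filter fun k => u k = v k).card

/-- words of `X` with symbol `s` in column `k` -/
def fb {n : ℕ} (X : Finset (Fin n → Fin 5)) (k : Fin n) (s : Fin 5) : Finset (Fin n → Fin 5) :=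
  X.filter fun u => u k = s

theorem mem_fb {n : ℕ} {X : Finset (Fin n → Fin 5)} {k : Fin n} {s : Fin 5} {u : Fin n → Fin 5} :
    u ∈ fb X k s ↔ u ∈ X ∧ u k = s := mem_filter

theorem ag_eq_sum {n : ℕ} (u v : Fin n → Fin 5) :
    ag u v = ∑ k, if u k = v k then 1 else 0 := by
  rw [ag, card_filter]

theorem ag_comm {n : ℕ} (u v : Fin n → Fin 5) : ag u v = ag v u := by
  simp only [ag, eq_comm]

theorem ag_self {n : ℕ} (u : Fin n → Fin 5) : ag u u = n := by
  simp [ag]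

theorem sum_fb {n : ℕ} (X : Finset (Fin n → Fin 5)) (k : Fin n) :
    ∑ s, (fb X k s).card = X.card :=
  (card_eq_sum_card_fiberwise (fun _ _ => mem_univ _)).symm

theorem sum_ag_left {n : ℕ} (X : Finset (Fin n → Fin 5)) (u : Fin n → Fin 5) :
    ∑ v ∈ X, ag u v = ∑ k, (fb X k (u k)).card := by
  simp only [ag_eq_sum]
  rw [sum_comm]
  refine sum_congr rfl fun k _ => ?_
  rw [fb, card_filter]
  simp only [eq_comm]

theorem sum_col {n : ℕ} (X : Finset (Fin n → Fin 5)) (k : Fin n) (f : Fin 5 → ℤ) :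
    ∑ u ∈ X, f (u k) = ∑ s, ((fb X k s).card : ℤ) * f s := by
  rw [← sum_fiberwise_of_maps_to (g := fun u => u k) (t := univ) (fun _ _ => mem_univ _)]
  refine sum_congr rfl fun s _ => ?_
  rw [sum_congr rfl (g := fun _ => f s)]
  · rw [sum_const, nsmul_eq_mul]; rfl
  · intro u hu; rw [(mem_filter.1 hu).2]

theorem sum_sq {n : ℕ} (X : Finset (Fin n → Fin 5)) :
    ∑ k, ∑ s, ((fb X k s).card : ℤ)^2 = ∑ u ∈ X, ∑ v ∈ X, (ag u v : ℤ) := by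
  have h : ∀ u ∈ X, ∑ v ∈ X, (ag u v : ℤ) = ∑ k, ((fb X k (u k)).card : ℤ) := by
    intro u _
    exact_mod_cast sum_ag_left X u
  rw [sum_congr rfl h, sum_comm (s := X)]
  refine sum_congr rfl fun (k : Fin n) _ => ?_
  rw [sum_col X k (fun s => ((fb X k s).card : ℤ))]
  refine sum_congr rfl fun s _ => ?_
  ring

theorem sum_sq_one {n : ℕ} (X : Finset (Fin n → Fin 5))
    (h1 : ∀ u ∈ X, ∀ v ∈ X, u ≠ v → ag u v = 1) :
    ∑ k, ∑ s, ((fb X k s).card : ℤ)^2 = X.card * (n + X.card - 1) := by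
  rw [sum_sq]
  have h : ∀ u ∈ X, ∑ v ∈ X, (ag u v : ℤ) = n + X.card - 1 := by
    intro u hu
    rw [← add_sum_erase X _ hu, ag_self, sum_congr rfl (g := fun _ => (1:ℤ))]
    · rw [sum_const, card_erase_of_mem hu]
      have : 1 ≤ X.card := card_pos.2 ⟨u, hu⟩
      simp only [nsmul_eq_mul, mul_one]
      push_cast [this]
      ring
    · intro v hv
      rw [mem_erase] at hv
      rw [h1 u hu v hv.2 (Ne.symm hv.1)]; rfl
  rw [sum_congr rfl h, sum_const, nsmul_eq_mul]

/-- even subsets -/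
def E5 : Finset (Finset (Fin 5)) := univ.filter fun e => e.card % 2 = 0

def sg (e : Finset (Fin 5)) (s : Fin 5) : ℤ := if s ∈ e then -1 else 1
def psi (e c : Finset (Fin 5)) : ℤ := ∏ s, if s ∈ c then sg e s else 1
def eta (e : Finset (Fin 5)) : ℤ := (-1)^(e.card/2)

theorem psi_sum : ∀ c : Finset (Fin 5),
    ∑ e ∈ E5, psi e c = if c = ∅ ∨ c = univ then 16 else 0 := by decide +kernel

theorem eta_sum : ∀ c : Finset (Fin 5),
    ∑ e ∈ E5, eta e * psi e c = -4 * (-1)^(c.card/2) := by decide +kernel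

/-- odd symbols -/
def od {n : ℕ} (X : Finset (Fin n → Fin 5)) (k : Fin n) : Finset (Fin 5) :=
  univ.filter fun s => (fb X k s).card % 2 = 1

theorem sg_pow (e : Finset (Fin 5)) (s : Fin 5) (x : ℕ) :
    sg e s ^ x = if x % 2 = 1 then sg e s else 1 := by
  rcases Nat.even_or_odd' x with ⟨q, rfl | rfl⟩
  · rw [if_neg (by omega), pow_mul]
    have : sg e s ^ 2 = 1 := by unfold sg; split_ifs <;> norm_num
    rw [this, one_pow]
  · rw [if_pos (by omega), pow_succ, pow_mul]
    have : sg e s ^ 2 = 1 := by unfold sg; split_ifs <;> norm_num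
    rw [this, one_pow, one_mul]

theorem prod_sg {n : ℕ} (X : Finset (Fin n → Fin 5)) (k : Fin n) (e : Finset (Fin 5)) :
    ∏ v ∈ X, sg e (v k) = psi e (od X k) := by
  rw [← prod_fiberwise_of_maps_to (g := fun u => u k) (t := univ) (fun _ _ => mem_univ _), psi]
  refine prod_congr rfl fun s _ => ?_
  rw [prod_congr rfl (g := fun _ => sg e s)]
  · rw [prod_const, sg_pow]
    simp only [od, mem_filter, mem_univ, true_and]; rfl
  · intro u hu; rw [(mem_filter.1 hu).2]

theorem G_even (X : Finset (Fin 7 → Fin 5)) (h1 : ∀ u ∈ X, ∀ v ∈ X, u ≠ v → ag u v = 1)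
    (h3 : ∀ k s, (fb X k s).card ≤ 3) : (∑ k, (od X k).card / 2) % 2 = 0 := by
  have hsq := sum_sq_one X h1
  have hlin : ∑ k, ∑ s, ((fb X k s).card : ℤ) = 7 * X.card := by
    have : ∀ k ∈ (univ : Finset (Fin 7)), ∑ s, ((fb X k s).card : ℤ) = X.card := fun k _ => by
      exact_mod_cast sum_fb X k
    rw [sum_congr rfl this]; simp
  have hod : ∀ k, ((od X k).card : ℤ) = ∑ s, (((fb X k s).card % 2 : ℕ) : ℤ) := by
    intro k
    rw [od, card_filter]
    push_cast
    refine sum_congr rfl fun s _ => ?_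
    split_ifs with h <;> omega
  have hx : ∀ k s, (((fb X k s).card % 2 : ℕ) : ℤ) = 2 * (fb X k s).card - ((fb X k s).card : ℤ)^2
      + 4 * (((fb X k s).card / 3 : ℕ) : ℤ) := by
    intro k s
    have := h3 k s
    generalize (fb X k s).card = x at *
    interval_cases x <;> norm_num
  have ho : ∑ k, ((od X k).card : ℤ) = 2 * (7 * X.card) - X.card * (7 + X.card - 1)
      + 4 * ∑ k, ∑ s, (((fb X k s).card / 3 : ℕ) : ℤ) := by
    simp only [hod, hx, sum_add_distrib, sum_sub_distrib, ← mul_sum, hlin, hsq]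
    norm_num
  have hpar : ∀ k, (od X k).card = 2 * ((od X k).card / 2) + X.card % 2 := by
    intro k
    have : (od X k).card % 2 = X.card % 2 := by
      rw [← sum_fb X k, od, card_filter, sum_nat_mod, sum_nat_mod univ 2 (fun s => (fb X k s).card)]
      congr 1
      refine sum_congr rfl fun s _ => ?_
      split_ifs with h <;> omega
    omega
  have ho2 : ∑ k, ((od X k).card : ℤ) = 2 * ((∑ k, (od X k).card / 2 : ℕ) : ℤ)
      + 7 * ((X.card % 2 : ℕ) : ℤ) := by
    have : ∑ k, (od X k).card = 2 * (∑ k, (od X k).card / 2) + 7 * (X.card % 2) := by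
      rw [sum_congr rfl fun k _ => hpar k, sum_add_distrib, ← mul_sum]; simp
    exact_mod_cast this
  rw [ho2] at ho
  generalize (∑ k, ∑ s, (((fb X k s).card / 3 : ℕ) : ℤ)) = t at *
  generalize (∑ k, (od X k).card / 2) = G at *
  rcases Nat.even_or_odd' X.card with ⟨j, hj | hj⟩
  · have e1 : X.card % 2 = 0 := by omega
    rw [e1, hj] at ho
    push_cast at ho
    have : (G : ℤ) = 2 * (4 * j - j*j + t) := by linarith
    omega
  · have e1 : X.card % 2 = 1 := by omega
    rw [e1, hj] at ho
    push_cast at ho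
    have : (G : ℤ) = 2 * (t - j * j + 3 * j) := by linarith
    omega

theorem exists_X (P : Finset (Fin 7 → Fin 5)) (hP : P.card = 15)
    (h1 : ∀ u ∈ P, ∀ v ∈ P, u ≠ v → ag u v = 1)
    (h3 : ∀ k s, (fb P k s).card = 3) :
    ∃ X ⊆ P, X ≠ ∅ ∧ X ≠ P ∧ ∀ k, od X k = ∅ ∨ od X k = univ := by
  let A : (Fin 7 → Finset (Fin 5)) → ℤ := fun e => ∏ v ∈ P, (1 + ∏ k, sg (e k) (v k))
  let D : Finset (Fin 7 → Finset (Fin 5)) := Fintype.piFinset fun _ => E5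
  have hA : ∀ e, A e = ∑ X ∈ P.powerset, ∏ k, psi (e k) (od X k) := by
    intro e
    show ∏ v ∈ P, (1 + ∏ k, sg (e k) (v k)) = _
    rw [prod_one_add]
    refine sum_congr rfl fun X _ => ?_
    rw [prod_comm]
    exact prod_congr rfl fun k _ => prod_sg X k (e k)
  have hsgn : ∀ (f : Fin 7 → ℤ), (∀ k, f k = 1 ∨ f k = -1) → (∏ k, f k = 1 ∨ ∏ k, f k = -1) := by
    intro f hf
    refine prod_induction f (fun x => x = 1 ∨ x = -1) ?_ (Or.inl rfl) (fun k _ => hf k)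
    rintro a b (rfl | rfl) (rfl | rfl) <;> simp
  have hA0 : ∀ e, 0 ≤ A e := by
    intro e
    refine prod_nonneg fun v _ => ?_
    rcases hsgn (fun k => sg (e k) (v k)) (fun k => by unfold sg; split_ifs <;> simp) with h | h
      <;> rw [h] <;> norm_num
  have hpos : 0 < ∑ e ∈ D, (1 + ∏ k, eta (e k)) * A e := by
    refine sum_pos' ?_ ⟨fun _ => ∅, ?_, ?_⟩
    · intro e _
      refine mul_nonneg ?_ (hA0 e)
      rcases hsgn (fun k => eta (e k)) (fun k => neg_one_pow_eq_or ℤ _) with h | h <;>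
        rw [h] <;> norm_num
    · simp [D, E5]
    · refine mul_pos (by simp [eta]) (prod_pos fun v _ => by simp [sg])
  have hT1 : ∑ e ∈ D, A e = 16^7 * ((P.powerset.filter fun X =>
      ∀ k, od X k = ∅ ∨ od X k = univ).card : ℤ) := by
    rw [sum_congr rfl fun e _ => hA e, sum_comm, card_filter]
    push_cast
    rw [mul_sum]
    refine sum_congr rfl fun X _ => ?_
    rw [← prod_univ_sum (fun _ => E5) (fun k e => psi e (od X k))]
    simp only [psi_sum]
    split_ifs with h
    · rw [prod_congr rfl fun k _ => if_pos (h k)]; simp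
    · rw [not_forall] at h
      obtain ⟨k, hk⟩ := h
      rw [prod_eq_zero (mem_univ k) (if_neg hk)]; simp
  have hT2 : ∑ e ∈ D, (∏ k, eta (e k)) * A e = - 4^7 * 2^15 := by
    have : ∀ e ∈ D, (∏ k, eta (e k)) * A e
        = ∑ X ∈ P.powerset, ∏ k, eta (e k) * psi (e k) (od X k) := by
      intro e _
      rw [hA, mul_sum]
      exact sum_congr rfl fun X _ => prod_mul_distrib.symm
    rw [sum_congr rfl this, sum_comm]
    have h2 : ∀ X ∈ P.powerset, ∑ e ∈ D, ∏ k, eta (e k) * psi (e k) (od X k) = - 4^7 := by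
      intro X hX
      rw [mem_powerset] at hX
      rw [← prod_univ_sum (fun _ => E5) (fun k e => eta e * psi e (od X k))]
      simp only [eta_sum]
      rw [prod_mul_distrib, prod_pow_eq_pow_sum]
      have hG := G_even X (fun u hu v hv => h1 u (hX hu) v (hX hv)) (fun k s => by
        rw [← h3 k s]; exact card_le_card (filter_subset_filter _ hX))
      rw [Even.neg_one_pow (Nat.even_iff.2 hG)]
      simp
    rw [sum_congr rfl h2, sum_const, card_powerset, hP]
    norm_num
  simp only [add_mul, one_mul, sum_add_distrib, hT1, hT2] at hpos
  by_contra hcon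
  have hsub : (P.powerset.filter fun X => ∀ k, od X k = ∅ ∨ od X k = univ) ⊆ {∅, P} := by
    intro X hX
    rw [mem_filter, mem_powerset] at hX
    by_contra hne
    simp only [mem_insert, mem_singleton, not_or] at hne
    exact hcon ⟨X, hX.1, hne.1, hne.2, hX.2⟩
  have hc : (P.powerset.filter fun X => ∀ k, od X k = ∅ ∨ od X k = univ).card ≤ 2 :=
    (card_le_card hsub).trans card_le_two
  have : ((P.powerset.filter fun X => ∀ k, od X k = ∅ ∨ od X k = univ).card : ℤ) ≤ 2 := by
    exact_mod_cast hc
  norm_num at hpos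
  linarith

theorem exists_Y (P : Finset (Fin 7 → Fin 5)) (hP : P.card = 15)
    (h1 : ∀ u ∈ P, ∀ v ∈ P, u ≠ v → ag u v = 1)
    (h3 : ∀ k s, (fb P k s).card = 3) :
    ∃ Y ⊆ P, Y.card = 8 ∧ ∀ k s, (fb Y k s).card = 0 ∨ (fb Y k s).card = 2 := by
  suffices ∃ Y ⊆ P, Y ≠ ∅ ∧ ∀ k s, (fb Y k s).card % 2 = 0 by
    obtain ⟨Y, hYP, hY0, hY⟩ := this
    have h02 : ∀ k s, (fb Y k s).card = 0 ∨ (fb Y k s).card = 2 := by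
      intro k s
      have h := hY k s
      have : (fb Y k s).card ≤ 3 := by
        rw [← h3 k s]; exact card_le_card (filter_subset_filter _ hYP)
      omega
    refine ⟨Y, hYP, ?_, h02⟩
    have hsq := sum_sq_one Y (fun u hu v hv => h1 u (hYP hu) v (hYP hv))
    have hx : ∀ k s, ((fb Y k s).card : ℤ)^2 = 2 * (fb Y k s).card := by
      intro k s
      rcases h02 k s with h | h <;> rw [h] <;> norm_num
    have hlin : ∀ k, ∑ s, ((fb Y k s).card : ℤ) = Y.card := fun k => by
      exact_mod_cast sum_fb Y k
    simp only [hx, ← mul_sum, hlin] at hsq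
    simp at hsq
    have hpos : (0:ℤ) < Y.card := by
      exact_mod_cast card_pos.2 (nonempty_iff_ne_empty.2 hY0)
    have : (Y.card : ℤ) * (Y.card - 8) = 0 := by linarith
    rcases mul_eq_zero.1 this with h | h <;> omega
  obtain ⟨X, hXP, hX0, hXP', hX⟩ := exists_X P hP h1 h3
  have hpar : ∀ k, X.card % 2 = (∑ s, (fb X k s).card % 2) % 2 := fun k => by
    rw [← sum_fb X k, sum_nat_mod]
  have hval : ∀ k s, (fb X k s).card % 2 = X.card % 2 := by
    intro k s
    rcases hX k with h | h
    · have : ∀ s, (fb X k s).card % 2 = 0 := by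
        intro s
        have : s ∉ od X k := by rw [h]; simp
        simp only [od, mem_filter, mem_univ, true_and] at this
        omega
      rw [hpar k, this s, sum_congr rfl fun s _ => this s]; simp
    · have : ∀ s, (fb X k s).card % 2 = 1 := by
        intro s
        have : s ∈ od X k := by rw [h]; simp
        simpa only [od, mem_filter, mem_univ, true_and] using this
      rw [hpar k, this s, sum_congr rfl fun s _ => this s]; simp
  rcases Nat.mod_two_eq_zero_or_one X.card with h | h
  · exact ⟨X, hXP, hX0, fun k s => by rw [hval, h]⟩
  · refine ⟨P \ X, sdiff_subset, ?_, ?_⟩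
    · intro h0
      exact hXP' (Subset.antisymm hXP (sdiff_eq_empty_iff_subset.1 h0))
    · intro k s
      have e : fb (P \ X) k s = fb P k s \ fb X k s := by
        ext u
        simp only [mem_fb, mem_sdiff]
        tauto
      have hs : fb X k s ⊆ fb P k s := filter_subset_filter _ hXP
      rw [e, card_sdiff_of_subset hs, h3]
      have := hval k s
      have := card_le_card hs
      rw [h3] at this
      omega


theorem steiner {α : Type} [Fintype α] [DecidableEq α] (h7 : Fintype.card α = 7) (t : α → α → α)
    (hc : ∀ p q, t p q = t q p) (hi : ∀ p q, t p (t p q) = q) (hid : ∀ p, t p p = p) (a : α) :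
    ∃ f : Fin 7 → α, f 0 = a ∧ Function.Injective f ∧ t (f 0) (f 1) = f 2 ∧ t (f 0) (f 3) = f 4 ∧
      t (f 0) (f 5) = f 6 ∧ t (f 1) (f 3) = f 5 ∧ t (f 1) (f 4) = f 6 ∧ t (f 2) (f 3) = f 6 ∧
      t (f 2) (f 4) = f 5 := by
  have hne : ∀ p q, p ≠ q → t p q ≠ p ∧ t p q ≠ q := by
    intro p q h
    refine ⟨fun h' => h ?_, fun h' => h ?_⟩
    · have := hi p q
      rw [h', hid] at this; exact this
    · have := hi q p
      rw [hc q p, h', hid] at this; exact this.symm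
  have hex : ∀ s : Finset α, s.card < 7 → ∃ x, x ∉ s := by
    intro s hs
    by_contra hcon
    push Not at hcon
    have : s = univ := eq_univ_iff_forall.2 hcon
    rw [this, card_univ, h7] at hs
    omega
  obtain ⟨b, hb⟩ := hex {a} (by simp)
  have hab : a ≠ b := fun h => hb (by simp [h])
  obtain ⟨c, rfl⟩ : ∃ c, c = t a b := ⟨_, rfl⟩
  obtain ⟨d, hd⟩ := hex {a, b, t a b} (card_le_three.trans_lt (by norm_num))
  simp only [mem_insert, mem_singleton, not_or] at hd
  obtain ⟨hda, hdb, hdc⟩ := hd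
  obtain ⟨c, hcd⟩ : ∃ c, c = t a b := ⟨_, rfl⟩
  obtain ⟨e, he⟩ : ∃ e, e = t a d := ⟨_, rfl⟩
  obtain ⟨f, hf⟩ : ∃ f, f = t b d := ⟨_, rfl⟩
  obtain ⟨g, hg⟩ : ∃ g, g = t a f := ⟨_, rfl⟩
  rw [← hcd] at hdc
  have hca := (hne a b hab).1
  have hcb := (hne a b hab).2
  rw [← hcd] at hca hcb
  have hea := (hne a d (Ne.symm hda)).1
  have hed := (hne a d (Ne.symm hda)).2
  rw [← he] at hea hed
  have hfb := (hne b d (Ne.symm hdb)).1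
  have hfd := (hne b d (Ne.symm hdb)).2
  rw [← hf] at hfb hfd
  have heb : e ≠ b := by grind
  have hec : e ≠ c := by grind
  have hfa : f ≠ a := by grind
  have hfc : f ≠ c := by grind
  have hfe : f ≠ e := by grind
  have hga := (hne a f (Ne.symm hfa)).1
  have hgf := (hne a f (Ne.symm hfa)).2
  rw [← hg] at hga hgf
  have hgb : g ≠ b := by grind
  have hgc : g ≠ c := by grind
  have hgd : g ≠ d := by grind
  have hge : g ≠ e := by grind
  have huniv : (({a, b, c, d, e, f, g} : Finset α)) = univ := by
    apply eq_univ_of_card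
    rw [h7]
    repeat rw [card_insert_of_notMem (by simp only [mem_insert, mem_singleton, not_or]; grind)]
    simp
  have hall : ∀ x, x = a ∨ x = b ∨ x = c ∨ x = d ∨ x = e ∨ x = f ∨ x = g := by
    intro x
    have : x ∈ ({a, b, c, d, e, f, g} : Finset α) := by rw [huniv]; simp
    simpa using this
  have k1 : t b e = g := by
    rcases hall (t b e) with h | h | h | h | h | h | h <;> grind
  have k2 : t c d = g := by
    rcases hall (t c d) with h | h | h | h | h | h | h <;> grind
  have k3 : t c e = f := by
    rcases hall (t c e) with h | h | h | h | h | h | h <;> grind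
  refine ⟨![a, b, c, d, e, f, g], rfl, ?_, hcd.symm, he.symm, hg.symm, hf.symm, k1, k2, k3⟩
  have hsurj : Function.Surjective ![a, b, c, d, e, f, g] := by
    intro x
    rcases hall x with h | h | h | h | h | h | h
    · exact ⟨0, h.symm⟩
    · exact ⟨1, h.symm⟩
    · exact ⟨2, h.symm⟩
    · exact ⟨3, h.symm⟩
    · exact ⟨4, h.symm⟩
    · exact ⟨5, h.symm⟩
    · exact ⟨6, h.symm⟩
  exact ((Fintype.bijective_iff_surjective_and_card _).2 ⟨hsurj, by simp [h7]⟩).1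

/-- standard form of the Fano words: rows are points, columns are lines -/
def Mx : Fin 7 → Fin 7 → Fin 5 := ![
  ![0,0,0,1,1,1,1], ![0,1,1,0,0,2,2], ![0,2,2,2,2,0,0], ![1,0,3,0,3,0,3], ![2,0,4,3,0,3,0],
  ![3,3,0,0,4,4,0], ![4,4,0,4,0,0,4]]

/-- the line through two points -/
def ln (i j : Fin 7) : Fin 7 := if i = j then 0 else
  if Mx i 0 = Mx j 0 then 0 else if Mx i 1 = Mx j 1 then 1 else if Mx i 2 = Mx j 2 then 2 else
  if Mx i 3 = Mx j 3 then 3 else if Mx i 4 = Mx j 4 then 4 else if Mx i 5 = Mx j 5 then 5 else 6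

theorem Mx_ln : ∀ i j a, i ≠ j → (Mx i a = Mx j a ↔ a = ln i j) := by decide +kernel

theorem Mx_rep : ∀ a d, ∃ i, Mx i a = d := by decide +kernel

theorem ln_col : ∀ a b, a ≠ b → ∃ i j k l, i ≠ j ∧ i ≠ k ∧ i ≠ l ∧ j ≠ k ∧ j ≠ l ∧ k ≠ l ∧
  ln i j = a ∧ ln i k = a ∧ ln i l = b := by decide +kernel

theorem col_unique {n : ℕ} {u v : Fin n → Fin 5} (h : ag u v = 1) {k l : Fin n}
    (hk : u k = v k) (hl : u l = v l) : k = l := by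
  rw [ag, card_eq_one] at h
  obtain ⟨a, ha⟩ := h
  have h1 : k ∈ univ.filter fun k => u k = v k := by simp [hk]
  have h2 : l ∈ univ.filter fun k => u k = v k := by simp [hl]
  rw [ha, mem_singleton] at h1 h2
  rw [h1, h2]

theorem col_exists {n : ℕ} {u v : Fin n → Fin 5} (h : ag u v = 1) : ∃ k, u k = v k := by
  rw [ag, card_eq_one] at h
  obtain ⟨a, ha⟩ := h
  have : a ∈ univ.filter fun k => u k = v k := by rw [ha]; simp
  exact ⟨a, by simpa using this⟩

theorem fano (F : Finset (Fin 7 → Fin 5)) (hF : F.card = 7)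
    (h1 : ∀ u ∈ F, ∀ v ∈ F, u ≠ v → ag u v = 1)
    (h13 : ∀ k s, (fb F k s).card = 1 ∨ (fb F k s).card = 3) (w : Fin 7 → Fin 5) (hw : w ∈ F) :
    ∃ (f : Fin 7 → (Fin 7 → Fin 5)) (κ : Fin 7 → Fin 7), f 0 = w ∧ (∀ i, f i ∈ F) ∧
      Function.Injective f ∧ Function.Injective κ ∧
      ∀ i j a, f i (κ a) = f j (κ a) ↔ Mx i a = Mx j a := by
  have hthree : ∀ p ∈ F, ∀ q ∈ F, ∀ r ∈ F, ∀ s ∈ F, ∀ k, p ≠ q → p ≠ r → p ≠ s → q ≠ r → q ≠ s →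
      r ≠ s → p k = q k → p k = r k → p k = s k → False := by
    intro p hp q hq r hr s hs k hpq hpr hps hqr hqs hrs e1 e2 e3
    have hsub : {p, q, r, s} ⊆ fb F k (p k) := by
      intro x hx
      simp only [mem_insert, mem_singleton] at hx
      rw [mem_fb]
      rcases hx with rfl | rfl | rfl | rfl
      · exact ⟨hp, rfl⟩
      · exact ⟨hq, e1.symm⟩
      · exact ⟨hr, e2.symm⟩
      · exact ⟨hs, e3.symm⟩
    have hc := card_le_card hsub
    have h4 : ({p, q, r, s} : Finset (Fin 7 → Fin 5)).card = 4 := by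
      rw [card_insert_of_notMem, card_insert_of_notMem, card_insert_of_notMem, card_singleton]
      · simpa using hrs
      · simpa using ⟨hqr, hqs⟩
      · simpa using ⟨hpq, hpr, hps⟩
    rcases h13 k (p k) with h | h <;> omega
  have hT : ∀ p q : F, ∃ r : F, (p = q → r = p) ∧ (p ≠ q → r ≠ p ∧ r ≠ q ∧
      ∃ k, p.1 k = q.1 k ∧ p.1 k = r.1 k) := by
    intro p q
    by_cases hpq : p = q
    · exact ⟨p, fun _ => rfl, fun h => absurd hpq h⟩
    have hpq' : p.1 ≠ q.1 := fun h => hpq (Subtype.ext h)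
    obtain ⟨k, hk⟩ := col_exists (h1 p p.2 q q.2 hpq')
    have hsub : {p.1, q.1} ⊆ fb F k (p.1 k) := by
      intro x hx
      simp only [mem_insert, mem_singleton] at hx
      rw [mem_fb]
      rcases hx with rfl | rfl
      · exact ⟨p.2, rfl⟩
      · exact ⟨q.2, hk.symm⟩
    have hc := card_le_card hsub
    rw [card_pair hpq'] at hc
    have h3 : (fb F k (p.1 k)).card = 3 := by rcases h13 k (p.1 k) with h | h <;> omega
    have : ∃ r ∈ fb F k (p.1 k), r ∉ ({p.1, q.1} : Finset _) := by
      apply exists_mem_notMem_of_card_lt_card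
      rw [card_pair hpq', h3]; norm_num
    obtain ⟨r, hr, hr'⟩ := this
    rw [mem_fb] at hr
    simp only [mem_insert, mem_singleton, not_or] at hr'
    exact ⟨⟨r, hr.1⟩, fun h => absurd h hpq, fun _ => ⟨fun h => hr'.1 (congrArg Subtype.val h),
      fun h => hr'.2 (congrArg Subtype.val h), k, hk, hr.2.symm⟩⟩
  choose t ht1 ht2 using hT
  have hT2 : ∀ p q r s : F, ∀ k l, p ≠ q → r ≠ p → r ≠ q → s ≠ p → s ≠ q → p.1 k = q.1 k →
      p.1 k = r.1 k → p.1 l = q.1 l → p.1 l = s.1 l → r = s := by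
    intro p q r s k l hpq hrp hrq hsp hsq e1 e2 e3 e4
    have hpq' : p.1 ≠ q.1 := fun h => hpq (Subtype.ext h)
    have := col_unique (h1 p p.2 q q.2 hpq') e1 e3
    subst this
    by_contra hrs
    exact hthree p p.2 q q.2 r r.2 s s.2 k hpq' (fun h => hrp (Subtype.ext h.symm))
      (fun h => hsp (Subtype.ext h.symm)) (fun h => hrq (Subtype.ext h.symm))
      (fun h => hsq (Subtype.ext h.symm)) (fun h => hrs (Subtype.ext h)) e1 e2 e4
  have hid : ∀ p, t p p = p := fun p => ht1 p p rfl
  have hc : ∀ p q, t p q = t q p := by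
    intro p q
    by_cases hpq : p = q
    · rw [hpq]
    obtain ⟨a1, a2, k, a3, a4⟩ := ht2 p q hpq
    obtain ⟨b1, b2, l, b3, b4⟩ := ht2 q p (Ne.symm hpq)
    exact hT2 p q _ _ k l hpq a1 a2 b2 b1 a3 a4 b3.symm (b3.symm.trans b4)
  have hi : ∀ p q, t p (t p q) = q := by
    intro p q
    by_cases hpq : p = q
    · rw [hpq, hid, hid]
    obtain ⟨a1, a2, k, a3, a4⟩ := ht2 p q hpq
    obtain ⟨b1, b2, l, b3, b4⟩ := ht2 p (t p q) (Ne.symm a1)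
    exact hT2 p (t p q) _ _ l k (Ne.symm a1) b1 b2 (Ne.symm hpq) (Ne.symm a2) b3 b4 a4 a3
  obtain ⟨f, f0, finj, g1, g2, g3, g4, g5, g6, g7⟩ :=
    steiner (by simp [hF]) t hc hi hid ⟨w, hw⟩
  have hcol : ∀ i j k, i ≠ j → t (f i) (f j) = f k → ∃ l, (f i).1 l = (f j).1 l ∧
      (f i).1 l = (f k).1 l := by
    intro i j k hij h
    obtain ⟨-, -, l, h3, h4⟩ := ht2 (f i) (f j) (fun h => hij (finj h))
    rw [h] at h4
    exact ⟨l, h3, h4⟩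
  obtain ⟨l0, p0, q0⟩ := hcol _ _ _ (by decide) g1
  obtain ⟨l1, p1, q1⟩ := hcol _ _ _ (by decide) g2
  obtain ⟨l2, p2, q2⟩ := hcol _ _ _ (by decide) g3
  obtain ⟨l3, p3, q3⟩ := hcol _ _ _ (by decide) g4
  obtain ⟨l4, p4, q4⟩ := hcol _ _ _ (by decide) g5
  obtain ⟨l5, p5, q5⟩ := hcol _ _ _ (by decide) g6
  obtain ⟨l6, p6, q6⟩ := hcol _ _ _ (by decide) g7
  obtain ⟨κ, hκ⟩ : ∃ κ : Fin 7 → Fin 7, κ = ![l0, l1, l2, l3, l4, l5, l6] := ⟨_, rfl⟩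
  have hag : ∀ i j, i ≠ j → (f i).1 (κ (ln i j)) = (f j).1 (κ (ln i j)) := by
    intro i j hij
    rw [hκ]
    fin_cases i <;> fin_cases j <;> first
      | exact absurd rfl hij
      | exact p0 | exact p0.symm | exact q0 | exact q0.symm | exact p0.symm.trans q0
      | exact q0.symm.trans p0
      | exact p1 | exact p1.symm | exact q1 | exact q1.symm | exact p1.symm.trans q1
      | exact q1.symm.trans p1
      | exact p2 | exact p2.symm | exact q2 | exact q2.symm | exact p2.symm.trans q2
      | exact q2.symm.trans p2
      | exact p3 | exact p3.symm | exact q3 | exact q3.symm | exact p3.symm.trans q3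
      | exact q3.symm.trans p3
      | exact p4 | exact p4.symm | exact q4 | exact q4.symm | exact p4.symm.trans q4
      | exact q4.symm.trans p4
      | exact p5 | exact p5.symm | exact q5 | exact q5.symm | exact p5.symm.trans q5
      | exact q5.symm.trans p5
      | exact p6 | exact p6.symm | exact q6 | exact q6.symm | exact p6.symm.trans q6
      | exact q6.symm.trans p6
  have finj' : ∀ i j, i ≠ j → (f i).1 ≠ (f j).1 := fun i j hij h => hij (finj (Subtype.ext h))
  have hκinj : Function.Injective κ := by
    intro a b hab
    by_contra hne
    obtain ⟨i, j, k, l, hij, hik, hil, hjk, hjl, hkl, e1, e2, e3⟩ := ln_col a b hne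
    refine hthree _ (f i).2 _ (f j).2 _ (f k).2 _ (f l).2 (κ a) (finj' _ _ hij) (finj' _ _ hik)
      (finj' _ _ hil) (finj' _ _ hjk) (finj' _ _ hjl) (finj' _ _ hkl) ?_ ?_ ?_
    · have := hag i j hij; rwa [e1] at this
    · have := hag i k hik; rwa [e2] at this
    · have := hag i l hil; rwa [e3, ← hab] at this
  refine ⟨fun i => (f i).1, κ, congrArg Subtype.val f0, fun i => (f i).2, ?_, hκinj, ?_⟩
  · exact fun i j h => finj (Subtype.ext h)
  · intro i j a
    by_cases hij : i = j
    · subst hij; simp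
    rw [Mx_ln i j a hij]
    constructor
    · intro h
      exact hκinj (col_unique (h1 _ (f i).2 _ (f j).2 (finj' _ _ hij)) h (hag i j hij))
    · rintro rfl
      exact hag i j hij


/-- base five code -/
def cd (x : Fin 7 → Fin 5) : ℕ := (x 0).1 + 5 * (x 1).1 + 25 * (x 2).1 + 125 * (x 3).1 +
  625 * (x 4).1 + 3125 * (x 5).1 + 15625 * (x 6).1

theorem cd_digit (x : Fin 7 → Fin 5) (i : Fin 7) : cd x / 5^i.1 % 5 = (x i).1 := by
  have h0 := (x 0).2
  have h1 := (x 1).2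
  have h2 := (x 2).2
  have h3 := (x 3).2
  have h4 := (x 4).2
  have h5 := (x 5).2
  have h6 := (x 6).2
  unfold cd
  fin_cases i
  · show _ / 5^0 % 5 = (x 0).1
    norm_num
    omega
  · show _ / 5^1 % 5 = (x 1).1
    norm_num
    omega
  · show _ / 5^2 % 5 = (x 2).1
    norm_num
    omega
  · show _ / 5^3 % 5 = (x 3).1
    norm_num
    omega
  · show _ / 5^4 % 5 = (x 4).1
    norm_num
    omega
  · show _ / 5^5 % 5 = (x 5).1
    norm_num
    omega
  · show _ / 5^6 % 5 = (x 6).1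
    norm_num
    omega

theorem cd_lt (x : Fin 7 → Fin 5) : cd x < 78125 := by
  have h0 := (x 0).2
  have h1 := (x 1).2
  have h2 := (x 2).2
  have h3 := (x 3).2
  have h4 := (x 4).2
  have h5 := (x 5).2
  have h6 := (x 6).2
  unfold cd
  omega

theorem agc_cd (x y : Fin 7 → Fin 5) : ZS.agc 7 (cd x) (cd y) = ag x y := by
  have hd : ∀ i : Fin 7, (cd x / 5^i.1 % 5 = cd y / 5^i.1 % 5) = (x i = y i) := by
    intro i
    rw [cd_digit, cd_digit, Fin.ext_iff]
  have h0 := hd 0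
  have h1 := hd 1
  have h2 := hd 2
  have h3 := hd 3
  have h4 := hd 4
  have h5 := hd 5
  have h6 := hd 6
  change (cd x / 5^0 % 5 = cd y / 5^0 % 5) = _ at h0
  change (cd x / 5^1 % 5 = cd y / 5^1 % 5) = _ at h1
  change (cd x / 5^2 % 5 = cd y / 5^2 % 5) = _ at h2
  change (cd x / 5^3 % 5 = cd y / 5^3 % 5) = _ at h3
  change (cd x / 5^4 % 5 = cd y / 5^4 % 5) = _ at h4
  change (cd x / 5^5 % 5 = cd y / 5^5 % 5) = _ at h5
  change (cd x / 5^6 % 5 = cd y / 5^6 % 5) = _ at h6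
  have hz : ZS.agc 0 (cd x) (cd y) = 0 := rfl
  rw [ag_eq_sum, Fin.sum_univ_seven]
  simp only [ZS.agc_succ, h0, h1, h2, h3, h4, h5, h6, hz, Nat.zero_add]

theorem cd_inj : Function.Injective cd := by
  intro x y h
  funext i
  apply Fin.ext
  rw [← cd_digit, ← cd_digit, h]

theorem cd_Mx : ZS.F = List.map (fun i => cd (Mx i)) [0, 1, 2, 3, 4, 5, 6] := by decide +kernel
theorem cd_Mx0 : ZS.F0 = List.map (fun i => cd (Mx i)) [1, 2, 3, 4, 5, 6] := by decide +kernel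

theorem fb_mono {n : ℕ} {X Y : Finset (Fin n → Fin 5)} (h : X ⊆ Y) (k : Fin n) (s : Fin 5) :
    fb X k s ⊆ fb Y k s := filter_subset_filter _ h

theorem fb_sdiff_card {n : ℕ} {X Y : Finset (Fin n → Fin 5)} (h : X ⊆ Y) (k : Fin n) (s : Fin 5) :
    (fb (Y \ X) k s).card = (fb Y k s).card - (fb X k s).card := by
  have e : fb (Y \ X) k s = fb Y k s \ fb X k s := by
    ext u
    simp only [mem_fb, mem_sdiff]
    tauto
  rw [e, card_sdiff_of_subset (fb_mono h k s)]

/-- the encoding of words given by a Fano subplane -/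
theorem encode (f : Fin 7 → (Fin 7 → Fin 5)) (κ : Fin 7 → Fin 7) (hκ : Function.Injective κ)
    (hf : ∀ i j a, f i (κ a) = f j (κ a) ↔ Mx i a = Mx j a) :
    ∃ en : (Fin 7 → Fin 5) → (Fin 7 → Fin 5), (∀ u v, ag (en u) (en v) = ag u v) ∧
      (∀ i, en (f i) = Mx i) ∧ Function.Injective en ∧
      ∀ s, ∃ t, ∀ u, en u 6 = s → u (κ 6) = t := by
  choose rp hrp using Mx_rep
  have hinj : ∀ a, Function.Injective fun d => f (rp a d) (κ a) := by
    intro a d d' h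
    have := (hf _ _ _).1 h
    rwa [hrp, hrp] at this
  have hbij : ∀ a, Function.Bijective fun d => f (rp a d) (κ a) := fun a =>
    Finite.injective_iff_bijective.1 (hinj a)
  let σ : Fin 7 → (Fin 5 ≃ Fin 5) := fun a => (Equiv.ofBijective _ (hbij a)).symm
  have hκb : Function.Bijective κ := Finite.injective_iff_bijective.1 hκ
  refine ⟨fun u a => σ a (u (κ a)), ?_, ?_, ?_, ?_⟩
  · intro u v
    rw [ag_eq_sum, ag_eq_sum]
    simp only [(σ _).injective.eq_iff]
    exact Function.Bijective.sum_comp hκb (fun k => if u k = v k then 1 else 0)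
  · intro i
    funext a
    show (Equiv.ofBijective _ (hbij a)).symm _ = _
    rw [Equiv.symm_apply_eq]
    show _ = f (rp a (Mx i a)) (κ a)
    rw [hf, hrp]
  · intro u v h
    funext k
    obtain ⟨a, rfl⟩ := hκb.2 k
    exact (σ a).injective (congrFun h a)
  · intro s
    refine ⟨(σ 6).symm s, ?_⟩
    intro u hu
    rw [Equiv.eq_symm_apply]
    exact hu

theorem zero_P (P : Finset (Fin 7 → Fin 5)) (hP : P.card = 15)
    (h1 : ∀ u ∈ P, ∀ v ∈ P, u ≠ v → ag u v = 1)
    (h3 : ∀ k s, (fb P k s).card = 3) (w : Fin 7 → Fin 5) (hw : w ∈ P)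
    (U : Finset (Fin 7 → Fin 5))
    (hU : ∀ u ∈ U, ∀ v ∈ P, v ≠ w → ag u v = 0 ∨ ag u v = 2) : U.card ≤ 16 := by
  rcases U.eq_empty_or_nonempty with rfl | ⟨u0, hu0⟩
  · simp
  obtain ⟨Y, hYP, hY8, hY⟩ := exists_Y P hP h1 h3
  have hsum : ∑ v ∈ P, ag u0 v = 21 := by
    rw [sum_ag_left]; simp [h3]
  have hsumY : (∑ v ∈ Y, ag u0 v) % 2 = 0 := by
    rw [sum_ag_left, sum_nat_mod, sum_congr rfl (g := fun _ => 0)]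
    · simp
    · intro k _
      rcases hY k (u0 k) with h | h <;> rw [h]
  have heven : ∀ S ⊆ P, w ∉ S → (∑ v ∈ S, ag u0 v) % 2 = 0 := by
    intro S hS hwS
    rw [sum_nat_mod, sum_congr rfl (g := fun _ => 0)]
    · simp
    · intro v hv
      rcases hU u0 hu0 v (hS hv) (fun h => hwS (h ▸ hv)) with h | h <;> rw [h]
  have hwY : w ∉ Y := by
    intro hwY
    have h2 := heven (P \ Y) sdiff_subset (by simp [hwY])
    have h3 := sum_sdiff (f := fun v => ag u0 v) hYP
    omega
  have hwF : w ∈ P \ Y := mem_sdiff.2 ⟨hw, hwY⟩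
  obtain ⟨f, κ, f0, fF, finj, κinj, hf⟩ := fano (P \ Y) (by rw [card_sdiff_of_subset hYP, hP, hY8])
    (fun u hu v hv => h1 u (mem_sdiff.1 hu).1 v (mem_sdiff.1 hv).1)
    (fun k s => by
      rw [fb_sdiff_card hYP, h3]
      rcases hY k s with h | h <;> rw [h]
      · right; rfl
      · left; rfl) w hwF
  obtain ⟨en, hen, henf, heinj, he6⟩ := encode f κ κinj hf
  have hcinj : Function.Injective fun u => cd (en u) := cd_inj.comp heinj
  rw [← card_image_of_injective U hcinj]
  have hmem : ∀ n ∈ Y.image (fun u => cd (en u)), ∃ y ∈ Y, n = cd (en y) := by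
    intro n hn
    obtain ⟨y, hy, rfl⟩ := mem_image.1 hn
    exact ⟨y, hy, rfl⟩
  refine ZS.search (Y.image fun u => cd (en u)) ?_ ?_ ?_ ?_ ?_ _ ?_ ?_ ?_
  · intro n hn
    obtain ⟨y, -, rfl⟩ := hmem n hn
    exact cd_lt _
  · rw [card_image_of_injective Y hcinj, hY8]
  · intro n hn g hg
    obtain ⟨y, hy, rfl⟩ := hmem n hn
    rw [cd_Mx, List.mem_map] at hg
    obtain ⟨i, -, rfl⟩ := hg
    rw [← henf, agc_cd, hen]
    refine h1 _ (hYP hy) _ (mem_sdiff.1 (fF i)).1 ?_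
    rintro rfl
    exact (mem_sdiff.1 (fF i)).2 hy
  · intro n hn m hm hnm
    obtain ⟨y, hy, rfl⟩ := hmem n hn
    obtain ⟨z, hz, rfl⟩ := hmem m hm
    rw [agc_cd, hen]
    refine h1 _ (hYP hy) _ (hYP hz) ?_
    rintro rfl
    exact hnm rfl
  · intro d
    rw [filter_image, card_image_of_injective _ hcinj]
    have hdig : ∀ x : Fin 7 → Fin 5, cd x / 15625 = (x 6).1 := by
      intro x
      have h := cd_digit x 6
      have h2 := cd_lt x
      have e : 5 ^ ((6 : Fin 7) : ℕ) = 15625 := by decide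
      rw [e] at h
      omega
    simp only [hdig]
    by_cases hd : d < 5
    · obtain ⟨t, ht⟩ := he6 ⟨d, hd⟩
      have : (Y.filter fun a => (en a 6).1 = d) ⊆ fb Y (κ 6) t := by
        intro u hu
        rw [mem_filter] at hu
        exact mem_fb.2 ⟨hu.1, ht u (Fin.ext hu.2)⟩
      refine (card_le_card this).trans ?_
      rcases hY (κ 6) t with h | h <;> omega
    · rw [filter_false_of_mem]
      · simp
      · intro u _ h
        have := (en u 6).2
        omega
  · intro n hn
    obtain ⟨y, -, rfl⟩ := mem_image.1 hn
    exact cd_lt _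
  · intro n hn g hg
    obtain ⟨u, hu, rfl⟩ := mem_image.1 hn
    rw [cd_Mx0, List.mem_map] at hg
    obtain ⟨i, hi, rfl⟩ := hg
    rw [← henf, agc_cd, hen]
    refine hU u hu _ (mem_sdiff.1 (fF i)).1 ?_
    rw [← f0]
    intro h
    have := finj h
    subst this
    exact absurd hi (by decide)
  · intro n hn m hm
    obtain ⟨u, hu, rfl⟩ := mem_image.1 hn
    obtain ⟨y, hy, rfl⟩ := hmem m hm
    rw [agc_cd, hen]
    exact hU u hu y (hYP hy) (fun h => hwY (h ▸ hy))


/-- edge indicator: agreement exactly one -/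
def ed (u v : Fin 8 → Fin 5) : ℤ := if ag u v = 1 then 1 else 0

theorem ed_comm (u v : Fin 8 → Fin 5) : ed u v = ed v u := by simp only [ed, ag_comm u v]
theorem ed_nonneg (u v : Fin 8 → Fin 5) : 0 ≤ ed u v := by unfold ed; split_ifs <;> norm_num

def Ed (C : Finset (Fin 8 → Fin 5)) (j : Fin 8) (s : Fin 5) : ℤ :=
  ∑ u ∈ fb C j s, ∑ v ∈ fb C j s, ed u v
def Hd (C : Finset (Fin 8 → Fin 5)) (j : Fin 8) (s : Fin 5) : ℤ := 15 - (fb C j s).card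
def hd (C : Finset (Fin 8 → Fin 5)) (j : Fin 8) (s : Fin 5) (i : Fin 7) (t : Fin 5) : ℤ :=
  3 - (fb (fb C j s) (j.succAbove i) t).card

theorem Ed_nonneg (C : Finset (Fin 8 → Fin 5)) (j : Fin 8) (s : Fin 5) : 0 ≤ Ed C j s :=
  sum_nonneg fun _ _ => sum_nonneg fun _ _ => ed_nonneg _ _

theorem sum_hd (C : Finset (Fin 8 → Fin 5)) (j : Fin 8) (s : Fin 5) (i : Fin 7) :
    ∑ t, hd C j s i t = Hd C j s := by
  have : ∑ t, ((fb (fb C j s) (j.succAbove i) t).card : ℤ) = (fb C j s).card := by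
    exact_mod_cast sum_fb (fb C j s) (j.succAbove i)
  simp only [hd, Hd, sum_sub_distrib, this]
  simp

theorem fb_self (C : Finset (Fin 8 → Fin 5)) (j : Fin 8) (s t : Fin 5) :
    fb (fb C j s) j t = if t = s then fb C j s else ∅ := by
  ext u
  split_ifs with h
  · subst h; simp only [mem_fb]; tauto
  · simp only [mem_fb, notMem_empty, iff_false]
    rintro ⟨⟨-, h1⟩, h2⟩
    exact h (h2.symm.trans h1)

section
variable (C : Finset (Fin 8 → Fin 5))

theorem E_eq (h2 : ∀ u ∈ C, ∀ v ∈ C, u ≠ v → ag u v ≤ 2) (j : Fin 8) (s : Fin 5) :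
    Ed C j s = Hd C j s ^ 2 + 6 * Hd C j s - ∑ i, ∑ t, hd C j s i t ^ 2 := by
  have hsq := sum_sq (fb C j s)
  rw [Fin.sum_univ_succAbove _ j] at hsq
  have hjj : ∑ t, ((fb (fb C j s) j t).card : ℤ)^2 = ((fb C j s).card : ℤ)^2 := by
    rw [sum_eq_single s]
    · rw [fb_self, if_pos rfl]
    · intro t _ ht; rw [fb_self, if_neg ht]; simp
    · simp
  rw [hjj] at hsq
  have he : ∀ u ∈ fb C j s, ∀ v ∈ fb C j s, ed u v = 2 - ag u v + if u = v then 6 else 0 := by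
    intro u hu v hv
    rw [mem_fb] at hu hv
    by_cases huv : u = v
    · subst huv; simp [ed, ag_self]
    · have h := h2 u hu.1 v hv.1 huv
      have hpos : 1 ≤ ag u v := card_pos.2 ⟨j, by simp [hu.2, hv.2]⟩
      rw [if_neg huv, ed]
      have : ag u v = 1 ∨ ag u v = 2 := by omega
      rcases this with h | h <;> rw [h] <;> norm_num
  have hE : Ed C j s = 2 * ((fb C j s).card : ℤ)^2 - ∑ u ∈ fb C j s, ∑ v ∈ fb C j s, (ag u v : ℤ)
      + 6 * (fb C j s).card := by
    rw [Ed, sum_congr rfl fun u hu => sum_congr rfl fun v hv => he u hu v hv]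
    simp only [sum_add_distrib, sum_sub_distrib, sum_const, nsmul_eq_mul]
    have h6 : (∑ x ∈ fb C j s, ∑ y ∈ fb C j s, if x = y then (6:ℤ) else 0)
        = ∑ x ∈ fb C j s, (6:ℤ) :=
      sum_congr rfl (fun u hu => by rw [sum_ite_eq, if_pos hu])
    rw [h6]
    simp only [sum_const, nsmul_eq_mul]
    ring
  have hlin : ∀ i, ∑ t, ((fb (fb C j s) (j.succAbove i) t).card : ℤ) = (fb C j s).card := by
    intro i; exact_mod_cast sum_fb (fb C j s) (j.succAbove i)
  have hh : ∀ i, ∑ t, hd C j s i t ^ 2 = 45 - 6 * (fb C j s).card +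
      ∑ t, ((fb (fb C j s) (j.succAbove i) t).card : ℤ)^2 := by
    intro i
    rw [← hlin i, mul_sum]
    simp only [hd]
    rw [show (45:ℤ) = ∑ t : Fin 5, 9 by simp, ← sum_sub_distrib, ← sum_add_distrib]
    exact sum_congr rfl fun t _ => by ring
  rw [hE, ← hsq]
  simp only [hh, sum_add_distrib, sum_sub_distrib, sum_const, card_univ, Fintype.card_fin, Hd,
    nsmul_eq_mul]
  push_cast
  ring

theorem sq_ge (C : Finset (Fin 8 → Fin 5)) (j : Fin 8) (s : Fin 5) (i : Fin 7) :
    Hd C j s ≤ ∑ t, hd C j s i t ^ 2 ∧ 3 * Hd C j s - 10 ≤ ∑ t, hd C j s i t ^ 2 ∧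
    Hd C j s ^ 2 ≤ 5 * ∑ t, hd C j s i t ^ 2 := by
  refine ⟨?_, ?_, ?_⟩
  · rw [← sum_hd C j s i]
    exact sum_le_sum fun t _ => by
      generalize hd C j s i t = x
      rcases lt_or_ge 0 x with h | h <;> nlinarith
  · rw [← sum_hd C j s i, mul_sum, show (10:ℤ) = ∑ t : Fin 5, 2 by simp, ← sum_sub_distrib]
    exact sum_le_sum fun t _ => by
      generalize hd C j s i t = x
      rcases le_or_gt x 1 with h | h <;> nlinarith
  · rw [← sum_hd C j s i]
    have := sq_sum_le_card_mul_sum_sq (s := (univ : Finset (Fin 5))) (f := hd C j s i)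
    simpa using this

theorem E_bounds (h2 : ∀ u ∈ C, ∀ v ∈ C, u ≠ v → ag u v ≤ 2) (j : Fin 8) (s : Fin 5) :
    0 ≤ Hd C j s ∧ Ed C j s ≤ Hd C j s ^ 2 - Hd C j s ∧
    Ed C j s ≤ Hd C j s ^ 2 - 15 * Hd C j s + 70 := by
  have hE := E_eq C h2 j s
  have h0 := Ed_nonneg C j s
  have a1 : 7 * Hd C j s ≤ ∑ i : Fin 7, ∑ t, hd C j s i t ^ 2 := by
    have := sum_le_sum (s := (univ : Finset (Fin 7))) fun i _ => (sq_ge C j s i).1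
    simpa using this
  have a2 : 7 * (3 * Hd C j s - 10) ≤ ∑ i : Fin 7, ∑ t, hd C j s i t ^ 2 := by
    have := sum_le_sum (s := (univ : Finset (Fin 7))) fun i _ => (sq_ge C j s i).2.1
    rw [sum_const, card_univ, Fintype.card_fin, nsmul_eq_mul] at this
    exact_mod_cast this
  have a3 : 7 * (Hd C j s ^ 2) ≤ 5 * ∑ i : Fin 7, ∑ t, hd C j s i t ^ 2 := by
    have := sum_le_sum (s := (univ : Finset (Fin 7))) fun i _ => (sq_ge C j s i).2.2
    rw [← mul_sum] at this
    simpa using this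
  refine ⟨?_, by linarith, by linarith⟩
  by_contra hneg
  push Not at hneg
  nlinarith [sq_nonneg (Hd C j s)]

theorem block15 (h2 : ∀ u ∈ C, ∀ v ∈ C, u ≠ v → ag u v ≤ 2) (j : Fin 8) (s : Fin 5)
    (hH : Hd C j s = 0) (i : Fin 7) (t : Fin 5) :
    (fb (fb C j s) (j.succAbove i) t).card = 3 := by
  have hE := E_eq C h2 j s
  have h0 := Ed_nonneg C j s
  rw [hH] at hE
  have hs : ∑ i, ∑ t, hd C j s i t ^ 2 ≤ 0 := by linarith
  have h1 : ∑ t, hd C j s i t ^ 2 ≤ 0 := le_trans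
    (single_le_sum (f := fun i => ∑ t, hd C j s i t ^ 2)
      (fun i _ => sum_nonneg fun t _ => sq_nonneg _) (mem_univ i)) hs
  have h3 : hd C j s i t ^ 2 ≤ 0 := le_trans
    (single_le_sum (f := fun t => hd C j s i t ^ 2) (fun t _ => sq_nonneg _) (mem_univ t)) h1
  have h4 : hd C j s i t = 0 := by
    have := sq_nonneg (hd C j s i t)
    exact pow_eq_zero_iff (two_ne_zero) |>.1 (le_antisymm h3 this)
  rw [hd] at h4
  omega

theorem sum_ag_block (j : Fin 8) (s : Fin 5) (u : Fin 8 → Fin 5) :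
    ∑ v ∈ fb C j s, ag u v = (if u j = s then (fb C j s).card else 0) +
      ∑ i, (fb (fb C j s) (j.succAbove i) (u (j.succAbove i))).card := by
  rw [sum_ag_left, Fin.sum_univ_succAbove _ j, fb_self]
  split_ifs <;> simp

/-- edges from `u` to a block -/
def dg (j : Fin 8) (s : Fin 5) (u : Fin 8 → Fin 5) : ℤ := ∑ v ∈ fb C j s, ed u v

theorem dg_nonneg (j : Fin 8) (s : Fin 5) (u : Fin 8 → Fin 5) : 0 ≤ dg C j s u :=
  sum_nonneg fun _ _ => ed_nonneg _ _

theorem dg_zero (h2 : ∀ u ∈ C, ∀ v ∈ C, u ≠ v → ag u v ≤ 2) (j : Fin 8) (s : Fin 5)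
    (u : Fin 8 → Fin 5) (hu : u ∈ C) (hus : u j ≠ s) (h0 : dg C j s u = 0) :
    ∀ v ∈ fb C j s, ag u v = 0 ∨ ag u v = 2 := by
  intro v hv
  have h := (sum_eq_zero_iff_of_nonneg (fun v _ => ed_nonneg u v)).1 h0 v hv
  rw [mem_fb] at hv
  have hne : u ≠ v := by rintro rfl; exact hus hv.2
  have h3 := h2 u hu v hv.1 hne
  have h1 : ag u v ≠ 1 := by
    intro h1
    rw [ed, if_pos h1] at h
    exact one_ne_zero h
  omega

theorem dg15 (h2 : ∀ u ∈ C, ∀ v ∈ C, u ≠ v → ag u v ≤ 2) (j : Fin 8) (s : Fin 5)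
    (hH : Hd C j s = 0) (u : Fin 8 → Fin 5) (hu : u ∈ C) (hus : u j ≠ s) : 1 ≤ dg C j s u := by
  by_contra hlt
  have h0 : dg C j s u = 0 := by
    have := dg_nonneg C j s u
    omega
  have hz := dg_zero C h2 j s u hu hus h0
  have hsum := sum_ag_block C j s u
  rw [if_neg hus, sum_congr rfl (fun i _ => block15 C h2 j s hH i _)] at hsum
  have heven : (∑ v ∈ fb C j s, ag u v) % 2 = 0 := by
    rw [sum_nat_mod, sum_congr rfl (g := fun _ => 0)]
    · simp
    · intro v hv
      rcases hz v hv with h | h <;> rw [h]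
  rw [hsum] at heven
  simp at heven

theorem ag_succAbove (j : Fin 8) (u v : Fin 8 → Fin 5) :
    ag u v = (if u j = v j then 1 else 0) +
      ag (fun i => u (j.succAbove i)) (fun i => v (j.succAbove i)) := by
  rw [ag_eq_sum, ag_eq_sum, Fin.sum_univ_succAbove _ j]

theorem hd14 (h2 : ∀ u ∈ C, ∀ v ∈ C, u ≠ v → ag u v ≤ 2) (j : Fin 8) (s : Fin 5)
    (hH : Hd C j s = 1) :
    Ed C j s = 0 ∧ ∃ w : Fin 7 → Fin 5, ∀ i t,
      (fb (fb C j s) (j.succAbove i) t).card = 3 - if w i = t then 1 else 0 := by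
  have hE := E_eq C h2 j s
  have h0 := Ed_nonneg C j s
  have hge : ∀ i, 1 ≤ ∑ t, hd C j s i t ^ 2 := fun i => by
    have := (sq_ge C j s i).1
    rwa [hH] at this
  rw [hH] at hE
  have hs : ∑ i, (∑ t, hd C j s i t ^ 2 - 1) ≤ 0 := by
    rw [sum_sub_distrib]; simp; linarith
  have hs0 : 7 ≤ ∑ i : Fin 7, ∑ t, hd C j s i t ^ 2 := by
    have := sum_le_sum (s := (univ : Finset (Fin 7))) fun i _ => hge i
    simpa using this
  refine ⟨by linarith, ?_⟩
  have hone : ∀ i, ∑ t, hd C j s i t ^ 2 = 1 := by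
    intro i
    have := single_le_sum (f := fun i => ∑ t, hd C j s i t ^ 2 - 1)
      (fun i _ => by have := hge i; show 0 ≤ _ - (1:ℤ); linarith) (mem_univ i)
    have h1 := hge i
    linarith
  have h01 : ∀ i t, hd C j s i t = 0 ∨ hd C j s i t = 1 := by
    intro i t
    have hn : ∀ x : ℤ, 0 ≤ x ^ 2 - x := by
      intro x
      rcases lt_or_ge 0 x with h | h <;> nlinarith
    have h1 : ∑ t, (hd C j s i t ^ 2 - hd C j s i t) = 0 := by
      rw [sum_sub_distrib, sum_hd, hone, hH]; rfl
    have h3 := (sum_eq_zero_iff_of_nonneg (fun t _ => hn _)).1 h1 t (mem_univ t)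
    have h4 : hd C j s i t * (hd C j s i t - 1) = 0 := by linarith
    rcases mul_eq_zero.1 h4 with h | h
    · exact Or.inl h
    · exact Or.inr (by linarith)
  have hw : ∀ i, ∃ w, hd C j s i w = 1 := by
    intro i
    by_contra hcon
    push Not at hcon
    have h1 := sum_hd C j s i
    rw [sum_congr rfl (g := fun _ => (0:ℤ)) (fun t _ => (h01 i t).resolve_right (hcon t)), hH] at h1
    simp at h1
  choose w hw using hw
  refine ⟨w, fun i t => ?_⟩
  have hx : hd C j s i t = if w i = t then 1 else 0 := by
    split_ifs with h
    · rw [← h]; exact hw i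
    · by_contra hne
      have h1 := (h01 i t).resolve_left hne
      have h3 := sum_hd C j s i
      have h4 : ∑ x ∈ {w i, t}, hd C j s i x ≤ ∑ x, hd C j s i x :=
        sum_le_sum_of_subset_of_nonneg (subset_univ _) fun x _ _ => by
          rcases h01 i x with h | h <;> rw [h] <;> norm_num
      rw [sum_pair h, hw, h1, h3, hH] at h4
      norm_num at h4
  rw [hd] at hx
  split_ifs at hx ⊢ <;> omega

theorem dg14 (h2 : ∀ u ∈ C, ∀ v ∈ C, u ≠ v → ag u v ≤ 2) (j : Fin 8) (s : Fin 5)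
    (hH : Hd C j s = 1) :
    (C.filter fun u => u j ≠ s ∧ dg C j s u = 0).card ≤ 16 := by
  obtain ⟨hE0, w, hw⟩ := hd14 C h2 j s hH
  let r : (Fin 8 → Fin 5) → (Fin 7 → Fin 5) := fun u i => u (j.succAbove i)
  have hag : ∀ u v, ag u v = (if u j = v j then 1 else 0) + ag (r u) (r v) := ag_succAbove j
  have hrinj : Set.InjOn r C := by
    intro u hu v hv h
    by_contra hne
    have h3 := h2 u hu v hv hne
    rw [hag, h, ag_self] at h3
    omega
  have hm : (fb C j s).card = 14 := by rw [Hd] at hH; omega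
  have hBC : fb C j s ⊆ C := filter_subset _ _
  have hpair : ∀ u ∈ fb C j s, ∀ v ∈ fb C j s, u ≠ v → ag u v = 2 := by
    intro u hu v hv huv
    have h1 := (sum_eq_zero_iff_of_nonneg (fun u _ => sum_nonneg fun v _ => ed_nonneg u v)).1 hE0 u hu
    have h3 := (sum_eq_zero_iff_of_nonneg (fun v _ => ed_nonneg u v)).1 h1 v hv
    have h4 := h2 u (hBC hu) v (hBC hv) huv
    have h5 : 1 ≤ ag u v := by
      rw [hag, (mem_fb.1 hu).2, (mem_fb.1 hv).2]; simp
    have h6 : ag u v ≠ 1 := by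
      intro h6; rw [ed, if_pos h6] at h3; exact one_ne_zero h3
    omega
  have hwB : ∀ v ∈ fb C j s, ag w (r v) = 1 := by
    intro v hv
    have h1 := sum_ag_block C j s v
    rw [if_pos (mem_fb.1 hv).2, hm, ← add_sum_erase _ _ hv, ag_self,
      sum_congr rfl (g := fun _ => 2) (fun u hu => hpair v hv u (mem_erase.1 hu).2
        (Ne.symm (mem_erase.1 hu).1)), sum_const, card_erase_of_mem hv, hm] at h1
    have h3 : ∑ i, (fb (fb C j s) (j.succAbove i) (v (j.succAbove i))).card + ag w (r v) = 21 := by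
      rw [ag_eq_sum, ← sum_add_distrib, sum_congr rfl (g := fun _ => 3)]
      · simp
      · intro i _
        rw [hw]
        show (3 - if w i = v (j.succAbove i) then 1 else 0) + (if w i = v (j.succAbove i) then 1 else 0) = 3
        split_ifs <;> rfl
    simp only [smul_eq_mul] at h1
    omega
  have hwn : w ∉ (fb C j s).image r := by
    intro h
    obtain ⟨v, hv, hvw⟩ := mem_image.1 h
    have := hwB v hv
    rw [hvw, ag_self] at this
    omega
  have hfbi : ∀ i t, fb ((fb C j s).image r) i t = (fb (fb C j s) (j.succAbove i) t).image r := by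
    intro i t
    rw [fb, filter_image]; rfl
  let Z := C.filter fun u => u j ≠ s ∧ dg C j s u = 0
  have hZC : Z ⊆ C := filter_subset _ _
  show Z.card ≤ 16
  rw [← card_image_of_injOn (hrinj.mono hZC)]
  refine zero_P (insert w ((fb C j s).image r)) ?_ ?_ ?_ w (mem_insert_self _ _) _ ?_
  · rw [card_insert_of_notMem hwn, card_image_of_injOn (hrinj.mono hBC), hm]
  · intro u hu v hv huv
    rw [mem_insert] at hu hv
    rcases hu with rfl | hu
    · rcases hv with rfl | hv
      · exact absurd rfl huv
      · obtain ⟨v, hv', rfl⟩ := mem_image.1 hv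
        exact hwB v hv'
    · obtain ⟨u, hu', rfl⟩ := mem_image.1 hu
      rcases hv with rfl | hv
      · rw [ag_comm]; exact hwB u hu'
      · obtain ⟨v, hv', rfl⟩ := mem_image.1 hv
        have h1 := hpair u hu' v hv' (fun h => huv (by rw [h]))
        rw [hag, (mem_fb.1 hu').2, (mem_fb.1 hv').2, if_pos rfl] at h1
        omega
  · intro i t
    have e : fb (insert w ((fb C j s).image r)) i t =
        if w i = t then insert w ((fb (fb C j s) (j.succAbove i) t).image r)
        else (fb (fb C j s) (j.succAbove i) t).image r := by
      rw [← hfbi, fb, filter_insert]; rfl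
    have hc : ((fb (fb C j s) (j.succAbove i) t).image r).card
        = (fb (fb C j s) (j.succAbove i) t).card :=
      card_image_of_injOn (hrinj.mono (fun x hx => hBC ((mem_fb.1 hx).1)))
    have hwt := hw i t
    rw [e]
    split_ifs with h
    · rw [card_insert_of_notMem, hc, hwt, if_pos h]
      intro hm
      exact hwn (image_subset_image (filter_subset _ _) hm)
    · rw [hc, hwt, if_neg h]
  · intro x hx y hy hyw
    obtain ⟨u, hu, rfl⟩ := mem_image.1 hx
    obtain ⟨v, hv, rfl⟩ := mem_image.1 ((mem_insert.1 hy).resolve_left hyw)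
    obtain ⟨huC, hus, hu0⟩ := mem_filter.1 hu
    have h1 := dg_zero C h2 j s u huC hus hu0 v hv
    rw [hag, if_neg (by rw [(mem_fb.1 hv).2]; exact hus), zero_add] at h1
    exact h1

end


def g2 (a : ℕ) : ℕ := if a ≤ 5 then a*a-a else a*a+70-15*a
def bb (a : ℕ) : ℕ := min (g2 a) (a*a/2)
def rr (a : ℕ) : ℕ := if a < 2 then 0 else 15-a
def lw (R a : ℕ) : ℕ := if a = 0 then 51+R else if a = 1 then 36+(R-16) else 0
def zz (a : ℕ) : ℕ := if a = 0 then 1 else 0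

theorem num_main : ∀ a b c d : Fin 10, a.1+b.1+c.1+d.1 ≤ 9 →
    (7 * (g2 a.1 + g2 b.1 + g2 c.1 + g2 d.1 + g2 (9-(a.1+b.1+c.1+d.1))) <
    lw (rr a.1 + rr b.1 + rr c.1 + rr d.1 + rr (9-(a.1+b.1+c.1+d.1))) a.1 +
    lw (rr a.1 + rr b.1 + rr c.1 + rr d.1 + rr (9-(a.1+b.1+c.1+d.1))) b.1 +
    lw (rr a.1 + rr b.1 + rr c.1 + rr d.1 + rr (9-(a.1+b.1+c.1+d.1))) c.1 +
    lw (rr a.1 + rr b.1 + rr c.1 + rr d.1 + rr (9-(a.1+b.1+c.1+d.1))) d.1 +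
    lw (rr a.1 + rr b.1 + rr c.1 + rr d.1 + rr (9-(a.1+b.1+c.1+d.1))) (9-(a.1+b.1+c.1+d.1))) ∨
    3 ≤ zz a.1 + zz b.1 + zz c.1 + zz d.1 + zz (9-(a.1+b.1+c.1+d.1)) := by decide +kernel

theorem num_bb : ∀ a b c d : Fin 10, a.1+b.1+c.1+d.1 ≤ 9 →
    bb a.1 + bb b.1 + bb c.1 + bb d.1 + bb (9-(a.1+b.1+c.1+d.1)) ≤ 20 := by decide +kernel

theorem num_main' (a : Fin 5 → ℕ) (h : ∑ s, a s = 9) :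
    (7 * ∑ s, g2 (a s) < ∑ s, lw (∑ s', rr (a s')) (a s)) ∨ 3 ≤ ∑ s, zz (a s) := by
  rw [Fin.sum_univ_five] at h
  simp only [Fin.sum_univ_five]
  have := num_main ⟨a 0, by omega⟩ ⟨a 1, by omega⟩ ⟨a 2, by omega⟩ ⟨a 3, by omega⟩
    (show a 0 + a 1 + a 2 + a 3 ≤ 9 by omega)
  have e : 9 - (a 0 + a 1 + a 2 + a 3) = a 4 := by omega
  simp only [e] at this
  exact this

theorem num_bb' (a : Fin 5 → ℕ) (h : ∑ s, a s = 9) : ∑ s, bb (a s) ≤ 20 := by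
  rw [Fin.sum_univ_five] at h
  simp only [Fin.sum_univ_five]
  have := num_bb ⟨a 0, by omega⟩ ⟨a 1, by omega⟩ ⟨a 2, by omega⟩ ⟨a 3, by omega⟩
    (show a 0 + a 1 + a 2 + a 3 ≤ 9 by omega)
  have e : 9 - (a 0 + a 1 + a 2 + a 3) = a 4 := by omega
  simp only [e] at this
  exact this

section
variable (C : Finset (Fin 8 → Fin 5))

/-- edges between two blocks -/
def dd (j : Fin 8) (s' s : Fin 5) : ℤ := ∑ u ∈ fb C j s', dg C j s u

theorem dd_comm (j : Fin 8) (s' s : Fin 5) : dd C j s' s = dd C j s s' := by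
  unfold dd dg
  rw [sum_comm]
  exact sum_congr rfl fun u _ => sum_congr rfl fun v _ => ed_comm _ _

theorem dd_nonneg (j : Fin 8) (s' s : Fin 5) : 0 ≤ dd C j s' s :=
  sum_nonneg fun _ _ => dg_nonneg _ _ _ _

theorem sum_fiber (j : Fin 8) (f : (Fin 8 → Fin 5) → ℤ) :
    ∑ s, ∑ u ∈ fb C j s, f u = ∑ u ∈ C, f u :=
  sum_fiberwise_of_maps_to (g := fun u => u j) (t := univ) (fun _ _ => mem_univ _) f

def Tot : ℤ := ∑ u ∈ C, ∑ v ∈ C, ed u v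

theorem Tot_eq (j : Fin 8) : Tot C = ∑ s', ∑ s, dd C j s' s := by
  have h1 : ∀ s', ∑ s, dd C j s' s = ∑ u ∈ fb C j s', ∑ v ∈ C, ed u v := by
    intro s'
    unfold dd
    rw [sum_comm]
    exact sum_congr rfl fun u _ => sum_fiber C j (fun v => ed u v)
  simp only [h1]
  exact (sum_fiber C j (fun u => ∑ v ∈ C, ed u v)).symm

theorem sum_Ed : ∑ j, ∑ s, Ed C j s = Tot C := by
  have h1 : ∀ j, ∑ s, Ed C j s = ∑ u ∈ C, ∑ v ∈ C, if v j = u j then ed u v else 0 := by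
    intro j
    rw [← sum_fiber C j]
    refine sum_congr rfl fun s _ => sum_congr rfl fun u hu => ?_
    rw [← sum_filter, (mem_fb.1 hu).2]
    rfl
  simp only [h1]
  rw [sum_comm]
  refine sum_congr rfl fun u _ => ?_
  rw [sum_comm]
  refine sum_congr rfl fun v _ => ?_
  have h3 : ∑ j, (if v j = u j then ed u v else 0) = ed u v * ag u v := by
    rw [ag_eq_sum]
    push_cast
    rw [mul_sum]
    refine sum_congr rfl fun j _ => ?_
    simp only [eq_comm (a := u j)]
    split_ifs <;> simp
  rw [h3, ed]
  split_ifs with h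
  · rw [h]; norm_num
  · simp

theorem X_eq (j : Fin 8) : Tot C - ∑ s, Ed C j s = ∑ s, ∑ s' ∈ univ.erase s, dd C j s' s := by
  rw [Tot_eq C j, sum_comm, ← sum_sub_distrib]
  refine sum_congr rfl fun s _ => ?_
  rw [← add_sum_erase univ (fun s' => dd C j s' s) (mem_univ s)]
  show Ed C j s + _ - Ed C j s = _
  ring

theorem dd_low (h2 : ∀ u ∈ C, ∀ v ∈ C, u ≠ v → ag u v ≤ 2) (j : Fin 8) (s : Fin 5)
    (T : Finset (Fin 5)) (hT : s ∉ T) :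
    (Hd C j s = 0 → ∑ s' ∈ T, (15 - Hd C j s') ≤ ∑ s' ∈ T, dd C j s' s) ∧
    (Hd C j s = 1 → ∑ s' ∈ T, (15 - Hd C j s') - 16 ≤ ∑ s' ∈ T, dd C j s' s) := by
  have hcard : ∀ s', 15 - Hd C j s' = ∑ u ∈ fb C j s', (1:ℤ) := by
    intro s'; simp [Hd]
  have hne : ∀ s' ∈ T, ∀ u ∈ fb C j s', u j ≠ s := by
    intro s' hs' u hu h
    rw [(mem_fb.1 hu).2] at h
    exact hT (h ▸ hs')
  constructor
  · intro hH
    refine sum_le_sum fun s' hs' => ?_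
    rw [hcard]
    exact sum_le_sum fun u hu => dg15 C h2 j s hH u (mem_fb.1 hu).1 (hne s' hs' u hu)
  · intro hH
    have h14 := dg14 C h2 j s hH
    have h1 : ∑ s' ∈ T, (15 - Hd C j s') ≤ ∑ s' ∈ T, (dd C j s' s +
        ∑ u ∈ fb C j s', if u j ≠ s ∧ dg C j s u = 0 then (1:ℤ) else 0) := by
      refine sum_le_sum fun s' hs' => ?_
      rw [hcard, dd, ← sum_add_distrib]
      refine sum_le_sum fun u hu => ?_
      have h3 := hne s' hs' u hu
      have h4 := dg_nonneg C j s u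
      by_cases h0 : dg C j s u = 0
      · rw [if_pos ⟨h3, h0⟩]; linarith
      · rw [if_neg (fun h => h0 h.2)]; omega
    rw [sum_add_distrib] at h1
    have h5 : ∑ s' ∈ T, ∑ u ∈ fb C j s', (if u j ≠ s ∧ dg C j s u = 0 then (1:ℤ) else 0) ≤ 16 := by
      refine le_trans (sum_le_sum_of_subset_of_nonneg (subset_univ T) fun s' _ _ =>
        sum_nonneg fun u _ => by split_ifs <;> norm_num) ?_
      rw [sum_fiber C j (fun u => if u j ≠ s ∧ dg C j s u = 0 then (1:ℤ) else 0)]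
      rw [← sum_filter]
      simp only [sum_const, nsmul_eq_mul, mul_one]
      exact_mod_cast h14
    linarith

theorem X_low (h2 : ∀ u ∈ C, ∀ v ∈ C, u ≠ v → ag u v ≤ 2) (j : Fin 8) (a : Fin 5 → ℕ)
    (ha : ∀ s, Hd C j s = a s) (hsum : ∑ s, a s = 9) :
    ((∑ s, lw (∑ s', rr (a s')) (a s) : ℕ) : ℤ) ≤ Tot C - ∑ s, Ed C j s := by
  have ha9 : ∀ s, a s ≤ 9 := fun s => by
    rw [← hsum]; exact single_le_sum (f := a) (fun _ _ => Nat.zero_le _) (mem_univ s)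
  let sm := (univ : Finset (Fin 5)).filter fun s => a s < 2
  let bg := (univ : Finset (Fin 5)).filter fun s => ¬ a s < 2
  have hsplit : ∀ f : Fin 5 → ℤ, ∑ s, f s = ∑ s ∈ sm, f s + ∑ s ∈ bg, f s := fun f =>
    (sum_filter_add_sum_filter_not univ (fun s => a s < 2) f).symm
  have hR : ((∑ s', rr (a s') : ℕ) : ℤ) = ∑ s ∈ bg, (15 - Hd C j s) := by
    push_cast
    rw [hsplit, sum_eq_zero (s := sm)]
    · rw [zero_add]
      refine sum_congr rfl fun s hs => ?_
      have h := (mem_filter.1 hs).2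
      have h9 := ha9 s
      rw [rr, if_neg h, ha]
      omega
    · intro s hs
      rw [rr, if_pos (mem_filter.1 hs).2]; rfl
  rw [X_eq, hsplit (fun s => ∑ s' ∈ univ.erase s, dd C j s' s)]
  have hbig : ∑ s ∈ sm, ∑ s' ∈ bg, dd C j s' s ≤ ∑ s ∈ bg, ∑ s' ∈ univ.erase s, dd C j s' s := by
    rw [sum_comm]
    refine sum_le_sum fun s hs => ?_
    rw [sum_congr rfl fun s' _ => dd_comm C j s s']
    refine sum_le_sum_of_subset_of_nonneg ?_ fun _ _ _ => dd_nonneg _ _ _ _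
    intro s' hs'
    rw [mem_erase]
    refine ⟨?_, mem_univ _⟩
    rintro rfl
    exact (mem_filter.1 hs).2 (mem_filter.1 hs').2
  refine le_trans ?_ (add_le_add_right hbig _)
  rw [← sum_add_distrib]
  push_cast
  rw [hsplit, sum_eq_zero (s := bg), add_zero]
  · refine sum_le_sum fun s hs => ?_
    have hs2 := (mem_filter.1 hs).2
    have hnb : s ∉ bg := fun h => (mem_filter.1 h).2 hs2
    have l1 := dd_low C h2 j s (univ.erase s) (notMem_erase _ _)
    have l2 := dd_low C h2 j s bg hnb
    rw [← hR] at l2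
    have hall : ∑ s' ∈ univ.erase s, (15 - Hd C j s') = 51 + Hd C j s := by
      have h1 : ∑ s', (15 - Hd C j s') = 66 := by
        rw [sum_sub_distrib, sum_congr rfl fun s _ => ha s]
        have : ∑ s, (a s : ℤ) = 9 := by exact_mod_cast hsum
        rw [this]; simp
      rw [← add_sum_erase univ _ (mem_univ s)] at h1
      linarith
    rw [hall] at l1
    have hn : 0 ≤ ∑ s' ∈ bg, dd C j s' s := sum_nonneg fun _ _ => dd_nonneg _ _ _ _
    rw [ha] at l1 l2
    have : a s = 0 ∨ a s = 1 := by omega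
    unfold lw
    generalize (∑ s', rr (a s')) = R at *
    rcases this with h | h
    · have e1 := l1.1 (by rw [h]; rfl)
      have e2 := l2.1 (by rw [h]; rfl)
      rw [if_pos h]
      rw [h] at e1
      push_cast at *
      linarith
    · have e1 := l1.2 (by rw [h]; rfl)
      have e2 := l2.2 (by rw [h]; rfl)
      rw [h] at e1
      rw [h, if_neg one_ne_zero, if_pos rfl]
      push_cast at *
      omega
  · intro s hs
    have h := (mem_filter.1 hs).2
    unfold lw
    rw [if_neg (by omega), if_neg (by omega)]; rfl

theorem exists_a (hC : C.card = 66) (h2 : ∀ u ∈ C, ∀ v ∈ C, u ≠ v → ag u v ≤ 2) (j : Fin 8) :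
    ∃ a : Fin 5 → ℕ, (∀ s, Hd C j s = a s) ∧ ∑ s, a s = 9 ∧ ∀ s, Ed C j s ≤ g2 (a s) := by
  have h0 : ∀ s, 0 ≤ Hd C j s := fun s => (E_bounds C h2 j s).1
  have ha : ∀ s, Hd C j s = ((Hd C j s).toNat : ℤ) := fun s => (Int.toNat_of_nonneg (h0 s)).symm
  have hsum : ∑ s, (Hd C j s).toNat = 9 := by
    have h1 : ∑ s, Hd C j s = 9 := by
      have : ∑ s, ((fb C j s).card : ℤ) = 66 := by
        have h := sum_fb C j
        rw [hC] at h
        exact_mod_cast h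
      simp only [Hd, sum_sub_distrib, this]; simp
    have h3 : ((∑ s, (Hd C j s).toNat : ℕ) : ℤ) = 9 := by
      rw [Nat.cast_sum, ← h1]
      exact sum_congr rfl fun s _ => (ha s).symm
    exact_mod_cast h3
  refine ⟨fun s => (Hd C j s).toNat, ha, hsum, fun s => ?_⟩
  have hb := (E_bounds C h2 j s).2
  have h9 : (Hd C j s).toNat ≤ 9 := by
    rw [← hsum]
    exact single_le_sum (f := fun s => (Hd C j s).toNat) (fun _ _ => Nat.zero_le _) (mem_univ s)
  have hs := ha s
  change Ed C j s ≤ ((g2 (Hd C j s).toNat : ℕ) : ℤ)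
  generalize (Hd C j s).toNat = x at hs h9 ⊢
  rw [hs] at hb
  obtain ⟨b1, b2⟩ := hb
  clear hs ha hsum h0
  generalize Ed C j s = e at *
  interval_cases x <;> simp [g2] at b1 b2 ⊢ <;> omega

theorem E_special (h2 : ∀ u ∈ C, ∀ v ∈ C, u ≠ v → ag u v ≤ 2) (j k : Fin 8) (hjk : j ≠ k)
    (hT : ((univ : Finset (Fin 5)).filter fun s => Hd C j s ≠ 0).card ≤ 2) (t : Fin 5) :
    2 * Ed C k t ≤ Hd C k t ^ 2 := by
  obtain ⟨i', hi'⟩ := Fin.exists_succAbove_eq hjk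
  obtain ⟨i, hi⟩ := Fin.exists_succAbove_eq (Ne.symm hjk)
  have hz : ∀ s, Hd C j s = 0 → hd C k t i' s = 0 := by
    intro s hs
    have h3 := block15 C h2 j s hs i t
    rw [hi] at h3
    have e : fb (fb C k t) j s = fb (fb C j s) k t := by
      ext u; simp only [mem_fb]; tauto
    rw [hd, hi', e, h3]; rfl
  have hE := E_eq C h2 k t
  rw [Fin.sum_univ_succAbove _ i'] at hE
  have a1 : 6 * Hd C k t ≤ ∑ i : Fin 6, ∑ s, hd C k t (i'.succAbove i) s ^ 2 := by
    have := sum_le_sum (s := (univ : Finset (Fin 6))) fun i _ => (sq_ge C k t (i'.succAbove i)).1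
    simpa using this
  have a2 : Hd C k t ^ 2 ≤ 2 * ∑ s, hd C k t i' s ^ 2 := by
    have e1 : ∑ s ∈ univ.filter (fun s => Hd C j s ≠ 0), hd C k t i' s = Hd C k t := by
      rw [← sum_hd C k t i']
      refine sum_subset (subset_univ _) fun s _ hs => hz s ?_
      simpa using hs
    have e2 := sq_sum_le_card_mul_sum_sq (s := univ.filter (fun s => Hd C j s ≠ 0))
      (f := hd C k t i')
    rw [e1] at e2
    have e3 : ∑ s ∈ univ.filter (fun s => Hd C j s ≠ 0), hd C k t i' s ^ 2
        ≤ ∑ s, hd C k t i' s ^ 2 :=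
      sum_le_sum_of_subset_of_nonneg (subset_univ _) fun _ _ _ => sq_nonneg _
    have e4 : 0 ≤ ∑ s ∈ univ.filter (fun s => Hd C j s ≠ 0), hd C k t i' s ^ 2 :=
      sum_nonneg fun _ _ => sq_nonneg _
    have hT' : ((univ.filter (fun s => Hd C j s ≠ 0)).card : ℤ) ≤ 2 := by exact_mod_cast hT
    nlinarith
  linarith

theorem no66 (hC : C.card = 66) (h2 : ∀ u ∈ C, ∀ v ∈ C, u ≠ v → ag u v ≤ 2) : False := by
  obtain ⟨j, -, hj⟩ := exists_max_image (univ : Finset (Fin 8)) (fun j => ∑ s, Ed C j s)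
    ⟨0, mem_univ _⟩
  obtain ⟨a, ha, hsum, hg⟩ := exists_a C hC h2 j
  have hlow := X_low C h2 j a ha hsum
  have hT := sum_Ed C
  rw [Fin.sum_univ_succAbove _ j] at hT
  rcases num_main' a hsum with h | h
  · have h7 : ∑ i : Fin 7, ∑ s, Ed C (j.succAbove i) s ≤ 7 * ∑ s, Ed C j s := by
      have := sum_le_sum (s := (univ : Finset (Fin 7))) fun i _ => hj (j.succAbove i) (mem_univ _)
      rw [sum_const, card_univ, Fintype.card_fin, nsmul_eq_mul] at this
      exact_mod_cast this
    have hE : ∑ s, Ed C j s ≤ ((∑ s, g2 (a s) : ℕ) : ℤ) := by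
      push_cast
      exact sum_le_sum fun s _ => hg s
    have h' : (7 * ((∑ s, g2 (a s) : ℕ) : ℤ)) < ((∑ s, lw (∑ s', rr (a s')) (a s) : ℕ) : ℤ) := by
      exact_mod_cast h
    linarith
  · have hz : ∑ s, zz (a s) = ((univ : Finset (Fin 5)).filter fun s => Hd C j s = 0).card := by
      rw [card_filter]
      refine sum_congr rfl fun s _ => ?_
      rw [zz, ha]
      simp only [Nat.cast_eq_zero]
    have hc := card_filter_add_card_filter_not (s := (univ : Finset (Fin 5)))
      (fun s => Hd C j s = 0)
    rw [card_univ, Fintype.card_fin] at hc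
    have hT2 : ((univ : Finset (Fin 5)).filter fun s => Hd C j s ≠ 0).card ≤ 2 := by
      simp only [ne_eq]
      omega
    have h20 : ∀ i, ∑ s, Ed C (j.succAbove i) s ≤ 20 := by
      intro i
      obtain ⟨b, hb, hbs, hbg⟩ := exists_a C hC h2 (j.succAbove i)
      have hs := num_bb' b hbs
      have hle : ∑ s, Ed C (j.succAbove i) s ≤ ((∑ s, bb (b s) : ℕ) : ℤ) := by
        push_cast
        refine sum_le_sum fun s _ => ?_
        have h1 := E_special C h2 j (j.succAbove i) (Fin.succAbove_ne j i).symm hT2 s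
        have h3 := hbg s
        rw [hb] at h1
        have h4 : Ed C (j.succAbove i) s ≤ ((b s * b s / 2 : ℕ) : ℤ) := by
          push_cast
          rw [Int.le_ediv_iff_mul_le (by norm_num)]
          linarith [sq (b s : ℤ)]
        unfold bb
        push_cast at *
        exact le_min h3 h4
      have hs' : ((∑ s, bb (b s) : ℕ) : ℤ) ≤ 20 := by exact_mod_cast hs
      linarith
    have h140 : ∑ i : Fin 7, ∑ s, Ed C (j.succAbove i) s ≤ 140 := by
      have := sum_le_sum (s := (univ : Finset (Fin 7))) fun i _ => h20 i
      simpa using this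
    have hlw : 51 * ∑ s, zz (a s) ≤ ∑ s, lw (∑ s', rr (a s')) (a s) := by
      rw [mul_sum]
      refine sum_le_sum fun s _ => ?_
      unfold zz lw
      split_ifs <;> omega
    have : (153 : ℤ) ≤ ((∑ s, lw (∑ s', rr (a s')) (a s) : ℕ) : ℤ) := by
      have : 153 ≤ ∑ s, lw (∑ s', rr (a s')) (a s) := by omega
      exact_mod_cast this
    linarith

end

theorem ag_dist {n : ℕ} (u v : Fin n → Fin 5) : ag u v + hammingDist u v = n := by
  have := card_filter_add_card_filter_not (s := (univ : Finset (Fin n))) (fun k => u k = v k)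
  rw [card_univ, Fintype.card_fin] at this
  exact this

theorem bound8 (C : Finset (Fin 8 → Fin 5))
    (h : ∀ u ∈ C, ∀ v ∈ C, u ≠ v → 6 ≤ hammingDist u v) : C.card ≤ 65 := by
  by_contra hlt
  obtain ⟨D, hD, hDc⟩ := exists_subset_card_eq (show 66 ≤ C.card by omega)
  refine no66 D hDc fun u hu v hv huv => ?_
  have h1 := h u (hD hu) v (hD hv) huv
  have h3 := ag_dist u v
  omega

theorem shorten (n N : ℕ) (hn : ∀ C : Finset (Fin n → Fin 5),
    (∀ u ∈ C, ∀ v ∈ C, u ≠ v → 6 ≤ hammingDist u v) → C.card ≤ N)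
    (C : Finset (Fin (n+1) → Fin 5))
    (h : ∀ u ∈ C, ∀ v ∈ C, u ≠ v → 6 ≤ hammingDist u v) : C.card ≤ 5 * N := by
  rw [← sum_fb C 0]
  have hb : ∀ s, (fb C 0 s).card ≤ N := by
    intro s
    have hinj : Set.InjOn (fun (u : Fin (n+1) → Fin 5) (i : Fin n) => u i.succ) (fb C 0 s) := by
      intro u hu v hv huv
      have hu := mem_fb.1 (mem_coe.1 hu)
      have hv := mem_fb.1 (mem_coe.1 hv)
      funext i
      refine Fin.cases ?_ (fun i => congrFun huv i) i
      rw [hu.2, hv.2]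
    rw [← card_image_of_injOn hinj]
    refine hn _ ?_
    intro x hx y hy hxy
    obtain ⟨u, hu, rfl⟩ := mem_image.1 hx
    obtain ⟨v, hv, rfl⟩ := mem_image.1 hy
    rw [mem_fb] at hu hv
    have h1 := h u hu.1 v hv.1 (fun e => hxy (by rw [e]))
    have h3 := ag_dist u v
    have h4 := ag_dist (fun i : Fin n => u i.succ) (fun i => v i.succ)
    have h5 : ag u v = 1 + ag (fun i : Fin n => u i.succ) (fun i => v i.succ) := by
      rw [ag_eq_sum, ag_eq_sum, Fin.sum_univ_succ, hu.2, hv.2, if_pos rfl]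
    omega
  have := sum_le_sum (s := (univ : Finset (Fin 5))) fun s _ => hb s
  simpa using this

end CodeB

theorem A5_9_10_11_d6_bounds :
    (∀ C : Finset (Fin 9 → Fin 5),
      (∀ u ∈ C, ∀ v ∈ C, u ≠ v → 6 ≤ hammingDist u v) → C.card ≤ 325)
    ∧ (∀ C : Finset (Fin 10 → Fin 5),
      (∀ u ∈ C, ∀ v ∈ C, u ≠ v → 6 ≤ hammingDist u v) → C.card ≤ 1625)
    ∧ (∀ C : Finset (Fin 11 → Fin 5),
      (∀ u ∈ C, ∀ v ∈ C, u ≠ v → 6 ≤ hammingDist u v) → C.card ≤ 8125) :=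
  have h9 := CodeB.shorten 8 65 CodeB.bound8
  have h10 := CodeB.shorten 9 325 h9
  ⟨h9, h10, CodeB.shorten 10 1625 h10⟩
end

section
/- A_3(16,11) ≤ 29: every code C ⊆ (Fin 3)^{16} with minimum Hamming distance at least 11 has at most 29 elements. -/
/-- Column-wise double counting of distances from a word. -/
lemma dist_sum (w : Fin 16 → Fin 3) (D : Finset (Fin 16 → Fin 3)) :
    ∑ v ∈ D, hammingDist w v = ∑ j, (D.filter (fun v => w j ≠ v j)).card := by
  simp only [hammingDist, Finset.card_filter]
  rw [Finset.sum_comm]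

lemma col_split (D : Finset (Fin 16 → Fin 3)) (j : Fin 16) (a : Fin 3) :
    (D.filter (fun v => v j = a)).card + (D.filter (fun v => a ≠ v j)).card = D.card := by
  have h := Finset.card_filter_add_card_filter_not (s := D) (fun v => v j = a)
  simpa only [ne_eq, eq_comm] using h

lemma col_total (D : Finset (Fin 16 → Fin 3)) (j : Fin 16) :
    ∑ a : Fin 3, (D.filter (fun v => v j = a)).card = D.card :=
  (Finset.card_eq_sum_card_fiberwise (f := fun v : Fin 16 → Fin 3 => v j)
    (t := Finset.univ) (fun _ _ => by simp)).symm

lemma col_pairs (D : Finset (Fin 16 → Fin 3)) (j : Fin 16) :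
    ∑ u ∈ D, (D.filter (fun v => u j ≠ v j)).card
      = ∑ a : Fin 3, (D.filter (fun v => v j = a)).card *
          (D.filter (fun v => a ≠ v j)).card := by
  rw [← Finset.sum_fiberwise D (fun u => u j)]
  refine Finset.sum_congr rfl fun a _ => ?_
  rw [Finset.card_eq_sum_ones, Finset.sum_mul]
  refine Finset.sum_congr rfl fun u hu => ?_
  rw [(Finset.mem_filter.1 hu).2, one_mul]

lemma arith (m B : ℕ) (h : (m = 10 ∧ B = 66) ∨ (m = 11 ∧ B = 80)) (x y z x' y' z' : ℕ)
    (hs : x + y + z = m) (hx : x + x' = m) (hy : y + y' = m) (hz : z + z' = m) :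
    x * x' + y * y' + z * z' ≤ B := by
  obtain rfl : x' = y + z := by omega
  obtain rfl : y' = x + z := by omega
  obtain rfl : z' = x + y := by omega
  rcases h with ⟨rfl, rfl⟩ | ⟨rfl, rfl⟩
  · obtain rfl : z = 10 - x - y := by omega
    have : x ≤ 10 := by omega
    have : y ≤ 10 := by omega
    interval_cases x <;> interval_cases y <;> omega
  · obtain rfl : z = 11 - x - y := by omega
    have : x ≤ 11 := by omega
    have : y ≤ 11 := by omega
    interval_cases x <;> interval_cases y <;> omega

/-- Plotkin-type bound for a subcode that is constant in one coordinate. -/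
lemma plotkin (D : Finset (Fin 16 → Fin 3)) (B : ℕ)
    (h : (D.card = 10 ∧ B = 66) ∨ (D.card = 11 ∧ B = 80)) (i : Fin 16) (a : Fin 3)
    (hD : ∀ v ∈ D, v i = a) :
    ∑ u ∈ D, ∑ v ∈ D, hammingDist u v ≤ 15 * B := by
  simp only [dist_sum]
  rw [Finset.sum_comm, ← Finset.add_sum_erase _ _ (Finset.mem_univ i)]
  have h0 : ∑ u ∈ D, (D.filter (fun v => u i ≠ v i)).card = 0 := by
    refine Finset.sum_eq_zero fun u hu => ?_
    rw [Finset.card_eq_zero, Finset.filter_eq_empty_iff]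
    intro v hv
    simp [hD u hu, hD v hv]
  rw [h0, zero_add]
  have hb : ∀ j ∈ Finset.univ.erase i,
      ∑ u ∈ D, (D.filter (fun v => u j ≠ v j)).card ≤ B := by
    intro j _
    rw [col_pairs, Fin.sum_univ_three]
    have ht := col_total D j
    rw [Fin.sum_univ_three] at ht
    exact arith D.card B h _ _ _ _ _ _ ht (col_split D j 0) (col_split D j 1) (col_split D j 2)
  have := Finset.sum_le_card_nsmul _ _ _ hb
  simpa using this

lemma lower_row (D : Finset (Fin 16 → Fin 3))
    (hD : ∀ u ∈ D, ∀ v ∈ D, u ≠ v → 11 ≤ hammingDist u v) (u) (hu : u ∈ D) :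
    (D.card - 1) * 11 ≤ ∑ v ∈ D, hammingDist u v := by
  rw [← Finset.add_sum_erase _ _ hu, hammingDist_self, zero_add,
    ← Finset.card_erase_of_mem hu]
  have key := Finset.card_nsmul_le_sum (D.erase u) (fun v => hammingDist u v) 11 fun v hv =>
    hD u hu v (Finset.mem_of_mem_erase hv) (Finset.ne_of_mem_erase hv).symm
  simpa only [smul_eq_mul] using key

lemma sub_card_le (D : Finset (Fin 16 → Fin 3))
    (hD : ∀ u ∈ D, ∀ v ∈ D, u ≠ v → 11 ≤ hammingDist u v) (i : Fin 16) (a : Fin 3)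
    (hc : ∀ v ∈ D, v i = a) : D.card ≤ 10 := by
  by_contra! h
  obtain ⟨E, hE, hcard⟩ := Finset.exists_subset_card_eq (show 11 ≤ D.card by omega)
  have h1 := plotkin E 80 (Or.inr ⟨hcard, rfl⟩) i a (fun v hv => hc v (hE hv))
  have h2 := Finset.card_nsmul_le_sum E _ _
    (lower_row E (fun u hu v hv => hD u (hE hu) v (hE hv)))
  simp only [hcard, smul_eq_mul] at h2
  omega

lemma sub_equidist (D : Finset (Fin 16 → Fin 3))
    (hD : ∀ u ∈ D, ∀ v ∈ D, u ≠ v → 11 ≤ hammingDist u v) (i : Fin 16) (a : Fin 3)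
    (hc : ∀ v ∈ D, v i = a) (hcard : D.card = 10) :
    ∀ u ∈ D, ∀ v ∈ D, u ≠ v → hammingDist u v = 11 := by
  intro u hu v hv huv
  have h1 := plotkin D 66 (Or.inl ⟨hcard, rfl⟩) i a hc
  have hlow := lower_row D hD
  rw [hcard] at hlow
  rw [← Finset.add_sum_erase _ _ hu] at h1
  have h2 := Finset.card_nsmul_le_sum (D.erase u) (fun u => ∑ v ∈ D, hammingDist u v) _
    (fun x hx => hlow x (Finset.mem_of_mem_erase hx))
  rw [Finset.card_erase_of_mem hu, hcard, smul_eq_mul] at h2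
  have h3 : ∑ v ∈ D, hammingDist u v ≤ 99 := by omega
  rw [← Finset.add_sum_erase _ _ hu, hammingDist_self, zero_add,
    ← Finset.add_sum_erase _ _ (Finset.mem_erase.2 ⟨huv.symm, hv⟩)] at h3
  have h4 := Finset.card_nsmul_le_sum ((D.erase u).erase v) (fun v => hammingDist u v) 11
    (fun x hx => by
      have hx' := Finset.mem_of_mem_erase hx
      exact hD u hu x (Finset.mem_of_mem_erase hx') (Finset.ne_of_mem_erase hx').symm)
  rw [Finset.card_erase_of_mem (Finset.mem_erase.2 ⟨huv.symm, hv⟩),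
    Finset.card_erase_of_mem hu, hcard, smul_eq_mul] at h4
  have := hD u hu v hv huv
  omega

/-- `A_3(16,11) ≤ 29`. -/
theorem A3_16_11_le_29 (C : Finset (Fin 16 → Fin 3))
    (hC : ∀ u ∈ C, ∀ v ∈ C, u ≠ v → 11 ≤ hammingDist u v) :
    C.card ≤ 29 := by
  by_contra! h
  obtain ⟨E, hE, hcard⟩ := Finset.exists_subset_card_eq (show 30 ≤ C.card by omega)
  have hD : ∀ u ∈ E, ∀ v ∈ E, u ≠ v → 11 ≤ hammingDist u v :=
    fun u hu v hv => hC u (hE hu) v (hE hv)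
  have hsub : ∀ i a, ∀ u ∈ E.filter (fun v => v i = a), ∀ v ∈ E.filter (fun v => v i = a),
      u ≠ v → 11 ≤ hammingDist u v := fun i a u hu v hv =>
    hD u (Finset.mem_filter.1 hu).1 v (Finset.mem_filter.1 hv).1
  have hle : ∀ i a, (E.filter (fun v => v i = a)).card ≤ 10 := fun i a =>
    sub_card_le _ (hsub i a) i a (fun v hv => (Finset.mem_filter.1 hv).2)
  have heq : ∀ i a, (E.filter (fun v => v i = a)).card = 10 := by
    intro i a
    have ht := col_total E i
    rw [Fin.sum_univ_three, hcard] at ht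
    have h0 := hle i 0
    have h1 := hle i 1
    have h2 := hle i 2
    fin_cases a <;> simp only [Fin.zero_eta, Fin.mk_one, Fin.reduceFinMk] <;> omega
  have hd : ∀ u ∈ E, ∀ v ∈ E, u ≠ v → hammingDist u v % 5 = 1 := by
    intro u hu v hv huv
    by_cases hex : ∃ i, u i = v i
    · obtain ⟨i, hi⟩ := hex
      rw [sub_equidist _ (hsub i (v i)) i (v i) (fun v hv => (Finset.mem_filter.1 hv).2)
        (heq i (v i)) u (Finset.mem_filter.2 ⟨hu, hi⟩) v (Finset.mem_filter.2 ⟨hv, rfl⟩) huv]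
    · push Not at hex
      have : hammingDist u v = 16 := by
        simp [hammingDist, hex]
      rw [this]
  obtain ⟨w, hw⟩ : E.Nonempty := Finset.card_pos.1 (by omega)
  have hs := dist_sum w E
  have hcol : ∀ j, (E.filter (fun v => w j ≠ v j)).card = 20 := by
    intro j
    have h1 := col_split E j (w j)
    rw [heq, hcard] at h1
    omega
  simp only [hcol] at hs
  rw [← Finset.add_sum_erase _ _ hw, hammingDist_self, zero_add] at hs
  have hm := Finset.sum_nat_mod (E.erase w) 5 (fun v => hammingDist w v)
  rw [hs, Finset.sum_congr rfl (fun v hv => hd w hw v (Finset.mem_of_mem_erase hv)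
    (Finset.ne_of_mem_erase hv).symm)] at hm
  simp [Finset.card_erase_of_mem hw, hcard] at hm
end

section
/- Let q ≥ 2, n, d be positive integers with qd = (q−1)n. Then every code C ⊆ (Fin q)^n with |C| = qn − 1 and minimum Hamming distance at least d can be extended to a code of cardinality qn with minimum Hamming distance at least d; that is, there exists a word u ∈ (Fin q)^n with u ∉ C such that d_H(u,w) ≥ d for all w ∈ C. -/
/-- integer-valued equality indicator -/
def eqInd {α : Type} [DecidableEq α] (x y : α) : ℤ := if x = y then 1 else 0

/-- the number of coordinates in which two words agree -/
def agr {q n : ℕ} (v w : Fin n → Fin q) : ℤ := ∑ i, eqInd (v i) (w i)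

lemma eqInd_self {α : Type} [DecidableEq α] (x : α) : eqInd x x = 1 := by simp [eqInd]

lemma eqInd_comm {α : Type} [DecidableEq α] (x y : α) : eqInd x y = eqInd y x := by
  simp [eqInd, eq_comm]

lemma eqInd_sq {α : Type} [DecidableEq α] (x y : α) : eqInd x y * eqInd x y = eqInd x y := by
  unfold eqInd; split_ifs <;> simp

lemma sum_eqInd {q : ℕ} (x : Fin q) : ∑ b, eqInd x b = 1 := by
  simp [eqInd]

lemma sum_eqInd_mul {q : ℕ} (x y : Fin q) : ∑ b, eqInd x b * eqInd y b = eqInd x y := by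
  simp only [eqInd, ite_mul, one_mul, zero_mul, Finset.sum_ite_eq, Finset.mem_univ, if_true]
  simp [eq_comm]

lemma agr_self {q n : ℕ} (v : Fin n → Fin q) : agr v v = n := by
  simp [agr, eqInd]

lemma agr_add_dist {q n : ℕ} (v w : Fin n → Fin q) : agr v w + hammingDist v w = n := by
  have h : (hammingDist v w : ℤ) = ∑ i, (1 - eqInd (v i) (w i)) := by
    unfold hammingDist
    rw [Finset.card_filter]
    push_cast
    refine Finset.sum_congr rfl fun i _ => ?_
    unfold eqInd
    by_cases h : v i = w i <;> simp [h]
  rw [h, agr, ← Finset.sum_add_distrib]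
  simp

lemma sum_N_sq {q n : ℕ} (B : Finset (Fin n → Fin q)) (j : Fin n) :
    ∑ b, (∑ w ∈ B, eqInd (w j) b) ^ 2 = ∑ v ∈ B, ∑ w ∈ B, eqInd (v j) (w j) := by
  simp_rw [sq, Finset.sum_mul_sum]
  rw [Finset.sum_comm]
  refine Finset.sum_congr rfl fun v _ => ?_
  rw [Finset.sum_comm]
  refine Finset.sum_congr rfl fun w _ => ?_
  exact sum_eqInd_mul _ _

lemma sum_N {q n : ℕ} (B : Finset (Fin n → Fin q)) (j : Fin n) :
    ∑ b, (∑ w ∈ B, eqInd (w j) b) = (B.card : ℤ) := by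
  rw [Finset.sum_comm]
  simp [sum_eqInd]

lemma block_bound {q n : ℕ} (m : ℤ) (B : Finset (Fin n → Fin q))
    (hB : ∀ v ∈ B, ∀ w ∈ B, v ≠ w → agr v w ≤ m) :
    ∑ j : Fin n, ∑ b : Fin q, ((q : ℤ) * (∑ w ∈ B, eqInd (w j) b) - B.card) ^ 2
      ≤ (q : ℤ) ^ 2 * (B.card * n + B.card * (B.card - 1) * m) - n * q * (B.card : ℤ) ^ 2 := by
  have h1 : ∀ j : Fin n, ∑ b : Fin q, ((q : ℤ) * (∑ w ∈ B, eqInd (w j) b) - B.card) ^ 2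
      = (q : ℤ) ^ 2 * (∑ v ∈ B, ∑ w ∈ B, eqInd (v j) (w j)) - q * (B.card : ℤ) ^ 2 := by
    intro j
    have : ∀ b : Fin q, ((q : ℤ) * (∑ w ∈ B, eqInd (w j) b) - B.card) ^ 2
      = (q : ℤ) ^ 2 * (∑ w ∈ B, eqInd (w j) b) ^ 2
        - 2 * q * B.card * (∑ w ∈ B, eqInd (w j) b) + (B.card : ℤ) ^ 2 := by
      intro b; ring
    simp_rw [this]
    rw [Finset.sum_add_distrib, Finset.sum_sub_distrib, ← Finset.mul_sum, ← Finset.mul_sum,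
      sum_N_sq, sum_N]
    simp
    ring
  simp_rw [h1]
  rw [Finset.sum_sub_distrib, ← Finset.mul_sum]
  have h2 : ∑ j : Fin n, ∑ v ∈ B, ∑ w ∈ B, eqInd (v j) (w j) = ∑ v ∈ B, ∑ w ∈ B, agr v w := by
    rw [Finset.sum_comm]
    refine Finset.sum_congr rfl fun v _ => ?_
    rw [Finset.sum_comm]
    rfl
  have h3 : ∑ v ∈ B, ∑ w ∈ B, agr v w ≤ B.card * n + B.card * (B.card - 1) * m := by
    have : ∀ v ∈ B, ∑ w ∈ B, agr v w ≤ n + (B.card - 1) * m := by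
      intro v hv
      rw [← Finset.add_sum_erase B _ hv, agr_self]
      have := Finset.sum_le_card_nsmul (B.erase v) (fun w => agr v w) m (by
        intro w hw
        rw [Finset.mem_erase] at hw
        exact hB v hv w hw.2 (Ne.symm hw.1))
      rw [nsmul_eq_mul, Finset.cast_card_erase_of_mem hv] at this
      linarith
    have := Finset.sum_le_card_nsmul B _ _ this
    rw [nsmul_eq_mul] at this
    linarith
  rw [h2]
  have := mul_le_mul_of_nonneg_left h3 (sq_nonneg (q : ℤ))
  simp
  linarith

lemma block_filter {q n : ℕ} (hq : 2 ≤ q) (hn : 0 < n) (m : ℤ) (hm : (n : ℤ) = q * m)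
    (C : Finset (Fin n → Fin q))
    (hC : ∀ v ∈ C, ∀ w ∈ C, v ≠ w → agr v w ≤ m) (i : Fin n) (a : Fin q) :
    (∑ w ∈ C, eqInd (w i) a ≤ n) ∧ ((∑ w ∈ C, eqInd (w i) a = n) →
      ∀ j, j ≠ i → ∀ b, ∑ w ∈ C, eqInd (w i) a * eqInd (w j) b = m) := by
  set B := C.filter (fun w => w i = a) with hBdef
  have hs : ∑ w ∈ C, eqInd (w i) a = (B.card : ℤ) := by
    simp [hBdef, eqInd]
  have hP : ∀ j b, ∑ w ∈ C, eqInd (w i) a * eqInd (w j) b = ∑ w ∈ B, eqInd (w j) b := by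
    intro j b
    rw [hBdef, Finset.sum_filter]
    refine Finset.sum_congr rfl fun w _ => ?_
    by_cases h : w i = a <;> simp [eqInd, h]
  have hb := block_bound m B (fun v hv w hw => hC v (Finset.mem_filter.1 hv).1 w
    (Finset.mem_filter.1 hw).1)
  rw [hs]
  simp_rw [hP]
  set s : ℤ := (B.card : ℤ) with hsdef
  have hs0 : 0 ≤ s := by positivity
  have hi : ∑ b : Fin q, ((q : ℤ) * (∑ w ∈ B, eqInd (w i) b) - s) ^ 2
      = (q : ℤ) ^ 2 * s ^ 2 - q * s ^ 2 := by
    have : ∀ b, ∑ w ∈ B, eqInd (w i) b = s * eqInd a b := by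
      intro b
      rw [hsdef, ← nsmul_eq_mul, ← Finset.sum_const]
      refine Finset.sum_congr rfl fun w hw => ?_
      rw [(Finset.mem_filter.1 hw).2]
    simp_rw [this]
    have h2 : ∀ b, ((q : ℤ) * (s * eqInd a b) - s) ^ 2
        = ((q : ℤ) ^ 2 * s ^ 2 - 2 * q * s ^ 2) * eqInd a b + s ^ 2 := by
      intro b
      have := eqInd_sq a b
      linear_combination (q : ℤ) ^ 2 * s ^ 2 * this
    simp_rw [h2]
    rw [Finset.sum_add_distrib, ← Finset.mul_sum, sum_eqInd]
    simp
    ring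
  rw [← Finset.add_sum_erase _ _ (Finset.mem_univ i), hi] at hb
  have hb' : ∑ j ∈ Finset.univ.erase i, ∑ b : Fin q,
      ((q : ℤ) * (∑ w ∈ B, eqInd (w j) b) - s) ^ 2 ≤ (q : ℤ) * (q - 1) * (s * (n - s)) := by
    have : (q : ℤ) ^ 2 * (s * n + s * (s - 1) * m) - n * q * s ^ 2
        = (q : ℤ) * (q - 1) * (s * (n - s)) + ((q : ℤ) ^ 2 * s ^ 2 - q * s ^ 2) := by
      linear_combination (- (q : ℤ) * s * (s - 1)) * hm
    linarith
  have hq' : (2 : ℤ) ≤ q := by exact_mod_cast hq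
  have hqq : 0 < (q : ℤ) * (q - 1) := mul_pos (by linarith only [hq']) (by linarith only [hq'])
  constructor
  · by_contra hlt
    push Not at hlt
    have h0 : 0 ≤ ∑ j ∈ Finset.univ.erase i, ∑ b : Fin q,
      ((q : ℤ) * (∑ w ∈ B, eqInd (w j) b) - s) ^ 2 :=
      Finset.sum_nonneg fun _ _ => Finset.sum_nonneg fun _ _ => sq_nonneg _
    have hn' : (0 : ℤ) < n := by exact_mod_cast hn
    have h1 : s * (n - s) < 0 :=
      mul_neg_of_pos_of_neg (by linarith only [hlt, hn']) (by linarith only [hlt])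
    have h2 := mul_neg_of_pos_of_neg hqq h1
    exact absurd (h0.trans hb') (not_le.2 h2)
  · intro hsn j hj b
    rw [hsn, sub_self, mul_zero, mul_zero] at hb'
    have h0 := le_antisymm hb' (Finset.sum_nonneg fun _ _ => Finset.sum_nonneg fun _ _ => sq_nonneg _)
    rw [Finset.sum_eq_zero_iff_of_nonneg (fun _ _ => Finset.sum_nonneg fun _ _ => sq_nonneg _)] at h0
    have h1 := h0 j (Finset.mem_erase.2 ⟨hj, Finset.mem_univ _⟩)
    rw [Finset.sum_eq_zero_iff_of_nonneg (fun _ _ => sq_nonneg _)] at h1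
    have h2 := h1 b (Finset.mem_univ _)
    have h3 := pow_eq_zero_iff (two_ne_zero) |>.1 h2
    have h4 : (q : ℤ) * (∑ w ∈ B, eqInd (w j) b) = q * m := by linarith
    exact mul_left_cancel₀ (by omega : (q : ℤ) ≠ 0) h4

lemma exists_deficient {q n : ℕ} (c : Fin q → ℤ) (hc : ∀ a, c a ≤ n)
    (hsum : ∑ a, c a = q * n - 1) : ∃ u, ∀ a, c a = n - eqInd a u := by
  have h1 : ∑ a, ((n : ℤ) - c a) = 1 := by
    rw [Finset.sum_sub_distrib, hsum]; simp
  have : ∃ u, 0 < (n : ℤ) - c u := by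
    by_contra! h
    have := Finset.sum_nonpos (s := Finset.univ) (fun a _ => h a)
    omega
  obtain ⟨u, hu⟩ := this
  refine ⟨u, fun a => ?_⟩
  rw [← Finset.add_sum_erase _ _ (Finset.mem_univ u)] at h1
  have h2 : ∀ a ∈ Finset.univ.erase u, 0 ≤ (n : ℤ) - c a := fun a _ => by
    have := hc a; omega
  have h3 := Finset.sum_nonneg h2
  by_cases h : a = u
  · subst h
    rw [eqInd_self]; omega
  · have h4 : ∑ a ∈ Finset.univ.erase u, ((n : ℤ) - c a) = 0 := by omega
    rw [Finset.sum_eq_zero_iff_of_nonneg h2] at h4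
    have := h4 a (Finset.mem_erase.2 ⟨h, Finset.mem_univ _⟩)
    simp [eqInd, h]; omega

/-- If `qd = (q-1)n`, then every `(n,d)_q`-code of cardinality `qn - 1` extends to
an `(n,d)_q`-code of cardinality `qn`: there is a word `u ∉ C` with Hamming
distance at least `d` to every word of `C`. -/
theorem extend_symmetric_net_code (q n d : ℕ) (hq : 2 ≤ q) (hn : 0 < n) (hd : 0 < d)
    (hqd : q * d = (q - 1) * n)
    (C : Finset (Fin n → Fin q)) (hcard : C.card = q * n - 1)
    (hC : ∀ u ∈ C, ∀ v ∈ C, u ≠ v → d ≤ hammingDist u v) :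
    ∃ u : Fin n → Fin q, u ∉ C ∧ ∀ w ∈ C, d ≤ hammingDist u w := by
  have hqd' : (q : ℤ) * d = (q - 1) * n := by
    have := congrArg (Nat.cast : ℕ → ℤ) hqd
    push_cast [Nat.cast_sub (show 1 ≤ q by omega)] at this
    exact this
  have hcard' : (C.card : ℤ) = q * n - 1 := by
    rw [hcard, Nat.cast_sub (Nat.mul_pos (by omega) hn)]
    push_cast; ring
  obtain ⟨m, hmdef⟩ : ∃ m : ℤ, m = n - d := ⟨_, rfl⟩
  have hm : (n : ℤ) = q * m := by rw [hmdef]; linarith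
  have hA : ∀ v ∈ C, ∀ w ∈ C, v ≠ w → agr v w ≤ m := by
    intro v hv w hw hne
    have h1 := hC v hv w hw hne
    have h2 := agr_add_dist v w
    omega
  have hblock := block_filter hq hn m hm C hA
  have hex : ∀ i, ∃ u, ∀ a, ∑ w ∈ C, eqInd (w i) a = n - eqInd a u := fun i =>
    exists_deficient _ (fun a => (hblock i a).1) (by rw [sum_N, hcard'])
  choose u hu using hex
  have hP1 : ∀ i j a b, i ≠ j → a ≠ u i → ∑ w ∈ C, eqInd (w i) a * eqInd (w j) b = m := by
    intro i j a b hij ha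
    refine (hblock i a).2 ?_ j (Ne.symm hij) b
    rw [hu]; simp [eqInd, ha]
  have hP2 : ∀ i j a b, i ≠ j → b ≠ u j → ∑ w ∈ C, eqInd (w i) a * eqInd (w j) b = m := by
    intro i j a b hij hb
    rw [← hP1 j i b a (Ne.symm hij) hb]
    exact Finset.sum_congr rfl fun w _ => mul_comm _ _
  have hP3 : ∀ i j, i ≠ j → ∑ w ∈ C, eqInd (w i) (u i) * eqInd (w j) (u j) = m - 1 := by
    intro i j hij
    have h1 : ∑ b, ∑ w ∈ C, eqInd (w i) (u i) * eqInd (w j) b = n - 1 := by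
      rw [Finset.sum_comm]
      simp_rw [← Finset.mul_sum, sum_eqInd, mul_one]
      rw [hu, eqInd_self]
    rw [← Finset.add_sum_erase _ _ (Finset.mem_univ (u j)),
      Finset.sum_congr rfl (fun b hb => hP2 i j (u i) b hij (Finset.ne_of_mem_erase hb)),
      Finset.sum_const, nsmul_eq_mul, Finset.cast_card_erase_of_mem (Finset.mem_univ _)] at h1
    simp at h1
    linarith
  have hP : ∀ (x : Fin n → Fin q) i j, ∑ w ∈ C, eqInd (w i) (x i) * eqInd (w j) (x j)
      = m - eqInd (x i) (u i) * eqInd (x j) (u j) + eqInd i j * (n - m) := by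
    intro x i j
    by_cases hij : i = j
    · subst hij
      simp_rw [eqInd_sq]
      rw [hu, eqInd_self]; ring
    · have h0 : eqInd i j = 0 := by simp [eqInd, hij]
      rw [h0]
      by_cases h1 : x i = u i
      · by_cases h2 : x j = u j
        · rw [h1, h2, hP3 i j hij, eqInd_self, eqInd_self]; ring
        · rw [hP2 i j _ _ hij h2]; simp [eqInd, h2]
      · rw [hP1 i j _ _ hij h1]; simp [eqInd, h1]
  have hS1 : ∀ x : Fin n → Fin q, ∑ w ∈ C, agr w x = n * n - agr x u := by
    intro x
    unfold agr
    rw [Finset.sum_comm]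
    simp_rw [hu]
    rw [Finset.sum_sub_distrib]
    simp
  have hS2 : ∀ x : Fin n → Fin q, ∑ w ∈ C, agr w x * agr w x
      = n * n * m - agr x u * agr x u + n * (n - m) := by
    intro x
    have : ∀ w, agr w x * agr w x
        = ∑ i, ∑ j, eqInd (w i) (x i) * eqInd (w j) (x j) := by
      intro w; unfold agr; rw [Finset.sum_mul_sum]
    simp_rw [this]
    rw [Finset.sum_comm]
    have h2 : ∀ i, ∑ w ∈ C, ∑ j, eqInd (w i) (x i) * eqInd (w j) (x j)
        = n * m - eqInd (x i) (u i) * agr x u + (n - m) := by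
      intro i
      rw [Finset.sum_comm]
      simp_rw [hP]
      rw [Finset.sum_add_distrib, Finset.sum_sub_distrib, ← Finset.mul_sum, ← Finset.sum_mul,
        sum_eqInd]
      simp [agr]
    simp_rw [h2]
    have h3 : ∑ i, eqInd (x i) (u i) * agr x u = agr x u * agr x u := by
      rw [← Finset.sum_mul]; rfl
    rw [Finset.sum_add_distrib, Finset.sum_sub_distrib, h3]
    simp
    ring
  -- each term is nonnegative
  have hnn : ∀ x ∈ C, 0 ≤ agr x u * agr x u - m * agr x u := by
    intro x hx
    have h1 : ∑ w ∈ C, agr w x * (m - agr w x) = m * (n * n - agr x u)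
        - (n * n * m - agr x u * agr x u + n * (n - m)) := by
      rw [← hS1, ← hS2, Finset.mul_sum, ← Finset.sum_sub_distrib]
      exact Finset.sum_congr rfl fun w _ => by ring
    rw [← Finset.add_sum_erase _ _ hx, agr_self] at h1
    have h2 : 0 ≤ ∑ w ∈ C.erase x, agr w x * (m - agr w x) := by
      refine Finset.sum_nonneg fun w hw => ?_
      rw [Finset.mem_erase] at hw
      refine mul_nonneg ?_ (sub_nonneg.2 (hA w hw.2 x hx hw.1))
      exact Finset.sum_nonneg fun i _ => by unfold eqInd; split_ifs <;> simp
    linarith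
  have hzero : ∑ x ∈ C, (agr x u * agr x u - m * agr x u) = 0 := by
    rw [Finset.sum_sub_distrib, ← Finset.mul_sum, hS1, hS2, agr_self]
    ring
  rw [Finset.sum_eq_zero_iff_of_nonneg hnn] at hzero
  have hm0 : 0 ≤ m := by
    have : (2 : ℤ) ≤ q := by exact_mod_cast hq
    have : (0 : ℤ) < n := by exact_mod_cast hn
    by_contra! h
    nlinarith
  have hfin : ∀ w ∈ C, d ≤ hammingDist u w := by
    intro w hw
    have h1 := hzero w hw
    have h2 := agr_add_dist w u
    rw [hammingDist_comm] at h2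
    have h3 : agr w u * (agr w u - m) = 0 := by linarith
    rcases mul_eq_zero.1 h3 with h | h <;> omega
  refine ⟨u, fun hmem => ?_, hfin⟩
  have := hfin u hmem
  rw [hammingDist_self] at this
  omega
end

section
/- A_4(9,6) ≤ 120 and A_4(10,6) ≤ 480: every code C ⊆ (Fin 4)^9 with minimum Hamming distance at least 6 has at most 120 elements, and every code C ⊆ (Fin 4)^{10} with minimum Hamming distance at least 6 has at most 480 elements. -/
namespace A496

abbrev W := Fin 9 → Fin 4

/-- number of agreements -/
def ag (u v : W) : ℕ := ∑ i, if u i = v i then 1 else 0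

def e2 (u v : W) : ℕ := if ag u v = 2 then 1 else 0

/-- number of (ordered) pairs agreeing in exactly two places -/
def q (A B : Finset W) : ℕ := ∑ u ∈ A, ∑ v ∈ B, e2 u v

def sl (Z : Finset W) (k : Fin 9) (c : Fin 4) : Finset W := Z.filter (fun u => u k = c)

def Good (Z : Finset W) : Prop := ∀ u ∈ Z, ∀ v ∈ Z, u ≠ v → ag u v ≤ 3

lemma ag_self (u : W) : ag u u = 9 := by simp [ag]

lemma ag_comm (u v : W) : ag u v = ag v u := by simp [ag, eq_comm]

lemma e2_comm (u v : W) : e2 u v = e2 v u := by simp [e2, ag_comm]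

lemma q_comm (A B : Finset W) : q A B = q B A := by
  unfold q
  rw [Finset.sum_comm]
  simp only [e2_comm]

lemma mem_sl {Z : Finset W} {k : Fin 9} {c : Fin 4} {u : W} :
    u ∈ sl Z k c ↔ u ∈ Z ∧ u k = c := by simp [sl]

lemma sum_sl (Z : Finset W) (k : Fin 9) (g : W → ℕ) :
    ∑ u ∈ Z, g u = ∑ c, ∑ u ∈ sl Z k c, g u := by
  unfold sl
  rw [Finset.sum_fiberwise]

lemma card_sl (Z : Finset W) (k : Fin 9) : ∑ c, (sl Z k c).card = Z.card := by
  have := sum_sl Z k (fun _ => 1)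
  simpa using this.symm

lemma sl_comm (Z : Finset W) (j k : Fin 9) (b c : Fin 4) :
    sl (sl Z j b) k c = sl (sl Z k c) j b := by
  ext u; simp only [mem_sl]; tauto

lemma Good.sub {Z : Finset W} (h : Good Z) (k : Fin 9) (c : Fin 4) : Good (sl Z k c) :=
  fun u hu v hv => h u (mem_sl.1 hu).1 v (mem_sl.1 hv).1

def S (Z : Finset W) (k : Fin 9) : ℕ := ∑ c, (sl Z k c).card ^ 2

lemma S_eq (Z : Finset W) (k : Fin 9) :
    S Z k = ∑ u ∈ Z, ∑ v ∈ Z, if u k = v k then 1 else 0 := by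
  rw [sum_sl Z k]
  unfold S
  refine Finset.sum_congr rfl fun c _ => ?_
  rw [pow_two, ← smul_eq_mul, ← Finset.sum_const]
  refine Finset.sum_congr rfl fun u hu => ?_
  rw [← Finset.sum_filter, ← Finset.card_eq_sum_ones, (mem_sl.1 hu).2]
  simp [sl, eq_comm]

lemma S_const {Z : Finset W} {k : Fin 9} {a : Fin 4} (h : ∀ u ∈ Z, u k = a) :
    S Z k = Z.card ^ 2 := by
  rw [S_eq, pow_two, ← smul_eq_mul, ← Finset.sum_const]
  refine Finset.sum_congr rfl fun u hu => ?_
  rw [Finset.card_eq_sum_ones]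
  refine Finset.sum_congr rfl fun v hv => ?_
  rw [h u hu, h v hv]; simp

lemma S_sum (Z : Finset W) : ∑ k, S Z k = ∑ u ∈ Z, ∑ v ∈ Z, ag u v := by
  simp only [S_eq, ag]
  rw [Finset.sum_comm]
  refine Finset.sum_congr rfl fun u hu => ?_
  rw [Finset.sum_comm]

/-- key identity for a cell -/
lemma cell_id {Z : Finset W} (h : Good Z) {i j : Fin 9} (hij : i ≠ j) {a b : Fin 4}
    (ha : ∀ u ∈ Z, u i = a) (hb : ∀ u ∈ Z, u j = b) :
    q Z Z + ∑ k, S Z k = 3 * Z.card ^ 2 + 6 * Z.card := by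
  have h1 : ∀ u ∈ Z, ∑ v ∈ Z, (e2 u v + ag u v) = 3 * Z.card + 6 := by
    intro u hu
    have : ∀ v ∈ Z, e2 u v + ag u v = 3 + if u = v then 6 else 0 := by
      intro v hv
      by_cases huv : u = v
      · subst huv; simp [e2, ag_self]
      · have h3 := h u hu v hv huv
        have h2 : 2 ≤ ag u v := by
          unfold ag
          rw [← Finset.add_sum_erase _ _ (Finset.mem_univ i),
            ← Finset.add_sum_erase _ _ (Finset.mem_erase.2 ⟨hij.symm, Finset.mem_univ j⟩)]
          rw [ha u hu, ha v hv, hb u hu, hb v hv]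
          simp only [if_true]; omega
        simp only [e2, huv, if_false]
        split_ifs <;> omega
    rw [Finset.sum_congr rfl this, Finset.sum_add_distrib]
    simp [hu, mul_comm]
  rw [S_sum, q, ← Finset.sum_add_distrib]
  simp only [← Finset.sum_add_distrib]
  rw [Finset.sum_congr rfl h1]
  simp; ring

lemma S_ge (Z : Finset W) (k : Fin 9) :
    3 * Z.card ≤ S Z k + 8 ∧ Z.card ≤ S Z k ∧ Z.card ^ 2 ≤ 4 * S Z k := by
  have h := card_sl Z k
  unfold S
  rw [← h]
  simp only [Fin.sum_univ_four]
  generalize (sl Z k 0).card = x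
  generalize (sl Z k 1).card = y
  generalize (sl Z k 2).card = z
  generalize (sl Z k 3).card = w
  have key : ∀ x : ℕ, 3 * x ≤ x ^ 2 + 2 := by
    intro x
    rcases x with _ | _ | x
    · simp
    · simp
    · nlinarith
  have key2 : ∀ x : ℕ, x ≤ x ^ 2 := fun x => Nat.le_self_pow (by norm_num) x
  refine ⟨?_, ?_, ?_⟩
  · linarith [key x, key y, key z, key w]
  · linarith [key2 x, key2 y, key2 z, key2 w]
  · zify
    nlinarith [sq_nonneg ((x:ℤ) - y), sq_nonneg ((x:ℤ) - z), sq_nonneg ((x:ℤ) - w),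
      sq_nonneg ((y:ℤ) - z), sq_nonneg ((y:ℤ) - w), sq_nonneg ((z:ℤ) - w)]

lemma S_tight {Z : Finset W} {k : Fin 9} (h : S Z k + 8 ≤ 3 * Z.card) (c : Fin 4) :
    (sl Z k c).card = 1 ∨ (sl Z k c).card = 2 := by
  have h0 := card_sl Z k
  rw [← h0] at h
  unfold S at h
  have key : ∀ x : ℕ, 3 * x ≤ x ^ 2 + 2 := by
    intro x
    rcases x with _ | _ | x
    · simp
    · simp
    · nlinarith
  have key3 : ∀ x : ℕ, x ^ 2 + 2 ≤ 3 * x → x = 1 ∨ x = 2 := by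
    intro x hx
    have : x ≤ 3 := by nlinarith
    interval_cases x <;> simp_all
  apply key3
  simp only [Fin.sum_univ_four] at h
  have k0 := key (sl Z k 0).card
  have k1 := key (sl Z k 1).card
  have k2 := key (sl Z k 2).card
  have k3 := key (sl Z k 3).card
  fin_cases c <;> simp only [] <;> first | (show _ ; simp; omega)

lemma split2 (F : Fin 9 → ℕ) {i j : Fin 9} (hij : i ≠ j) :
    ∑ k, F k = F i + (F j + ∑ k ∈ (Finset.univ.erase i).erase j, F k) := by
  rw [← Finset.add_sum_erase _ _ (Finset.mem_univ i),
    ← Finset.add_sum_erase _ _ (Finset.mem_erase.2 ⟨hij.symm, Finset.mem_univ j⟩)]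

lemma card2 {i j : Fin 9} (hij : i ≠ j) :
    ((Finset.univ.erase i).erase j).card = 7 := by
  rw [Finset.card_erase_of_mem (Finset.mem_erase.2 ⟨hij.symm, Finset.mem_univ j⟩),
    Finset.card_erase_of_mem (Finset.mem_univ i)]
  simp

lemma cell_bound {Z : Finset W} (h : Good Z) {i j : Fin 9} (hij : i ≠ j) {a b : Fin 4}
    (ha : ∀ u ∈ Z, u i = a) (hb : ∀ u ∈ Z, u j = b) (m : ℕ) (hm : ∀ k, m ≤ S Z k) :
    q Z Z + 7 * m ≤ Z.card ^ 2 + 6 * Z.card := by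
  have h1 := cell_id h hij ha hb
  rw [split2 _ hij, S_const ha, S_const hb] at h1
  have h2 := Finset.card_nsmul_le_sum ((Finset.univ.erase i).erase j) (fun k => S Z k) m (fun k _ => hm k)
  rw [card2 hij, smul_eq_mul] at h2
  omega

lemma cell_le {Z : Finset W} (h : Good Z) {i j : Fin 9} (hij : i ≠ j) {a b : Fin 4}
    (ha : ∀ u ∈ Z, u i = a) (hb : ∀ u ∈ Z, u j = b) : Z.card ≤ 8 := by
  have h1 := cell_id h hij ha hb
  rw [split2 _ hij, S_const ha, S_const hb] at h1
  have h2 := Finset.card_nsmul_le_sum ((Finset.univ.erase i).erase j) (fun k => 4 * S Z k)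
    (Z.card ^ 2) (fun k _ => (S_ge Z k).2.2)
  rw [card2 hij, smul_eq_mul, ← Finset.mul_sum] at h2
  by_contra hc
  nlinarith

/-- bound on q in terms of the size of a cell -/
def df (z : ℕ) : ℕ :=
  if z = 6 then 2 else if z = 5 then 6 else if z = 4 then 12 else if z = 3 then 6 else
    if z = 2 then 2 else 0

lemma cell_q {Z : Finset W} (h : Good Z) {i j : Fin 9} (hij : i ≠ j) {a b : Fin 4}
    (ha : ∀ u ∈ Z, u i = a) (hb : ∀ u ∈ Z, u j = b) : q Z Z ≤ df Z.card := by
  have h8 := cell_le h hij ha hb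
  have h1 := cell_bound h hij ha hb (3 * Z.card - 8) (fun k => by have := (S_ge Z k).1; omega)
  have h2 := cell_bound h hij ha hb Z.card (fun k => (S_ge Z k).2.1)
  generalize Z.card = z at *
  interval_cases z <;> simp [df] <;> omega

lemma cell_tight {Z : Finset W} (h : Good Z) {i j : Fin 9} (hij : i ≠ j) {a b : Fin 4}
    (ha : ∀ u ∈ Z, u i = a) (hb : ∀ u ∈ Z, u j = b) (h7 : 7 ≤ Z.card)
    {k : Fin 9} (hki : k ≠ i) (hkj : k ≠ j) (c : Fin 4) :
    (sl Z k c).card = 1 ∨ (sl Z k c).card = 2 := by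
  have h8 := cell_le h hij ha hb
  apply S_tight
  have h1 := cell_id h hij ha hb
  rw [split2 _ hij, S_const ha, S_const hb] at h1
  have hk : k ∈ (Finset.univ.erase i).erase j := by simp [hki, hkj]
  rw [← Finset.add_sum_erase _ _ hk] at h1
  have h2 := Finset.card_nsmul_le_sum (((Finset.univ.erase i).erase j).erase k) (fun k => S Z k)
    (3 * Z.card - 8) (fun k _ => by have := (S_ge Z k).1; omega)
  rw [Finset.card_erase_of_mem hk, card2 hij, smul_eq_mul] at h2
  generalize Z.card = z at *
  interval_cases z <;> omega

def md (m : ℕ) : ℕ :=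
  if m = 30 then 2 else if m = 29 then 6 else if m = 28 then 12 else if m = 27 then 12 else
    if m = 26 then 14 else if m = 25 then 18 else 0

lemma md_aux : ∀ x y z w : Fin 9, 25 ≤ x.1 + y.1 + z.1 + w.1 →
    df x + df y + df z + df w ≤ md (x.1 + y.1 + z.1 + w.1) := by
  decide +kernel

lemma row_le {Z : Finset W} (h : Good Z) {i : Fin 9} {a : Fin 4}
    (ha : ∀ u ∈ Z, u i = a) {j : Fin 9} (hij : i ≠ j) (b : Fin 4) : (sl Z j b).card ≤ 8 :=
  cell_le (h.sub j b) hij (fun u hu => ha u (mem_sl.1 hu).1) (fun _ hu => (mem_sl.1 hu).2)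

lemma block_le {Z : Finset W} (h : Good Z) {i : Fin 9} {a : Fin 4}
    (ha : ∀ u ∈ Z, u i = a) : Z.card ≤ 32 := by
  obtain ⟨j, hj⟩ : ∃ j : Fin 9, i ≠ j := ⟨i + 1, by clear ha; revert i; decide⟩
  have h0 := card_sl Z j
  simp only [Fin.sum_univ_four] at h0
  have := row_le h ha hj
  have h1 := this 0
  have h2 := this 1
  have h3 := this 2
  have h4 := this 3
  omega

lemma row_q {Z : Finset W} (h : Good Z) {i : Fin 9} {a : Fin 4}
    (ha : ∀ u ∈ Z, u i = a) {j : Fin 9} (hij : i ≠ j) (hZ : 25 ≤ Z.card) :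
    ∑ b, q (sl Z j b) (sl Z j b) ≤ md Z.card := by
  have h0 := card_sl Z j
  have h8 := row_le h ha hij
  have hq : ∀ b, q (sl Z j b) (sl Z j b) ≤ df (sl Z j b).card := fun b =>
    cell_q (h.sub j b) hij (fun u hu => ha u (mem_sl.1 hu).1) (fun _ hu => (mem_sl.1 hu).2)
  refine (Finset.sum_le_sum fun b _ => hq b).trans ?_
  simp only [Fin.sum_univ_four] at h0 ⊢
  rw [← h0] at hZ ⊢
  exact md_aux ⟨_, Nat.lt_succ_of_le (h8 0)⟩ ⟨_, Nat.lt_succ_of_le (h8 1)⟩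
    ⟨_, Nat.lt_succ_of_le (h8 2)⟩ ⟨_, Nat.lt_succ_of_le (h8 3)⟩ hZ

/-- q over slices counts pairs with a coordinate agreement -/
lemma q_slices (Z : Finset W) (j : Fin 9) :
    ∑ b, q (sl Z j b) (sl Z j b) = ∑ u ∈ Z, ∑ v ∈ Z, if u j = v j then e2 u v else 0 := by
  rw [sum_sl Z j]
  refine Finset.sum_congr rfl fun c _ => ?_
  unfold q
  refine Finset.sum_congr rfl fun u hu => ?_
  rw [← Finset.sum_filter, (mem_sl.1 hu).2]
  simp [sl, eq_comm]

lemma q_slices_sum (Z : Finset W) :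
    ∑ j, ∑ b, q (sl Z j b) (sl Z j b) = 2 * q Z Z := by
  simp only [q_slices]
  rw [Finset.sum_comm]
  unfold q
  rw [Finset.mul_sum]
  refine Finset.sum_congr rfl fun u hu => ?_
  rw [Finset.sum_comm, Finset.mul_sum]
  refine Finset.sum_congr rfl fun v hv => ?_
  have : ∑ j, (if u j = v j then e2 u v else 0) = ag u v * e2 u v := by
    unfold ag
    rw [Finset.sum_mul]
    simp
  rw [this]
  unfold e2
  split_ifs with h <;> simp [h]

lemma block_q {Z : Finset W} (h : Good Z) {i : Fin 9} {a : Fin 4}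
    (ha : ∀ u ∈ Z, u i = a) (hZ : 25 ≤ Z.card) : q Z Z ≤ 8 * md Z.card := by
  have h1 := q_slices_sum Z
  rw [← Finset.add_sum_erase _ _ (Finset.mem_univ i)] at h1
  have h2 : ∑ b, q (sl Z i b) (sl Z i b) = q Z Z := by
    rw [q_slices]
    unfold q
    refine Finset.sum_congr rfl fun u hu => Finset.sum_congr rfl fun v hv => ?_
    rw [ha u hu, ha v hv]; simp
  have h3 := Finset.sum_le_card_nsmul (Finset.univ.erase i)
    (fun j => ∑ b, q (sl Z j b) (sl Z j b)) (md Z.card)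
    (fun j hj => row_q h ha (Finset.ne_of_mem_erase hj).symm hZ)
  rw [Finset.card_erase_of_mem (Finset.mem_univ i)] at h3
  simp at h3
  omega


/-- slices of a big block -/
lemma big_row {D : Finset W} (h : Good D) {i : Fin 9} {a : Fin 4}
    (ha : ∀ u ∈ D, u i = a) (hD : 31 ≤ D.card) {j : Fin 9} (hij : i ≠ j) (b : Fin 4) :
    (sl D j b).card = 7 ∨ (sl D j b).card = 8 := by
  have h0 := card_sl D j
  simp only [Fin.sum_univ_four] at h0
  have := row_le h ha hij
  have h1 := this 0
  have h2 := this 1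
  have h3 := this 2
  have h4 := this 3
  fin_cases b <;> simp <;> omega

lemma big_row_unique {D : Finset W} (h : Good D) {i : Fin 9} {a : Fin 4}
    (ha : ∀ u ∈ D, u i = a) (hD : 31 ≤ D.card) {j : Fin 9} (hij : i ≠ j) (b c : Fin 4)
    (hbc : c ≠ b) (hb : (sl D j b).card = 7) :
    (sl D j c).card = 8 := by
  have h0 := card_sl D j
  simp only [Fin.sum_univ_four] at h0
  have := row_le h ha hij
  have h1 := this 0
  have h2 := this 1
  have h3 := this 2
  have h4 := this 3
  fin_cases b <;> fin_cases c <;> simp at hbc hb ⊢ <;> omega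

lemma cell_eq_two {D : Finset W} (h : Good D) {i : Fin 9} {a : Fin 4}
    (ha : ∀ u ∈ D, u i = a) {j k : Fin 9} (hij : i ≠ j) (hik : i ≠ k)
    (hjk : j ≠ k) (b c : Fin 4) (hb : (sl D j b).card = 8) :
    (sl (sl D j b) k c).card = 2 := by
  have ht := cell_tight (h.sub j b) hij (fun u hu => ha u (mem_sl.1 hu).1)
    (fun _ hu => (mem_sl.1 hu).2) (by omega) hik.symm hjk.symm
  have h0 := card_sl (sl D j b) k
  simp only [Fin.sum_univ_four] at h0
  have h1 := ht 0
  have h2 := ht 1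
  have h3 := ht 2
  have h4 := ht 3
  fin_cases c <;> simp <;> omega

lemma cell_eq_one {D : Finset W} (h : Good D) {i : Fin 9} {a : Fin 4}
    (ha : ∀ u ∈ D, u i = a) (hD : 31 ≤ D.card) {j k : Fin 9} (hij : i ≠ j) (hik : i ≠ k)
    (hjk : j ≠ k) (b c : Fin 4) (hb : (sl D j b).card = 7) (hc : (sl D k c).card = 7) :
    (sl (sl D j b) k c).card = 1 := by
  have h0 := card_sl (sl D j b) k
  have h2 : ∀ c' ∈ Finset.univ.erase c, (sl (sl D j b) k c').card = 2 := by
    intro c' hc'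
    rw [sl_comm]
    exact cell_eq_two h ha hik hij hjk.symm _ _
      (big_row_unique h ha hD hik c c' (Finset.ne_of_mem_erase hc') hc)
  rw [← Finset.add_sum_erase _ _ (Finset.mem_univ c), Finset.sum_congr rfl h2,
    Finset.sum_const, Finset.card_erase_of_mem (Finset.mem_univ c)] at h0
  simp at h0
  omega

lemma ag_sum (D : Finset W) (w : W) :
    ∑ v ∈ D, ag w v = ∑ j, (sl D j (w j)).card := by
  unfold ag
  rw [Finset.sum_comm]
  refine Finset.sum_congr rfl fun j _ => ?_
  simp [sl, eq_comm]

lemma ag_sq_sum (D : Finset W) (w : W) :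
    ∑ v ∈ D, ag w v * ag w v = ∑ j, ∑ k, (sl (sl D j (w j)) k (w k)).card := by
  have : ∀ v, ag w v * ag w v = ∑ j, ∑ k, if v ∈ sl (sl Finset.univ j (w j)) k (w k)
      then 1 else 0 := by
    intro v
    unfold ag
    rw [Finset.sum_mul_sum]
    refine Finset.sum_congr rfl fun j _ => Finset.sum_congr rfl fun k _ => ?_
    simp only [mem_sl, Finset.mem_univ, true_and, eq_comm (a := w j), eq_comm (a := w k)]
    by_cases h1 : v j = w j <;> by_cases h2 : v k = w k <;> simp [h1, h2]
  simp only [this]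
  rw [Finset.sum_comm]
  refine Finset.sum_congr rfl fun j _ => ?_
  rw [Finset.sum_comm]
  refine Finset.sum_congr rfl fun k _ => ?_
  rw [← Finset.sum_filter, ← Finset.card_eq_sum_ones]
  congr 1
  ext u
  simp [mem_sl, and_assoc]

def r (m : ℕ) : ℕ := if m = 32 then 2 else if m = 31 then 1 else 0

lemma n2_lower {D : Finset W} (h : Good D) {i : Fin 9} {a : Fin 4}
    (ha : ∀ u ∈ D, u i = a) {w : W} (hw : w i ≠ a) (hD : 31 ≤ D.card)
    (hwD : ∀ v ∈ D, ag w v ≤ 3) : r D.card ≤ ∑ v ∈ D, e2 w v := by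
  have h32 := block_le h ha
  -- s and t
  let s : Fin 9 → ℤ := fun j => if j = i then 0 else 1
  let t : Fin 9 → ℤ := fun j => if j = i then 0 else 8 - (sl D j (w j)).card
  have hempty : sl D i (w i) = ∅ := by
    ext u; simp only [mem_sl, Finset.notMem_empty, iff_false]
    rintro ⟨hu, hu'⟩
    exact hw (hu' ▸ ha u hu)
  have hM : ∀ j k, ((sl (sl D j (w j)) k (w k)).card : ℤ)
      = 2 * (s j * s k) - t j * t k + (if j = k then 6 * s j else 0) := by
    intro j k
    by_cases hj : j = i
    · subst hj; rw [hempty]; simp [s, t, sl]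
    by_cases hk : k = i
    · subst hk; rw [sl_comm, hempty]; simp [s, t, sl, hj]
    have hij : i ≠ j := fun h => hj h.symm
    have hik : i ≠ k := fun h => hk h.symm
    by_cases hjk : j = k
    · subst hjk
      have : sl (sl D j (w j)) j (w j) = sl D j (w j) := by
        ext u; simp only [mem_sl]; tauto
      rw [this]
      simp only [s, t, hj, if_false, if_true]
      rcases big_row h ha hD hij (w j) with h7 | h7 <;> rw [h7] <;> norm_num
    · simp only [s, t, hj, hk, hjk, if_false]
      rcases big_row h ha hD hij (w j) with h7 | h7
      · rcases big_row h ha hD hik (w k) with h7' | h7'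
        · rw [cell_eq_one h ha hD hij hik hjk _ _ h7 h7', h7, h7']; norm_num
        · rw [sl_comm, cell_eq_two h ha hik hij (Ne.symm hjk) _ _ h7', h7, h7']; norm_num
      · rw [cell_eq_two h ha hij hik hjk _ _ h7, h7]; norm_num
  have hM1 : ∀ j, ((sl D j (w j)).card : ℤ) = 8 * s j - t j := by
    intro j
    by_cases hj : j = i
    · subst hj; simp [hempty, s, t]
    · simp [s, t, hj]
  have hs : ∑ j, s j = 8 := by
    simp only [s]
    rw [← Finset.add_sum_erase _ _ (Finset.mem_univ i)]
    rw [Finset.sum_congr rfl (g := fun _ => (1:ℤ))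
      (fun j hj => by simp [Finset.ne_of_mem_erase hj])]
    simp
  have ht : ∀ j, 0 ≤ t j ∧ t j ≤ s j := by
    intro j
    by_cases hj : j = i
    · simp [s, t, hj]
    · simp only [s, t, hj, if_false]
      rcases big_row h ha hD (fun h => hj h.symm) (w j) with h7 | h7 <;> rw [h7] <;> norm_num
  have hT0 : 0 ≤ ∑ j, t j := Finset.sum_nonneg fun j _ => (ht j).1
  have hT8 : ∑ j, t j ≤ 8 := hs ▸ Finset.sum_le_sum fun j _ => (ht j).2
  have hTz : D.card = 32 → ∑ j, t j = 0 := by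
    intro hc
    refine Finset.sum_eq_zero fun j _ => ?_
    by_cases hj : j = i
    · simp [t, hj]
    · simp only [t, hj, if_false]
      have hij : i ≠ j := fun h => hj h.symm
      have h0 := card_sl D j
      rw [← Finset.add_sum_erase _ _ (Finset.mem_univ (w j))] at h0
      have h3 := Finset.sum_le_card_nsmul (Finset.univ.erase (w j))
        (fun b => (sl D j b).card) 8 (fun b _ => row_le h ha hij b)
      rw [Finset.card_erase_of_mem (Finset.mem_univ (w j))] at h3
      simp at h3
      have := row_le h ha hij (w j)
      omega
  have e1 : ((∑ v ∈ D, ag w v : ℕ) : ℤ) = 64 - ∑ j, t j := by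
    rw [ag_sum, Nat.cast_sum, Finset.sum_congr rfl (fun j _ => hM1 j),
      Finset.sum_sub_distrib, ← Finset.mul_sum, hs]; norm_num
  have e3 : ((∑ v ∈ D, ag w v * ag w v : ℕ) : ℤ) = 176 - (∑ j, t j) * (∑ j, t j) := by
    rw [ag_sq_sum]
    push_cast
    simp only [hM, Finset.sum_add_distrib, Finset.sum_sub_distrib, ← Finset.mul_sum]
    simp only [Finset.sum_ite_eq, Finset.mem_univ, if_true, ← Finset.mul_sum, ← Finset.sum_mul, hs]
    ring
  have e4 : ∑ v ∈ D, ag w v * ag w v = ∑ v ∈ D, ag w v +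
      (2 * ∑ v ∈ D, e2 w v + 6 * ∑ v ∈ D, if ag w v = 3 then 1 else 0) := by
    rw [Finset.mul_sum, Finset.mul_sum, ← Finset.sum_add_distrib, ← Finset.sum_add_distrib]
    refine Finset.sum_congr rfl fun v hv => ?_
    have := hwD v hv
    unfold e2
    generalize ag w v = x at *
    interval_cases x <;> simp
  rw [e4] at e3
  push_cast at e3 e1
  rw [e1] at e3
  generalize (∑ v ∈ D, if ag w v = 3 then 1 else 0 : ℕ) = n3 at *
  generalize ∑ j, t j = T at *
  have hc : D.card = 31 ∨ D.card = 32 := by omega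
  rw [← Nat.cast_sum] at e3
  generalize ∑ v ∈ D, e2 w v = n2 at *
  rcases hc with hc | hc
  · rw [hc]
    simp only [r]
    interval_cases T <;> norm_num at * <;> omega
  · have := hTz hc
    subst this
    rw [hc]
    simp only [r]
    norm_num at *
    omega

lemma cross {C : Finset W} (h : Good C) (i : Fin 9) {a b : Fin 4} (hab : a ≠ b) :
    r (sl C i a).card * (sl C i b).card ≤ q (sl C i a) (sl C i b) := by
  by_cases hD : 31 ≤ (sl C i a).card
  · rw [q_comm, q, mul_comm, ← smul_eq_mul]
    refine Finset.card_nsmul_le_sum _ _ _ fun w hw => ?_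
    have hw' := mem_sl.1 hw
    refine n2_lower (h.sub i a) (i := i) (a := a) (fun u hu => (mem_sl.1 hu).2) ?_ hD ?_
    · rw [hw'.2]; exact hab.symm
    · intro v hv
      have hv' := mem_sl.1 hv
      refine h w hw'.1 v hv'.1 ?_
      rintro rfl
      exact hab (hv'.2.symm.trans hw'.2)
  · have : r (sl C i a).card = 0 := by unfold r; split_ifs <;> omega
    simp [this]

lemma cross' {C : Finset W} (h : Good C) (i : Fin 9) {a b : Fin 4} (hab : a ≠ b) :
    max (r (sl C i a).card * (sl C i b).card) (r (sl C i b).card * (sl C i a).card)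
      ≤ q (sl C i a) (sl C i b) :=
  max_le (cross h i hab) (by rw [q_comm]; exact cross h i hab.symm)

def x2 (m n : ℕ) : ℕ := max (r m * n) (r n * m)

lemma final_aux : ∀ x y z w : Fin 8, x.1 + y.1 + z.1 + w.1 = 7 →
    28 * (md (32 - x) + md (32 - y) + md (32 - z) + md (32 - w)) <
    2 * (x2 (32 - x) (32 - y) + x2 (32 - x) (32 - z) + x2 (32 - x) (32 - w)
      + x2 (32 - y) (32 - z) + x2 (32 - y) (32 - w) + x2 (32 - z) (32 - w)) := by
  decide +kernel

lemma q_split (C : Finset W) (i : Fin 9) :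
    q C C = ∑ a, ∑ b, q (sl C i a) (sl C i b) := by
  unfold q
  rw [sum_sl C i]
  refine Finset.sum_congr rfl fun a _ => ?_
  conv_rhs => rw [Finset.sum_comm]
  refine Finset.sum_congr rfl fun u _ => ?_
  exact sum_sl C i (fun v => e2 u v)

lemma no121 {C : Finset W} (h : Good C) (hC : C.card = 121) : False := by
  obtain ⟨i, -, hi⟩ := Finset.exists_max_image (Finset.univ : Finset (Fin 9))
    (fun i => ∑ a, q (sl C i a) (sl C i a)) ⟨0, Finset.mem_univ _⟩
  have h1 := Finset.sum_le_card_nsmul (Finset.univ : Finset (Fin 9))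
    (fun i => ∑ a, q (sl C i a) (sl C i a)) _ hi
  rw [q_slices_sum] at h1
  simp only [Finset.card_univ, Fintype.card_fin, smul_eq_mul] at h1
  have h2 := q_split C i
  have hle : ∀ a, (sl C i a).card ≤ 32 := fun a =>
    block_le (h.sub i a) (i := i) (a := a) (fun u hu => (mem_sl.1 hu).2)
  have hs := card_sl C i
  have l0 := hle 0
  have l1 := hle 1
  have l2 := hle 2
  have l3 := hle 3
  simp only [Fin.sum_univ_four] at hs h1 h2
  have hq : ∀ a, 25 ≤ (sl C i a).card →
      q (sl C i a) (sl C i a) ≤ 8 * md (sl C i a).card := fun a =>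
    block_q (h.sub i a) (i := i) (a := a) (fun u hu => (mem_sl.1 hu).2)
  have q0 := hq 0 (by omega)
  have q1 := hq 1 (by omega)
  have q2 := hq 2 (by omega)
  have q3 := hq 3 (by omega)
  have c01 := cross' h i (a := 0) (b := 1) (by decide)
  have c02 := cross' h i (a := 0) (b := 2) (by decide)
  have c03 := cross' h i (a := 0) (b := 3) (by decide)
  have c12 := cross' h i (a := 1) (b := 2) (by decide)
  have c13 := cross' h i (a := 1) (b := 3) (by decide)
  have c23 := cross' h i (a := 2) (b := 3) (by decide)
  have fa := final_aux ⟨32 - (sl C i 0).card, by omega⟩ ⟨32 - (sl C i 1).card, by omega⟩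
    ⟨32 - (sl C i 2).card, by omega⟩ ⟨32 - (sl C i 3).card, by omega⟩ (by simp only []; omega)
  simp only [] at fa
  rw [Nat.sub_sub_self l0, Nat.sub_sub_self l1, Nat.sub_sub_self l2, Nat.sub_sub_self l3] at fa
  rw [q_comm (sl C i 1) (sl C i 0), q_comm (sl C i 2) (sl C i 0), q_comm (sl C i 2) (sl C i 1),
    q_comm (sl C i 3) (sl C i 0), q_comm (sl C i 3) (sl C i 1), q_comm (sl C i 3) (sl C i 2)] at h2
  change x2 _ _ ≤ _ at c01 c02 c03 c12 c13 c23
  omega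

lemma ag_dist (u v : W) : ag u v + hammingDist u v = 9 := by
  unfold ag hammingDist
  rw [← Finset.card_filter]
  have := Finset.card_filter_add_card_filter_not (s := (Finset.univ : Finset (Fin 9)))
    (fun i => u i = v i)
  simpa using this

lemma bound9 (C : Finset (Fin 9 → Fin 4))
    (h : ∀ u ∈ C, ∀ v ∈ C, u ≠ v → 6 ≤ hammingDist u v) : C.card ≤ 120 := by
  by_contra hc
  obtain ⟨D, hDC, hD⟩ := Finset.exists_subset_card_eq (show 121 ≤ C.card by omega)
  refine no121 (C := D) (fun u hu v hv huv => ?_) hD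
  have := h u (hDC hu) v (hDC hv) huv
  have := ag_dist u v
  omega

lemma bound10 (C : Finset (Fin 10 → Fin 4))
    (h : ∀ u ∈ C, ∀ v ∈ C, u ≠ v → 6 ≤ hammingDist u v) : C.card ≤ 480 := by
  have h0 : C.card ≤ 120 * (Finset.univ : Finset (Fin 4)).card := by
    refine Finset.card_le_mul_card_image_of_maps_to (f := fun u => u 0)
      (fun _ _ => Finset.mem_univ _) 120 fun a _ => ?_
    have hinj : Set.InjOn (fun u : Fin 10 → Fin 4 => Fin.tail u)
        (C.filter (fun u => u 0 = a) : Finset (Fin 10 → Fin 4)) := by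
      intro u hu v hv huv
      simp only [Finset.coe_filter, Set.mem_ofPred_eq] at hu hv
      rw [← Fin.cons_self_tail u, ← Fin.cons_self_tail v, hu.2, hv.2]
      simp only at huv
      rw [huv]
    rw [← Finset.card_image_of_injOn hinj]
    refine bound9 _ fun x hx y hy hxy => ?_
    obtain ⟨u, hu, rfl⟩ := Finset.mem_image.1 hx
    obtain ⟨v, hv, rfl⟩ := Finset.mem_image.1 hy
    rw [Finset.mem_filter] at hu hv
    have := h u hu.1 v hv.1 (by rintro rfl; exact hxy rfl)
    refine this.trans ?_
    unfold hammingDist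
    rw [Fin.univ_succ, Finset.filter_cons, if_neg (by simp [hu.2, hv.2]), Finset.filter_map,
      Finset.card_map]
    exact le_of_eq rfl
  simpa using h0

end A496

/-- `A_4(9,6) ≤ 120` and `A_4(10,6) ≤ 480`. -/
theorem A4_9_6_and_A4_10_6 :
    (∀ C : Finset (Fin 9 → Fin 4),
      (∀ u ∈ C, ∀ v ∈ C, u ≠ v → 6 ≤ hammingDist u v) → C.card ≤ 120)
    ∧ (∀ C : Finset (Fin 10 → Fin 4),
      (∀ u ∈ C, ∀ v ∈ C, u ≠ v → 6 ≤ hammingDist u v) → C.card ≤ 480) :=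
  ⟨A496.bound9, A496.bound10⟩
end

section
/- For all integers r ≥ 3 and n ≥ 1, the maximum of α(C_{d,q}^{⊠n}) over all pairs of positive integers (q,d) with q ≥ 2d and q/d < r equals (1 + rⁿ(r−2))/(r−1). -/
/-- The circular (Lee) distance on `ℤ/qℤ`: `δ(x,y) = min(|x-y|, q-|x-y|)`,
with representatives taken in `{0,…,q-1}`. -/
def circDist (q : ℕ) (x y : ZMod q) : ℕ := min (x - y).val (y - x).val

/-- The extremal sequence `a 0 = 1`, `a (n+1) = r * a n - 1`. -/
def seqA (r : ℕ) : ℕ → ℕ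
  | 0 => 1
  | n + 1 => r * seqA r n - 1

lemma seqA_pos (r : ℕ) (hr : 3 ≤ r) (n : ℕ) : 0 < seqA r n := by
  induction n with
  | zero => simp [seqA]
  | succ k ih =>
    have : 3 * 1 ≤ r * seqA r k := Nat.mul_le_mul hr ih
    simp only [seqA]; omega

lemma seqA_succ (r : ℕ) (hr : 3 ≤ r) (n : ℕ) : seqA r (n + 1) + 1 = r * seqA r n := by
  have : 3 * 1 ≤ r * seqA r n := Nat.mul_le_mul hr (seqA_pos r hr n)
  simp only [seqA]; omega

lemma seqA_int (r : ℕ) (hr : 3 ≤ r) (n : ℕ) :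
    ((r : ℤ) - 1) * seqA r n = 1 + (r : ℤ) ^ n * (r - 2) := by
  induction n with
  | zero => simp [seqA]; ring
  | succ k ih =>
    have h : (seqA r (k + 1) : ℤ) + 1 = r * seqA r k := by exact_mod_cast seqA_succ r hr k
    have h2 : (seqA r (k + 1) : ℤ) = r * seqA r k - 1 := by linarith
    rw [h2, pow_succ]
    linear_combination (r : ℤ) * ih

lemma seqA_eq (r : ℕ) (hr : 3 ≤ r) (n : ℕ) :
    (1 + r ^ n * (r - 2)) / (r - 1) = seqA r n := by
  have h := seqA_int r hr n
  have h3 : 1 + r ^ n * (r - 2) = (r - 1) * seqA r n := by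
    zify [show 2 ≤ r by omega, show 1 ≤ r by omega]
    linarith
  rw [h3, Nat.mul_div_cancel_left _ (by omega)]

lemma core_step (r N d s t : ℤ) (hr : 3 ≤ r) (hd : 1 ≤ d) (hN : N = r * d - 1)
    (hs : |s| < d) (ht : |t| < d) (hdv : N ∣ r * s - t) :
    (0 < s → (t = r * s ∧ 0 < t) ∨ (t = r * s - N ∧ t < 0)) := by
  intro hs0
  obtain ⟨e, he⟩ := hdv
  rw [abs_lt] at hs ht
  have hNd : 2 * d ≤ N := by nlinarith
  have h1 : r * s ≤ r * (d - 1) := by nlinarith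
  have h2 : 0 < r * s := by positivity
  have e1 : e < 2 := by
    by_contra hh
    have : N * 2 ≤ N * e := by nlinarith
    nlinarith
  have e0 : -1 < e := by
    by_contra hh
    have : N * e ≤ N * (-1) := by nlinarith
    nlinarith
  have : e = 0 ∨ e = 1 := by omega
  rcases this with rfl | rfl
  · left; constructor <;> linarith
  · right; constructor <;> nlinarith

lemma core (r N d : ℤ) (m : ℕ) (hr : 3 ≤ r) (hd : 1 ≤ d) (hN : N = r * d - 1)
    (hNr : (r - 1) * N = 1 + r ^ (m + 1) * (r - 2)) (t : ℕ → ℤ)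
    (ht : ∀ i ≤ m, |t i| < d) (hs : ∀ i < m, N ∣ r * t i - t (i + 1)) (h0 : 0 < t 0) : False := by
  have inv : ∀ i ≤ m, ∃ E : ℤ, t i = r ^ i * t 0 - N * E ∧ 0 ≤ E ∧
      ((0 < t i ∧ (r - 1) ∣ E) ∨ (t i < 0 ∧ (r - 1) ∣ E - 1)) := by
    intro i
    induction i with
    | zero => intro _; exact ⟨0, by simp, le_rfl, Or.inl ⟨h0, by simp⟩⟩
    | succ k ih =>
      intro hk
      obtain ⟨E, hE, hE0, hc⟩ := ih (by omega)
      have hd1 := hs k (by omega)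
      rcases hc with ⟨hp, c, hc⟩ | ⟨hp, c, hc⟩
      · rcases core_step r N d _ _ hr hd hN (ht k (by omega)) (ht (k+1) hk) hd1 hp with
          ⟨h1, h2⟩ | ⟨h1, h2⟩
        · refine ⟨r * E, ?_, by positivity, Or.inl ⟨h2, r * c, ?_⟩⟩
          · rw [h1, hE]; ring
          · rw [hc]; ring
        · refine ⟨r * E + 1, ?_, by positivity, Or.inr ⟨h2, r * c, ?_⟩⟩
          · rw [h1, hE]; ring
          · rw [hc]; ring
      · have hE1 : 1 ≤ E := by
          by_contra hh
          have : E = 0 := by omega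
          subst this
          have : (r - 1) ∣ 1 := ⟨-c, by linarith⟩
          have := Int.le_of_dvd one_pos this
          omega
        have hd2 : N ∣ r * (-t k) - (-t (k+1)) := by
          obtain ⟨e, he⟩ := hd1; exact ⟨-e, by linear_combination -he⟩
        have hcE : E = (r - 1) * c + 1 := by linarith
        rcases core_step r N d (-t k) (-t (k+1)) hr hd hN (by rw [abs_neg]; exact ht k (by omega))
            (by rw [abs_neg]; exact ht (k+1) hk) hd2 (by linarith) with
          ⟨h1, h2⟩ | ⟨h1, h2⟩
        · refine ⟨r * E, ?_, by positivity, Or.inr ⟨by linarith, r * c + 1, ?_⟩⟩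
          · have : t (k+1) = r * t k := by linarith
            rw [this, hE]; ring
          · rw [hcE]; ring
        · refine ⟨r * E - 1, ?_, by nlinarith, Or.inl ⟨by linarith, r * c + 1, ?_⟩⟩
          · have : t (k+1) = r * t k + N := by linarith
            rw [this, hE]; ring
          · rw [hcE]; ring
  obtain ⟨E, hE, hE0, hc⟩ := inv m le_rfl
  have hm := abs_lt.1 (ht m le_rfl)
  have h00 := abs_lt.1 (ht 0 (by omega))
  have hP : (1 : ℤ) ≤ r ^ m := one_le_pow₀ (by linarith)
  have hdN : 2 * d ≤ N := by nlinarith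
  rw [pow_succ] at hNr
  generalize r ^ m = P at *
  have hEu : E ≤ P := by
    by_contra hh
    have h1 : N * (P + 1) ≤ N * E := by
      apply mul_le_mul_of_nonneg_left <;> linarith
    have h2 : P * t 0 ≤ P * d := by apply mul_le_mul_of_nonneg_left <;> linarith
    have h3 : P * d ≤ P * N := by apply mul_le_mul_of_nonneg_left <;> linarith
    nlinarith
  -- the bound on `(r-1) d`
  have hdd : (r - 1) * d = 1 + P * (r - 2) := by
    have : r * ((r - 1) * d) = r * (1 + P * (r - 2)) := by
      rw [hN] at hNr; linear_combination hNr
    exact mul_left_cancel₀ (by linarith) this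
  obtain ⟨K, hK⟩ : ∃ K, K = (r - 1) * t 0 - r * (r - 2) * E := ⟨_, rfl⟩
  have hKt : (r - 1) * t m = P * K - E := by
    rw [hE, hK]; linear_combination (-E) * hNr
  have hb1 : (r - 1) * t m ≤ (r - 1) * (d - 1) := by
    apply mul_le_mul_of_nonneg_left <;> linarith
  have hb2 : (r - 1) * (-(d - 1)) ≤ (r - 1) * t m := by
    apply mul_le_mul_of_nonneg_left <;> linarith
  rcases hc with ⟨hp, c, hc⟩ | ⟨hp, c, hc⟩
  · have hpos : 0 < (r - 1) * t m := mul_pos (by linarith) hp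
    have hK0 : 0 < K := by
      by_contra hh
      have : P * K ≤ 0 := mul_nonpos_of_nonneg_of_nonpos (by linarith) (by linarith)
      linarith
    have hK1 : r - 1 ≤ K := Int.le_of_dvd hK0 ⟨t 0 - r * (r - 2) * c, by rw [hK, hc]; ring⟩
    have : P * (r - 1) ≤ P * K := by apply mul_le_mul_of_nonneg_left <;> linarith
    nlinarith
  · have hneg : (r - 1) * t m < 0 := mul_neg_of_pos_of_neg (by linarith) hp
    have hcE : E = (r - 1) * c + 1 := by linarith
    have hdK : (r - 1) ∣ K - 1 := ⟨t 0 - r * (r - 2) * c - (r - 1), by rw [hK, hcE]; ring⟩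
    have hK0 : K ≤ 0 := by
      by_contra hh
      have : P * 1 ≤ P * K := by apply mul_le_mul_of_nonneg_left <;> linarith
      linarith
    have hK1 : r - 1 ≤ 1 - K := Int.le_of_dvd (by linarith) (by
      obtain ⟨e, he⟩ := hdK; exact ⟨-e, by linear_combination -he⟩)
    have : P * K ≤ P * (-(r - 2)) := by apply mul_le_mul_of_nonneg_left <;> linarith
    nlinarith

lemma exists_small_rep (q d : ℕ) [NeZero q] (x y : ZMod q) (h : circDist q x y < d) :
    ∃ t : ℤ, |t| < d ∧ (t : ZMod q) = x - y := by
  unfold circDist at h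
  rcases min_lt_iff.1 h with h | h
  · exact ⟨(x - y).val, by rw [abs_of_nonneg (by positivity)]; exact_mod_cast h, by simp⟩
  · refine ⟨-((y - x).val : ℤ), by
      rw [abs_neg, abs_of_nonneg (by positivity)]; exact_mod_cast h, by simp⟩

lemma lower (r m : ℕ) (hr : 3 ≤ r) (x y : ZMod (seqA r (m + 1)))
    (hxy : x ≠ y) : ∃ i : Fin (m + 1), seqA r m ≤
      circDist (seqA r (m + 1)) (x * (r : ZMod _) ^ (i : ℕ)) (y * (r : ZMod _) ^ (i : ℕ)) := by
  have hNpos := seqA_pos r hr (m + 1)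
  have hdpos := seqA_pos r hr m
  have : NeZero (seqA r (m + 1)) := ⟨hNpos.ne'⟩
  by_contra hcon
  push Not at hcon
  have hN : (seqA r (m + 1) : ℤ) = r * seqA r m - 1 := by
    have h : (seqA r (m + 1) : ℤ) + 1 = r * seqA r m := by exact_mod_cast seqA_succ r hr m
    linarith
  have hNr := seqA_int r hr (m + 1)
  have hrep : ∀ i : ℕ, ∃ t : ℤ, i ≤ m → |t| < seqA r m ∧
      (t : ZMod (seqA r (m + 1))) = (x - y) * (r : ZMod _) ^ i := by
    intro i
    by_cases hi : i ≤ m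
    · obtain ⟨t, h1, h2⟩ := exists_small_rep _ _ _ _ (hcon ⟨i, by omega⟩)
      exact ⟨t, fun _ => ⟨h1, by rw [h2]; ring⟩⟩
    · exact ⟨0, fun h => absurd h hi⟩
  choose t ht using hrep
  have hdv : ∀ i < m, (seqA r (m + 1) : ℤ) ∣ r * t i - t (i + 1) := by
    intro i hi
    rw [← ZMod.intCast_zmod_eq_zero_iff_dvd]
    push_cast
    rw [(ht i (by omega)).2, (ht (i+1) (by omega)).2]; ring
  have h0 : t 0 ≠ 0 := by
    intro h
    have := (ht 0 (by omega)).2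
    rw [h] at this
    simp at this
    exact hxy (sub_eq_zero.1 this.symm)
  rcases lt_or_gt_of_ne h0 with h0 | h0
  · refine core r _ _ m (by exact_mod_cast hr) (by exact_mod_cast hdpos) hN hNr (fun i => - t i)
      (fun i hi => by rw [abs_neg]; exact (ht i hi).1) (fun i hi => ?_) (by simpa using h0)
    obtain ⟨e, he⟩ := hdv i hi; exact ⟨-e, by linear_combination -he⟩
  · exact core r _ _ m (by exact_mod_cast hr) (by exact_mod_cast hdpos) hN hNr t
      (fun i hi => (ht i hi).1) hdv h0

lemma card_window (q d : ℕ) [NeZero q] (hdq : d ≤ q) (a : ZMod q) :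
    (Finset.univ.filter fun c : ZMod q => (a - c).val < d).card = d := by
  have : (Finset.univ.filter fun c : ZMod q => (a - c).val < d) =
      (Finset.range d).image (fun j : ℕ => a - (j : ZMod q)) := by
    ext c
    simp only [Finset.mem_filter, Finset.mem_univ, true_and, Finset.mem_image, Finset.mem_range]
    constructor
    · intro h; exact ⟨_, h, by simp⟩
    · rintro ⟨j, hj, rfl⟩
      rw [sub_sub_cancel, ZMod.val_natCast_of_lt (by omega)]; exact hj
  rw [this, Finset.card_image_of_injOn, Finset.card_range]
  intro i hi j hj hij
  simp only [Finset.coe_range, Set.mem_Iio] at hi hj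
  have h : (i : ZMod q) = j := sub_right_injective hij
  have := congrArg ZMod.val h
  rwa [ZMod.val_natCast_of_lt (by omega), ZMod.val_natCast_of_lt (by omega)] at this

lemma circDist_lt (q d : ℕ) [NeZero q] (x y c : ZMod q) (hx : (x - c).val < d)
    (hy : (y - c).val < d) : circDist q x y < d := by
  unfold circDist
  rw [min_lt_iff]
  rcases le_total (y - c).val (x - c).val with h | h
  · left
    have := ZMod.val_sub h
    rw [sub_sub_sub_cancel_right] at this
    omega
  · right
    have := ZMod.val_sub h
    rw [sub_sub_sub_cancel_right] at this
    omega

lemma upper (r q d : ℕ) (hr : 3 ≤ r) (hd : 0 < d) (h2 : 2 * d ≤ q) (hq : q < r * d) (n : ℕ) :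
    ∀ S : Finset (Fin n → ZMod q),
      (∀ u ∈ S, ∀ v ∈ S, u ≠ v → ∃ i : Fin n, d ≤ circDist q (u i) (v i)) →
      S.card ≤ seqA r n := by
  have : NeZero q := ⟨by omega⟩
  induction n with
  | zero => 
    intro S _
    exact Finset.card_le_one_of_subsingleton S
  | succ n ih =>
    intro S hS
    have hc : ∀ c : ZMod q, (S.filter fun u => (u 0 - c).val < d).card ≤ seqA r n := by
      intro c
      have key : ∀ u ∈ S.filter (fun u => (u 0 - c).val < d),
          ∀ v ∈ S.filter (fun u => (u 0 - c).val < d), u ≠ v →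
          ∃ i : Fin n, d ≤ circDist q (Fin.tail u i) (Fin.tail v i) := by
        intro u hu v hv huv
        rw [Finset.mem_filter] at hu hv
        obtain ⟨i, hi⟩ := hS u hu.1 v hv.1 huv
        have := circDist_lt q d _ _ c hu.2 hv.2
        rcases Fin.eq_zero_or_eq_succ i with rfl | ⟨j, rfl⟩
        · omega
        · exact ⟨j, hi⟩
      rw [← Finset.card_image_of_injOn (f := fun u : Fin (n+1) → ZMod q => (Fin.tail u : Fin n → ZMod q))]
      · apply ih
        intro u hu v hv huv
        rw [Finset.mem_image] at hu hv
        obtain ⟨u, hu, rfl⟩ := hu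
        obtain ⟨v, hv, rfl⟩ := hv
        exact key u hu v hv (fun h => huv (by rw [h]))
      · intro u hu v hv huv
        by_contra hne
        obtain ⟨i, hi⟩ := key u hu v hv hne
        simp only at huv
        rw [huv] at hi
        simp [circDist] at hi
        omega
    have hsum : S.card * d ≤ q * seqA r n := by
      calc S.card * d = ∑ u ∈ S, (Finset.univ.filter fun c : ZMod q => (u 0 - c).val < d).card := by
            simp_rw [card_window q d (by omega)]
            simp
        _ = ∑ c : ZMod q, (S.filter fun u => (u 0 - c).val < d).card :=
            Finset.sum_card_bipartiteAbove_eq_sum_card_bipartiteBelow _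
        _ ≤ ∑ c : ZMod q, seqA r n := Finset.sum_le_sum fun c _ => hc c
        _ = q * seqA r n := by simp [ZMod.card]
    have hp := seqA_pos r hr n
    have h3 : S.card * d < (r * seqA r n) * d := by
      calc _ ≤ _ := hsum
        _ < (r * d) * seqA r n := Nat.mul_lt_mul_of_pos_right hq hp
        _ = _ := by ring
    have h4 := lt_of_mul_lt_mul_right h3 (Nat.zero_le d)
    have := seqA_succ r hr n
    omega

theorem max_alpha_circular_power (r n : ℕ) (hr : 3 ≤ r) (hn : 0 < n) :
    IsGreatest {k : ℕ | ∃ q d : ℕ, 0 < d ∧ 2 * d ≤ q ∧ q < r * d ∧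
        ∃ S : Finset (Fin n → ZMod q),
          (∀ u ∈ S, ∀ v ∈ S, u ≠ v → ∃ i : Fin n, d ≤ circDist q (u i) (v i)) ∧
          S.card = k}
      ((1 + r ^ n * (r - 2)) / (r - 1)) := by
  rw [seqA_eq r hr n]
  constructor
  · obtain ⟨m, rfl⟩ : ∃ m, n = m + 1 := ⟨n - 1, by omega⟩
    have hN := seqA_pos r hr (m + 1)
    have hd := seqA_pos r hr m
    have hs := seqA_succ r hr m
    have : NeZero (seqA r (m + 1)) := ⟨hN.ne'⟩
    have h3 : 3 * seqA r m ≤ r * seqA r m := Nat.mul_le_mul_right _ hr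
    refine ⟨seqA r (m + 1), seqA r m, hd, by omega, by omega,
      Finset.univ.image (fun x : ZMod (seqA r (m + 1)) =>
        fun i : Fin (m + 1) => x * (r : ZMod _) ^ (i : ℕ)), ?_, ?_⟩
    · intro u hu v hv huv
      rw [Finset.mem_image] at hu hv
      obtain ⟨x, -, rfl⟩ := hu
      obtain ⟨y, -, rfl⟩ := hv
      exact lower r m hr x y (fun h => huv (by rw [h]))
    · rw [Finset.card_image_of_injective, Finset.card_univ, ZMod.card]
      intro x y hxy
      simpa using congrFun hxy 0
  · rintro k ⟨q, d, hd, h2, hq, S, hS, rfl⟩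
    exact upper r q d hr hd h2 hq n S hS
end

section
/- Fix integers r ≥ 3 and n ≥ 1, and let q_n = (1 + rⁿ(r−2))/(r−1) and q_{n−1} = (1 + r^{n−1}(r−2))/(r−1). Then the set S := { t·(1, r, r², …, r^{n−1}) : t ∈ ℤ/q_nℤ } ⊆ (ℤ/q_nℤ)ⁿ (entries taken modulo q_n) is an independent set of cardinality q_n in C_{q_{n−1}, q_n}^{⊠n}; equivalently, for all distinct s, t ∈ ℤ/q_nℤ there exists i ∈ {0, …, n−1} such that δ(s·rⁱ, t·rⁱ) ≥ q_{n−1} modulo q_n. -/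
/-- One step of the orbit: from a positive small integer. -/
lemma orbit_step (r Q Q1 x y c : ℤ) (hr : 3 ≤ r) (hQ1 : 1 ≤ Q1) (hQ : Q = r * Q1 - 1)
    (hx0 : 0 < x) (hx : x ≤ Q1 - 1) (hy : y ≤ Q1 - 1) (hy' : -(Q1 - 1) ≤ y)
    (h : r * x - y = c * Q) : (c = 0 ∧ 0 < y) ∨ (c = 1 ∧ y < 0) := by
  have h1 : r * x ≤ r * (Q1 - 1) := mul_le_mul_of_nonneg_left hx (by linarith)
  have h2 : 0 < r * x := by positivity
  have h3 : 3 * Q1 ≤ r * Q1 := mul_le_mul_of_nonneg_right hr (by linarith)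
  have h1' : r * x ≤ Q + 1 - r := by rw [hQ]; linarith
  have hQpos : 0 < Q := by linarith
  have hc1 : c < 2 := by
    by_contra hc
    have : 2 * Q ≤ c * Q := mul_le_mul_of_nonneg_right (by linarith) hQpos.le
    linarith
  have hc2 : -1 < c := by
    by_contra hc
    have : c * Q ≤ (-1) * Q := mul_le_mul_of_nonneg_right (by linarith) hQpos.le
    linarith
  obtain rfl | rfl : c = 0 ∨ c = 1 := by omega
  · left; exact ⟨rfl, by linarith⟩
  · right; exact ⟨rfl, by linarith⟩

lemma orbit_core (r Q Q1 : ℤ) (N : ℕ) (hr : 3 ≤ r) (hQ1 : 1 ≤ Q1) (hQ : Q = r * Q1 - 1)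
    (hN : (r - 1) * Q1 = 1 + r ^ N * (r - 2))
    (x : ℕ → ℤ) (hx : ∀ i ≤ N, x i ≤ Q1 - 1 ∧ -(Q1 - 1) ≤ x i)
    (hs : ∀ i < N, ∃ c, r * x i - x (i + 1) = c * Q) (h0 : 0 < x 0) : False := by
  have inv : ∀ i ≤ N, ∃ C : ℤ, r ^ i * x 0 = x i + C * Q ∧ C ≤ r ^ i - 1 ∧
      ((0 < x i ∧ 0 ≤ C ∧ ∃ k, C = (r - 1) * k) ∨
        (x i < 0 ∧ 1 ≤ C ∧ ∃ k, C = (r - 1) * k + 1)) := by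
    intro i
    induction i with
    | zero => intro _; exact ⟨0, by simp, by simp, Or.inl ⟨h0, le_rfl, 0, by simp⟩⟩
    | succ i ih =>
      intro hi
      obtain ⟨C, hC, hCle, hcase⟩ := ih (by omega)
      obtain ⟨c, hc⟩ := hs i (by omega)
      have hxi := hx i (by omega)
      have hxi1 := hx (i + 1) hi
      have hm : r * C ≤ r * (r ^ i - 1) := mul_le_mul_of_nonneg_left hCle (by linarith)
      have hp : r ^ (i + 1) = r * r ^ i := pow_succ' r i
      refine ⟨r * C + c, ?_, ?_, ?_⟩
      · rw [hp]; linear_combination r * hC + hc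
      · have : c ≤ 1 := by
          rcases hcase with ⟨hp, _⟩ | ⟨hp, _⟩
          · rcases orbit_step r Q Q1 (x i) (x (i+1)) c hr hQ1 hQ hp hxi.1 hxi1.1 hxi1.2 hc with
              h | h <;> linarith [h.1]
          · rcases orbit_step r Q Q1 (-x i) (-x (i+1)) (-c) hr hQ1 hQ (by linarith)
              (by linarith) (by linarith) (by linarith) (by linarith) with
              h | h <;> linarith [h.1]
        rw [hp]; linarith
      · rcases hcase with ⟨hp, hC0, k, hk⟩ | ⟨hp, hC0, k, hk⟩
        · have hrC : 0 ≤ r * C := mul_nonneg (by linarith) hC0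
          rcases orbit_step r Q Q1 (x i) (x (i+1)) c hr hQ1 hQ hp hxi.1 hxi1.1 hxi1.2 hc with
              ⟨h, h'⟩ | ⟨h, h'⟩
          · left; exact ⟨h', by linarith, r * k, by rw [h, hk]; ring⟩
          · right; exact ⟨h', by linarith, r * k, by rw [h, hk]; ring⟩
        · have hrC : r * 1 ≤ r * C := mul_le_mul_of_nonneg_left hC0 (by linarith)
          rcases orbit_step r Q Q1 (-x i) (-x (i+1)) (-c) hr hQ1 hQ (by linarith)
              (by linarith) (by linarith) (by linarith) (by linarith) with
              ⟨h, h'⟩ | ⟨h, h'⟩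
          · right
            have : c = 0 := by linarith
            exact ⟨by linarith, by linarith, r * k + 1, by rw [this, hk]; ring⟩
          · left
            have : c = -1 := by linarith
            exact ⟨by linarith, by linarith, r * k + 1, by rw [this, hk]; ring⟩
  obtain ⟨C, hC, hCle, hcase⟩ := inv N le_rfl
  obtain ⟨hy, hy'⟩ := hx N le_rfl
  set P := r ^ N with hP
  have hPpos : 0 < P := by positivity
  set y := x N
  obtain ⟨m, hm⟩ : ∃ m, m = (r - 1) * x 0 - r * (r - 2) * C := ⟨_, rfl⟩
  have key : C + (r - 1) * y = P * m := by
    rw [hm]; linear_combination (1 - r) * hC - (r - 1) * C * hQ - r * C * hN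
  have hy1 : (r - 1) * y ≤ (r - 1) * (Q1 - 1) := mul_le_mul_of_nonneg_left hy (by linarith)
  have hy2 : (r - 1) * (-(Q1 - 1)) ≤ (r - 1) * y := mul_le_mul_of_nonneg_left hy' (by linarith)
  rcases hcase with ⟨hp, hC0, k, hk⟩ | ⟨hp, hC0, k, hk⟩
  · have h1 : 0 < (r - 1) * y := mul_pos (by linarith) hp
    have h2 : 0 < m := by
      by_contra h; nlinarith
    have h3 : m = (r - 1) * (x 0 - r * (r - 2) * k) := by rw [hm, hk]; ring
    have h4 : 0 < x 0 - r * (r - 2) * k := by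
      by_contra h; nlinarith
    have h5 : r - 1 ≤ m := by rw [h3]; nlinarith
    have h6 : P * (r - 1) ≤ P * m := mul_le_mul_of_nonneg_left h5 hPpos.le
    nlinarith
  · have h1 : (r - 1) * y < 0 := mul_neg_of_pos_of_neg (by linarith) hp
    have h2 : m < 1 := by
      by_contra h; nlinarith
    obtain ⟨j, hj⟩ : ∃ j, m = (r - 1) * j + 1 :=
      ⟨x 0 - r * (r - 2) * k - (r - 1), by rw [hm, hk]; ring⟩
    have h4 : j < 0 := by
      by_contra h; nlinarith
    have h5 : m ≤ -(r - 2) := by rw [hj]; nlinarith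
    have h6 : P * m ≤ P * (-(r - 2)) := mul_le_mul_of_nonneg_left h5 hPpos.le
    nlinarith

lemma qk_eq (r k : ℕ) (hr : 3 ≤ r) :
    ((r : ℤ) - 1) * (((1 + r ^ k * (r - 2)) / (r - 1) : ℕ) : ℤ) = 1 + (r : ℤ) ^ k * (r - 2) := by
  obtain ⟨s, rfl⟩ : ∃ s, r = s + 2 := ⟨r - 2, by omega⟩
  have hd : (s + 1) ∣ 1 + (s + 2) ^ k * s := by
    have h1 : (s + 2) ^ k ≡ 1 ^ k [MOD (s + 1)] := by
      apply Nat.ModEq.pow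
      have : s + 2 = (s + 1) + 1 := by ring
      rw [this]; simp [Nat.ModEq]
    have h2 := (Nat.ModEq.refl (n := s + 1) 1).add (h1.mul_right s)
    rw [one_pow, one_mul] at h2
    exact (Nat.modEq_zero_iff_dvd).1 (h2.trans ((Nat.modEq_zero_iff_dvd).2 ⟨1, by ring⟩))
  have e := Nat.mul_div_cancel' hd
  have e1 : s + 2 - 2 = s := by omega
  have e2 : s + 2 - 1 = s + 1 := by omega
  rw [e1, e2]
  have e' := congrArg (Nat.cast : ℕ → ℤ) e
  rw [Nat.cast_mul] at e'
  push_cast at e' ⊢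
  linear_combination e'

lemma small_rep (q d : ℕ) [NeZero q] (a : ZMod q) (h : min a.val (-a).val < d) :
    ∃ x : ℤ, (x : ZMod q) = a ∧ x ≤ (d : ℤ) - 1 ∧ -((d : ℤ) - 1) ≤ x := by
  rcases min_lt_iff.1 h with h | h
  · exact ⟨a.val, by simp, by omega, by omega⟩
  · exact ⟨-((-a).val : ℤ), by simp, by omega, by omega⟩

lemma main_aux (r n : ℕ) (hr : 3 ≤ r) (hn : 0 < n) (qn qn1 : ℕ)
    (hqn : qn = (1 + r ^ n * (r - 2)) / (r - 1))
    (hqn1 : qn1 = (1 + r ^ (n - 1) * (r - 2)) / (r - 1)) (s t : ZMod qn) (hst : s ≠ t) :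
    ∃ i : Fin n, qn1 ≤ circDist qn (s * (r : ZMod qn) ^ (i : ℕ))
          (t * (r : ZMod qn) ^ (i : ℕ)) := by
  have hA := qk_eq r n hr
  have hB := qk_eq r (n - 1) hr
  rw [← hqn] at hA
  rw [← hqn1] at hB
  have hr' : (3 : ℤ) ≤ r := by exact_mod_cast hr
  have hpow : (r : ℤ) ^ n = r * (r : ℤ) ^ (n - 1) := by
    rw [← pow_succ']; congr 1; omega
  have hQ : (qn : ℤ) = r * qn1 - 1 := by
    have h : ((r : ℤ) - 1) * qn = (r - 1) * (r * qn1 - 1) := by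
      rw [hpow] at hA
      linear_combination hA - r * hB
    exact mul_left_cancel₀ (by linarith) h
  have hQ1 : (1 : ℤ) ≤ qn1 := by
    have h1 : (0 : ℤ) < 1 + (r : ℤ) ^ (n - 1) * (r - 2) := by
      have : (0 : ℤ) ≤ (r : ℤ) ^ (n - 1) * (r - 2) := mul_nonneg (by positivity) (by linarith)
      linarith
    rw [← hB] at h1
    have := pos_of_mul_pos_right h1 (by linarith)
    linarith
  have hqpos : (0 : ℤ) < qn := by nlinarith
  have : NeZero qn := ⟨by rintro h; rw [h] at hqpos; simp at hqpos⟩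
  by_contra! hcon
  have hrep : ∀ i : ℕ, ∃ x : ℤ, i < n → ((x : ZMod qn) = (s - t) * (r : ZMod qn) ^ i ∧
      x ≤ (qn1 : ℤ) - 1 ∧ -((qn1 : ℤ) - 1) ≤ x) := by
    intro i
    by_cases hi : i < n
    · have h := hcon ⟨i, hi⟩
      have e1 : s * (r : ZMod qn) ^ i - t * (r : ZMod qn) ^ i = (s - t) * (r : ZMod qn) ^ i := by
        ring
      have e2 : t * (r : ZMod qn) ^ i - s * (r : ZMod qn) ^ i = -((s - t) * (r : ZMod qn) ^ i) := by
        ring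
      simp only [circDist, e1, e2] at h
      obtain ⟨x, hx⟩ := small_rep qn qn1 _ h
      exact ⟨x, fun _ => hx⟩
    · exact ⟨0, fun h => absurd h hi⟩
  choose x hx using hrep
  have hstep : ∀ i < n - 1, ∃ c, (r : ℤ) * x i - x (i + 1) = c * qn := by
    intro i hi
    have h1 := (hx i (by omega)).1
    have h2 := (hx (i + 1) (by omega)).1
    have : (((r : ℤ) * x i - x (i + 1) : ℤ) : ZMod qn) = 0 := by
      push_cast
      rw [h1, h2]; ring
    obtain ⟨c, hc⟩ := (ZMod.intCast_zmod_eq_zero_iff_dvd _ _).1 this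
    exact ⟨c, by rw [hc]; ring⟩
  have hx0 : x 0 ≠ 0 := by
    intro h
    have h1 := (hx 0 hn).1
    rw [h] at h1
    simp only [Int.cast_zero, pow_zero, mul_one] at h1
    exact hst (sub_eq_zero.1 h1.symm)
  rcases lt_or_gt_of_ne hx0 with h | h
  · refine orbit_core r qn qn1 (n - 1) hr' hQ1 hQ hB (fun i => - x i) ?_ ?_ (by simpa using h)
    · intro i hi
      have := (hx i (by omega)).2
      exact ⟨by linarith [this.2], by linarith [this.1]⟩
    · intro i hi
      obtain ⟨c, hc⟩ := hstep i hi
      exact ⟨-c, by linear_combination -hc⟩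
  · exact orbit_core r qn qn1 (n - 1) hr' hQ1 hQ hB x (fun i hi => (hx i (by omega)).2) hstep h

/-- Theorem: for integers `r ≥ 3`, `n ≥ 1` and `q_k := (1 + r^k(r-2))/(r-1)`,
the set `S = { t·(1, r, …, r^{n-1}) : t ∈ ℤ/q_nℤ }` is an independent set of
cardinality `q_n` in `C_{q_{n-1},q_n}^{⊠n}`; equivalently, for all distinct
`s, t ∈ ℤ/q_nℤ` there is a coordinate `i` with `δ(s·rⁱ, t·rⁱ) ≥ q_{n-1}`. -/
theorem explicit_independent_set (r n : ℕ) (hr : 3 ≤ r) (hn : 0 < n)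
    (qn qn1 : ℕ)
    (hqn : qn = (1 + r ^ n * (r - 2)) / (r - 1))
    (hqn1 : qn1 = (1 + r ^ (n - 1) * (r - 2)) / (r - 1)) :
    ({w : Fin n → ZMod qn |
        ∃ t : ZMod qn, w = fun i : Fin n => t * (r : ZMod qn) ^ (i : ℕ)} : Set _).ncard = qn
    ∧ (∀ u ∈ {w : Fin n → ZMod qn |
          ∃ t : ZMod qn, w = fun i : Fin n => t * (r : ZMod qn) ^ (i : ℕ)},
       ∀ v ∈ {w : Fin n → ZMod qn |
          ∃ t : ZMod qn, w = fun i : Fin n => t * (r : ZMod qn) ^ (i : ℕ)},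
        u ≠ v → ∃ i : Fin n, qn1 ≤ circDist qn (u i) (v i))
    ∧ (∀ s t : ZMod qn, s ≠ t →
        ∃ i : Fin n, qn1 ≤ circDist qn (s * (r : ZMod qn) ^ (i : ℕ))
          (t * (r : ZMod qn) ^ (i : ℕ))) := by
  refine ⟨?_, ?_, main_aux r n hr hn qn qn1 hqn hqn1⟩
  · have e : {w : Fin n → ZMod qn |
        ∃ t : ZMod qn, w = fun i : Fin n => t * (r : ZMod qn) ^ (i : ℕ)} =
        Set.range (fun t : ZMod qn => fun i : Fin n => t * (r : ZMod qn) ^ (i : ℕ)) := by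
      ext w
      simp only [Set.mem_setOf_eq, Set.mem_range]
      exact ⟨fun ⟨t, h⟩ => ⟨t, h.symm⟩, fun ⟨t, h⟩ => ⟨t, h.symm⟩⟩
    have hinj : Function.Injective
        (fun t : ZMod qn => fun i : Fin n => t * (r : ZMod qn) ^ (i : ℕ)) := by
      intro a b hab
      have := congrFun hab ⟨0, hn⟩
      simpa using this
    rw [e, ← Set.image_univ, Set.ncard_image_of_injective _ hinj, Set.ncard_univ, Nat.card_zmod]
  · rintro u ⟨s, rfl⟩ v ⟨t, rfl⟩ huv
    exact main_aux r n hr hn qn qn1 hqn hqn1 s t (fun h => huv (by rw [h]))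
end
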